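/- Let B₁, B₂ be open balls in ℝⁿ of radius r₁, r₂ respectively, and let K₁ ⊆ B₁ and K₂ ⊆ B₂ be compact. Then there exists C₀ > 0 as follows. Suppose T : C¹_c(B₁) → L²(B₂) is linear, has a formal adjoint T* : C¹_c(B₂) → L²(B₁), and A > 0 is such that: (a) if f ∈ C¹_c(B₁) then Tf = 0 almost everywhere on the complement of K₂, and Tf ≡ 0 whenever supp f is disjoint from K₁; (i)′ ‖Tω‖_{L^∞} ≤ A for every r-bump function ω with r ≤ r₁ supported in B₁, and ‖T*ω‖_{L^∞} ≤ A for every r-bump function ω with r ≤ r₂ supported in B₂; (ii) there is a kernel K(x,y), C¹ off the diagonal, such that for every F ∈ C¹_c(B₁) and every x outside supp F one has (TF)(x) = ∫ K(x,y)F(y) dy; (iii) |K(x,y)| ≤ A|x−y|^{−n} for all x ∈ B₂, y ∈ B₁ with x ≠ y, and |∂_{x_i}K(x,y)| ≤ A|x−y|^{−(n+1)} and |∂_{y_i}K(x,y)| ≤ A|x−y|^{−(n+1)} for every i and all such x ≠ y. Then T extends to a bounded operator from L²(B₁) to L²(B₂) with operator norm ‖T‖ ≤ C₀ A. -/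

import Mathlib

open MeasureTheory Metric

noncomputable section

/-- An `r`-bump function on `ℝⁿ`: a `C¹` function supported in some ball of radius `r`,
with `‖ω‖_∞ ≤ 1` and `‖∂_jω‖_∞ ≤ 1/r` for each partial derivative. -/
def IsBump (n : ℕ) (r : ℝ) (ω : EuclideanSpace ℝ (Fin n) → ℂ) : Prop :=
  ContDiff ℝ 1 ω ∧
  (∃ c : EuclideanSpace ℝ (Fin n), tsupport ω ⊆ closedBall c r) ∧
  (∀ x, ‖ω x‖ ≤ 1) ∧
  (∀ i : Fin n, ∀ x, ‖fderiv ℝ ω x (EuclideanSpace.single i 1)‖ ≤ 1 / r)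

/-!
Cutting `T` off on both sides by bumps equal to `1` near `K₁` and `K₂` changes nothing on test
functions but makes the bounds global: since the product of two bump functions is a bump function of
the smaller radius, the form `B f g = ∫ (T f) g` satisfies `|B f g| ≤ A' ‖g‖₁` for every bump
function `f`, symmetrically in `g`, and has a kernel with Calderón–Zygmund estimates on all of `ℝⁿ`.

Tested on a smooth partition of unity of mesh `δ`, subordinate to a dyadic grid, `B` becomes a
finite matrix with the size and smoothness of a discrete Calderón–Zygmund kernel. The tiles in a
dyadic cube add up to a bump, so the row and column sums of the matrix, and its sums over dyadic
cubes, are bounded: these are `T 1`, `T* 1 ∈ L^∞` and the weak boundedness property. It remains to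
bound such matrices on `ℓ²` independently of `δ`, because the error of discretization tends to `0`
with `δ`.

For this, telescope the matrix over the averages on dyadic cubes of increasing size. The terms
pairing two martingale differences of the same level are controlled by cancellation and weak
boundedness. The terms pairing a difference with an average split into a paraproduct with symbol
`T 1` or `T* 1`, which is bounded as the symbol is, and a commutator, which is controlled by a
square function of the averages.
-/

namespace LocalTOne

/-! ### Averages, martingale differences and paraproducts -/

section FiberAverage

variable {X Y Z E F : Type*} [Fintype X] [DecidableEq Y] [DecidableEq Z]

/-- The average of `f` over the fibre of `p` through `x`: the conditional expectation of `f`,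
for the uniform measure on `X`, with respect to the partition into fibres of `p`. -/
def fiberAvg [AddCommGroup E] [Module ℝ E] (p : X → Y) (f : X → E) (x : X) : E :=
  (Finset.card {y | p y = p x} : ℝ)⁻¹ • ∑ y with p y = p x, f y

section Module

variable [AddCommGroup E] [Module ℝ E] [AddCommGroup F] [Module ℝ F]

lemma card_fiber_pos (p : X → Y) (x : X) : (0 : ℝ) < Finset.card {y | p y = p x} :=
  Nat.cast_pos.mpr (Finset.card_pos.mpr ⟨x, by simp⟩)

lemma fiberAvg_factorsThrough (p : X → Y) (f : X → E) : (fiberAvg p f).FactorsThrough p := by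
  intro x y h
  simp only [fiberAvg, h]

lemma fiberAvg_sub (p : X → Y) (f g : X → E) (x : X) :
    fiberAvg p (fun y => f y - g y) x = fiberAvg p f x - fiberAvg p g x := by
  simp only [fiberAvg, Finset.sum_sub_distrib, smul_sub]

lemma fiberAvg_apply_of_factorsThrough (p : X → Y) {L : X → E →ₗ[ℝ] F} (hL : L.FactorsThrough p)
    (f : X → E) (x : X) : fiberAvg p (fun y => L y (f y)) x = L x (fiberAvg p f x) := by
  simp only [fiberAvg, map_smul, map_sum]
  congr 1
  refine Finset.sum_congr rfl fun y hy => ?_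
  rw [hL (Finset.mem_filter.mp hy).2]

lemma fiberAvg_of_factorsThrough {p : X → Y} {c : X → E} (hc : c.FactorsThrough p) :
    fiberAvg p c = c := by
  funext x
  have hsum : ∑ y with p y = p x, c y = ∑ y with p y = p x, c x :=
    Finset.sum_congr rfl fun y hy => hc (Finset.mem_filter.mp hy).2
  rw [fiberAvg, hsum, Finset.sum_const, ← Nat.cast_smul_eq_nsmul ℝ, smul_smul,
    inv_mul_cancel₀ (card_fiber_pos p x).ne', one_smul]

lemma sum_fiberAvg (p : X → Y) (f : X → E) : ∑ x, fiberAvg p f x = ∑ x, f x := by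
  have expand : ∀ x, fiberAvg p f x =
      ∑ y, if p x = p y then (Finset.card {z | p z = p y} : ℝ)⁻¹ • f y else 0 := by
    intro x
    rw [fiberAvg, Finset.smul_sum, ← Finset.sum_filter]
    refine Finset.sum_congr (Finset.filter_congr fun y _ => eq_comm) fun y hy => ?_
    rw [← (Finset.mem_filter.mp hy).2]
  simp_rw [expand]
  rw [Finset.sum_comm]
  refine Finset.sum_congr rfl fun y _ => ?_
  rw [← Finset.sum_filter, Finset.sum_const, ← Nat.cast_smul_eq_nsmul ℝ, smul_smul,
    mul_inv_cancel₀ (card_fiber_pos p y).ne', one_smul]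

lemma sum_apply_fiberAvg (p : X → Y) {L : X → E →ₗ[ℝ] F} (hL : L.FactorsThrough p)
    (f : X → E) : ∑ x, L x (fiberAvg p f x) = ∑ x, L x (f x) := by
  simp_rw [← fiberAvg_apply_of_factorsThrough p hL]
  exact sum_fiberAvg p _

lemma fiberAvg_fiberAvg_of_le {p : X → Y} {q : X → Z} (hq : q.FactorsThrough p) (f : X → E) :
    fiberAvg q (fiberAvg p f) = fiberAvg q f := by
  funext x
  have h := sum_apply_fiberAvg p (L := fun y => if q y = q x then LinearMap.id else 0)
    (fun a b hab => by simp only [hq hab]) f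
  simp only [fiberAvg, Finset.sum_filter] at h ⊢
  congr 1
  convert h using 2 <;> split_ifs <;> rfl

end Module

lemma norm_fiberAvg_le [NormedAddCommGroup E] [NormedSpace ℝ E] (p : X → Y) {f : X → E} {B : ℝ}
    (hf : ∀ x, ‖f x‖ ≤ B) (x : X) : ‖fiberAvg p f x‖ ≤ B := by
  rw [fiberAvg, norm_smul, norm_inv, Real.norm_natCast, inv_mul_le_iff₀ (card_fiber_pos p x),
    ← nsmul_eq_mul]
  exact norm_sum_le_of_le _ (fun y _ => hf y) |>.trans_eq (Finset.sum_const B)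

lemma sum_mul_sq_norm_sub_fiberAvg [NormedAddCommGroup E] [InnerProductSpace ℝ E]
    (p : X → Y) (h : X → E) {w : X → ℝ} (hw : w.FactorsThrough p) :
    ∑ x, w x * ‖h x - fiberAvg p h x‖ ^ 2 =
      ∑ x, w x * ‖h x‖ ^ 2 - ∑ x, w x * ‖fiberAvg p h x‖ ^ 2 := by
  have orthogonality := sum_apply_fiberAvg p
    (L := fun x => (w x • innerₗ E (fiberAvg p h x) : E →ₗ[ℝ] ℝ))
    (fun a b hab => by simp only [hw hab, fiberAvg_factorsThrough p h hab]) h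
  simp only [LinearMap.smul_apply, innerₗ_apply_apply, real_inner_self_eq_norm_sq,
    smul_eq_mul] at orthogonality
  have expand : ∀ x, w x * ‖h x - fiberAvg p h x‖ ^ 2 = w x * ‖h x‖ ^ 2
      + w x * ‖fiberAvg p h x‖ ^ 2 - 2 * (w x * inner ℝ (fiberAvg p h x) (h x)) := by
    intro x
    rw [norm_sub_sq_real, real_inner_comm]
    ring
  simp_rw [expand]
  rw [Finset.sum_sub_distrib, Finset.sum_add_distrib, ← Finset.mul_sum, ← orthogonality]
  ring

end FiberAverage

/-- The fibres of `p (j + 1)` are unions of fibres of `p j`, so that `j ↦ fiberAvg (p j)` is a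
reverse martingale. -/
def IsCoarsening {X Y : Type*} (p : ℕ → X → Y) : Prop := ∀ j, (p (j + 1)).FactorsThrough (p j)

section MartingaleDifference

variable {X Y E F : Type*} [Fintype X] [DecidableEq Y]

/-- The martingale difference between the levels `m` and `m + 1` of the family `p`. -/
def martDiff [AddCommGroup E] [Module ℝ E] (p : ℕ → X → Y) (m : ℕ) (f : X → E) (x : X) : E :=
  fiberAvg (p m) f x - fiberAvg (p (m + 1)) f x

section Module

variable [AddCommGroup E] [Module ℝ E] [AddCommGroup F] [Module ℝ F]

lemma martDiff_factorsThrough {p : ℕ → X → Y} (hp : IsCoarsening p) (m : ℕ) (f : X → E) :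
    (martDiff p m f).FactorsThrough (p m) := by
  intro x y h
  rw [martDiff, martDiff, fiberAvg_factorsThrough (p m) f h,
    fiberAvg_factorsThrough (p (m + 1)) f (hp m h)]

lemma fiberAvg_martDiff {p : ℕ → X → Y} (hp : IsCoarsening p) (m : ℕ) (f : X → E) (x : X) :
    fiberAvg (p (m + 1)) (martDiff p m f) x = 0 := by
  unfold martDiff
  rw [fiberAvg_sub, fiberAvg_fiberAvg_of_le (hp m),
    fiberAvg_of_factorsThrough (fiberAvg_factorsThrough _ _), sub_self]

lemma sum_apply_martDiff {p : ℕ → X → Y} (hp : IsCoarsening p) (m : ℕ) {L : X → E →ₗ[ℝ] F}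
    (hL : L.FactorsThrough (p (m + 1))) (f : X → E) : ∑ x, L x (martDiff p m f x) = 0 := by
  rw [← sum_apply_fiberAvg (p (m + 1)) hL]
  simp [fiberAvg_martDiff hp]

end Module

variable [NormedAddCommGroup E] [InnerProductSpace ℝ E] [NormedAddCommGroup F]
  [InnerProductSpace ℝ F]

lemma sum_mul_sq_norm_martDiff {p : ℕ → X → Y} (hp : IsCoarsening p) (m : ℕ) (f : X → E)
    {w : X → ℝ} (hw : w.FactorsThrough (p (m + 1))) :
    ∑ x, w x * ‖martDiff p m f x‖ ^ 2 =
      ∑ x, w x * ‖fiberAvg (p m) f x‖ ^ 2 - ∑ x, w x * ‖fiberAvg (p (m + 1)) f x‖ ^ 2 := by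
  have h := sum_mul_sq_norm_sub_fiberAvg (p (m + 1)) (fiberAvg (p m) f) hw
  rwa [fiberAvg_fiberAvg_of_le (hp m)] at h

lemma sum_sq_norm_fiberAvg_le (p : X → Y) (f : X → E) :
    ∑ x, ‖fiberAvg p f x‖ ^ 2 ≤ ∑ x, ‖f x‖ ^ 2 := by
  have h := sum_mul_sq_norm_sub_fiberAvg p f (w := fun _ => 1) (fun _ _ _ => rfl)
  have : 0 ≤ ∑ x, 1 * ‖f x - fiberAvg p f x‖ ^ 2 := by positivity
  simp only [one_mul] at h this
  linarith

lemma sum_sum_sq_norm_martDiff_le {p : ℕ → X → Y} (hp : IsCoarsening p) (N : ℕ) (f : X → E) :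
    ∑ m ∈ Finset.range N, ∑ x, ‖martDiff p m f x‖ ^ 2 ≤ ∑ x, ‖f x‖ ^ 2 := by
  have level : ∀ m, ∑ x, ‖martDiff p m f x‖ ^ 2 =
      ∑ x, ‖fiberAvg (p m) f x‖ ^ 2 - ∑ x, ‖fiberAvg (p (m + 1)) f x‖ ^ 2 := fun m => by
    simpa using sum_mul_sq_norm_martDiff hp m f (w := fun _ => 1) (fun _ _ _ => rfl)
  simp_rw [level]
  rw [Finset.sum_range_sub' (fun m => ∑ x, ‖fiberAvg (p m) f x‖ ^ 2)]
  have : 0 ≤ ∑ x, ‖fiberAvg (p N) f x‖ ^ 2 := by positivity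
  linarith [sum_sq_norm_fiberAvg_le (p 0) f]

lemma neg_sq_sub_mul_sq_sub_le {a a' d c c' e B : ℝ} (ha : 0 ≤ a) (ha' : 0 ≤ a')
    (had : |a - a'| ≤ d) (hc : 0 ≤ c) (hc' : 0 ≤ c') (hcB : c ≤ B) (hcB' : c' ≤ B)
    (hce : |c - c'| ≤ e) (he : e ≤ 2 * B) :
    -((a ^ 2 - a' ^ 2) * (c ^ 2 - c' ^ 2)) ≤
      12 * B ^ 2 * d ^ 2 + 1 / 2 * (a' ^ 2 * e ^ 2) := by
  have d_nonneg : 0 ≤ d := (abs_nonneg _).trans had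
  have e_nonneg : 0 ≤ e := (abs_nonneg _).trans hce
  have B_nonneg : 0 ≤ B := hc.trans hcB
  have factor_a : |a ^ 2 - a' ^ 2| ≤ d * (d + 2 * a') := by
    rw [sq_sub_sq, mul_comm, abs_mul, abs_of_nonneg (add_nonneg ha ha')]
    exact mul_le_mul had (by linarith [(abs_le.mp had).2]) (add_nonneg ha ha') d_nonneg
  have factor_c : |c ^ 2 - c' ^ 2| ≤ e * (2 * B) := by
    rw [sq_sub_sq, mul_comm, abs_mul, abs_of_nonneg (add_nonneg hc hc')]
    exact mul_le_mul hce (by linarith) (add_nonneg hc hc') e_nonneg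
  have product : |(a ^ 2 - a' ^ 2) * (c ^ 2 - c' ^ 2)| ≤ d * (d + 2 * a') * (e * (2 * B)) := by
    rw [abs_mul]
    gcongr
  have absorb : d ^ 2 * (2 * B) * e ≤ d ^ 2 * (2 * B) * (2 * B) := by gcongr
  nlinarith [sq_nonneg (a' * e - 4 * B * d),
    neg_le_abs ((a ^ 2 - a' ^ 2) * (c ^ 2 - c' ^ 2))]

-- The product rule for `|f|² |b|²` along the martingale; the cross term is split by Cauchy–Schwarz
-- so that half of the left-hand side can be absorbed.
lemma sum_paraproduct_level_le {p : ℕ → X → Y} (hp : IsCoarsening p) (m : ℕ) (f : X → E)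
    {b : X → F} {B : ℝ} (hb : ∀ x, ‖b x‖ ≤ B) :
    ∑ x, ‖fiberAvg (p (m + 1)) f x‖ ^ 2 * ‖martDiff p m b x‖ ^ 2 ≤
      (∑ x, ‖fiberAvg (p m) f x‖ ^ 2 * ‖fiberAvg (p m) b x‖ ^ 2
        - ∑ x, ‖fiberAvg (p (m + 1)) f x‖ ^ 2 * ‖fiberAvg (p (m + 1)) b x‖ ^ 2)
      + (12 * B ^ 2 * ∑ x, ‖martDiff p m f x‖ ^ 2
        + 1 / 2 * ∑ x, ‖fiberAvg (p (m + 1)) f x‖ ^ 2 * ‖martDiff p m b x‖ ^ 2) := by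
  have weight (g : X → E) :
      (fun x => ‖fiberAvg (p (m + 1)) g x‖ ^ 2).FactorsThrough (p (m + 1)) :=
    (fiberAvg_factorsThrough _ g).comp_left (‖·‖ ^ 2)
  have diff_b := sum_mul_sq_norm_martDiff hp m b (weight f)
  have diff_f := sum_mul_sq_norm_martDiff hp m f
    (w := fun x => ‖fiberAvg (p (m + 1)) b x‖ ^ 2)
    ((fiberAvg_factorsThrough _ b).comp_left (‖·‖ ^ 2))
  have diff_f_nonneg : 0 ≤ ∑ x, ‖fiberAvg (p (m + 1)) b x‖ ^ 2 * ‖martDiff p m f x‖ ^ 2 := by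
    positivity
  have cross : ∑ x, -((‖fiberAvg (p m) f x‖ ^ 2 - ‖fiberAvg (p (m + 1)) f x‖ ^ 2) *
        (‖fiberAvg (p m) b x‖ ^ 2 - ‖fiberAvg (p (m + 1)) b x‖ ^ 2)) ≤
      ∑ x, (12 * B ^ 2 * ‖martDiff p m f x‖ ^ 2
        + 1 / 2 * (‖fiberAvg (p (m + 1)) f x‖ ^ 2 * ‖martDiff p m b x‖ ^ 2)) := by
    refine Finset.sum_le_sum fun x _ => ?_
    refine neg_sq_sub_mul_sq_sub_le (norm_nonneg _) (norm_nonneg _) (abs_norm_sub_norm_le _ _)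
      (norm_nonneg _) (norm_nonneg _) (norm_fiberAvg_le _ hb _) (norm_fiberAvg_le _ hb _)
      (abs_norm_sub_norm_le _ _) ((norm_sub_le _ _).trans ?_)
    linarith [norm_fiberAvg_le (p m) hb x, norm_fiberAvg_le (p (m + 1)) hb x]
  have expand : ∑ x, -((‖fiberAvg (p m) f x‖ ^ 2 - ‖fiberAvg (p (m + 1)) f x‖ ^ 2) *
        (‖fiberAvg (p m) b x‖ ^ 2 - ‖fiberAvg (p (m + 1)) b x‖ ^ 2)) =
      - ∑ x, ‖fiberAvg (p m) f x‖ ^ 2 * ‖fiberAvg (p m) b x‖ ^ 2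
      + ∑ x, ‖fiberAvg (p (m + 1)) b x‖ ^ 2 * ‖fiberAvg (p m) f x‖ ^ 2
      + ∑ x, ‖fiberAvg (p (m + 1)) f x‖ ^ 2 * ‖fiberAvg (p m) b x‖ ^ 2
      - ∑ x, ‖fiberAvg (p (m + 1)) b x‖ ^ 2 * ‖fiberAvg (p (m + 1)) f x‖ ^ 2 := by
    rw [← Finset.sum_neg_distrib, ← Finset.sum_add_distrib, ← Finset.sum_add_distrib,
      ← Finset.sum_sub_distrib]
    exact Finset.sum_congr rfl fun x _ => by ring
  rw [Finset.sum_add_distrib, ← Finset.mul_sum, ← Finset.mul_sum] at cross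
  linarith

theorem sum_paraproduct_le {p : ℕ → X → Y} (hp : IsCoarsening p) (N : ℕ) (f : X → E)
    {b : X → F} {B : ℝ} (hb : ∀ x, ‖b x‖ ≤ B) :
    ∑ m ∈ Finset.range N, ∑ x, ‖fiberAvg (p (m + 1)) f x‖ ^ 2 * ‖martDiff p m b x‖ ^ 2
      ≤ 26 * B ^ 2 * ∑ x, ‖f x‖ ^ 2 := by
  have total := Finset.sum_le_sum fun m (_ : m ∈ Finset.range N) =>
    sum_paraproduct_level_le hp m f hb
  rw [Finset.sum_add_distrib, Finset.sum_add_distrib, ← Finset.mul_sum, ← Finset.mul_sum,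
    Finset.sum_range_sub' (fun m => ∑ x, ‖fiberAvg (p m) f x‖ ^ 2 * ‖fiberAvg (p m) b x‖ ^ 2)]
    at total
  have last_nonneg : 0 ≤ ∑ x, ‖fiberAvg (p N) f x‖ ^ 2 * ‖fiberAvg (p N) b x‖ ^ 2 := by
    positivity
  have first : ∑ x, ‖fiberAvg (p 0) f x‖ ^ 2 * ‖fiberAvg (p 0) b x‖ ^ 2
      ≤ B ^ 2 * ∑ x, ‖f x‖ ^ 2 := calc
    _ ≤ ∑ x, ‖fiberAvg (p 0) f x‖ ^ 2 * B ^ 2 := by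
      gcongr with x
      exact norm_fiberAvg_le (p 0) hb x
    _ = B ^ 2 * ∑ x, ‖fiberAvg (p 0) f x‖ ^ 2 := by rw [← Finset.sum_mul, mul_comm]
    _ ≤ B ^ 2 * ∑ x, ‖f x‖ ^ 2 := by
      exact mul_le_mul_of_nonneg_left (sum_sq_norm_fiberAvg_le (p 0) f) (sq_nonneg B)
  have differences : 12 * B ^ 2 * ∑ m ∈ Finset.range N, ∑ x, ‖martDiff p m f x‖ ^ 2
      ≤ 12 * B ^ 2 * ∑ x, ‖f x‖ ^ 2 := by
    gcongr
    exact sum_sum_sq_norm_martDiff_le hp N f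
  linarith

end MartingaleDifference

/-! ### The dyadic grid -/

section FiniteSums

lemma sum_filter_le_sum_sum_filter {ι κ : Type*} [Fintype ι] {s : Finset κ} {P : ι → Prop}
    {Q : κ → ι → Prop} [DecidablePred P] [∀ k, DecidablePred (Q k)] {g : ι → ℝ}
    (hg : ∀ a, 0 ≤ g a) (hPQ : ∀ a, P a → ∃ k ∈ s, Q k a) :
    ∑ a with P a, g a ≤ ∑ k ∈ s, ∑ a with Q k a, g a := by
  simp only [Finset.sum_filter]
  rw [Finset.sum_comm]
  refine Finset.sum_le_sum fun a _ => ?_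
  have hnonneg : ∀ k ∈ s, 0 ≤ if Q k a then g a else 0 := fun k _ => by
    split_ifs
    exacts [hg a, le_rfl]
  split_ifs with ha
  · obtain ⟨k, hk, hka⟩ := hPQ a ha
    exact (if_pos hka).ge.trans (Finset.single_le_sum hnonneg hk)
  · exact Finset.sum_nonneg hnonneg

lemma seven_fifths_pow_le_sqrt_two_pow (l : ℕ) : (7 / 5 : ℝ) ^ l ≤ √(2 ^ l) := by
  refine Real.le_sqrt_of_sq_le ?_
  rw [← pow_mul, mul_comm, pow_mul]
  gcongr
  norm_num

lemma sum_range_one_div_sqrt_two_pow_le (m : ℕ) :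
    ∑ l ∈ Finset.range m, 1 / √((2 : ℝ) ^ l) ≤ 4 := by
  have hterm : ∀ l ∈ Finset.range m, 1 / √((2 : ℝ) ^ l) ≤ (5 / 7) ^ l := fun l _ => by
    rw [one_div_le (by positivity) (by positivity), ← one_div_pow]
    exact (by norm_num : (1 / (5 / 7 : ℝ)) = 7 / 5) ▸ seven_fifths_pow_le_sqrt_two_pow l
  refine (Finset.sum_le_sum hterm).trans ?_
  rw [Finset.range_eq_Ico]
  exact (geom_sum_Ico_le_of_lt_one (by norm_num) (by norm_num)).trans (by norm_num)

lemma sum_range_one_div_sqrt_succ_le (m : ℕ) :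
    ∑ e ∈ Finset.range m, 1 / √((e : ℝ) + 1) ≤ 2 * √(m : ℝ) := by
  induction m with
  | zero => simp
  | succ m ih =>
    have hsq : √((m : ℝ) + 1) ^ 2 = m + 1 := Real.sq_sqrt (by positivity)
    have hsq' : √(m : ℝ) ^ 2 = m := Real.sq_sqrt (by positivity)
    have hstep : 1 / √((m : ℝ) + 1) ≤ 2 * √((m : ℝ) + 1) - 2 * √(m : ℝ) := by
      rw [div_le_iff₀ (by positivity)]
      nlinarith only [hsq, hsq', sq_nonneg (√((m : ℝ) + 1) - √(m : ℝ))]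
    rw [Finset.sum_range_succ, Nat.cast_succ]
    linarith only [ih, hstep]

end FiniteSums

/-- The discrete box of side `2 ^ N` in `ℤⁿ`, on which the operator is discretised. -/
abbrev Grid (n N : ℕ) : Type := Fin n → Fin (2 ^ N)

variable {n N : ℕ}

/-- The label of the dyadic cube of side `2 ^ j` containing `x`; cubes are encoded as the fibres
of this map. -/
def cube (j : ℕ) (x : Grid n N) : Fin n → ℕ := fun i => (x i : ℕ) / 2 ^ j

/-- The sup-norm distance on the grid. -/
def gridDist (x y : Grid n N) : ℝ := dist (fun i => (x i : ℝ)) (fun i => (y i : ℝ))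

/-- The kernel `|x - y|^(-n - 1/2)`, which is summable away from the diagonal; it vanishes on the
diagonal because `1 / 0 = 0`. -/
def decay (x y : Grid n N) : ℝ := 1 / (gridDist x y ^ n * √(gridDist x y))

section GridDist

lemma gridDist_nonneg (x y : Grid n N) : 0 ≤ gridDist x y := dist_nonneg

lemma gridDist_comm (x y : Grid n N) : gridDist x y = gridDist y x := dist_comm _ _

lemma gridDist_triangle (x y z : Grid n N) : gridDist x z ≤ gridDist x y + gridDist y z :=
  dist_triangle _ _ _

lemma abs_sub_le_gridDist (x y : Grid n N) (i : Fin n) : |(x i : ℝ) - (y i : ℝ)| ≤ gridDist x y :=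
  dist_le_pi_dist (fun i => (x i : ℝ)) (fun i => (y i : ℝ)) i

lemma gridDist_le {x y : Grid n N} {r : ℝ} (hr : 0 ≤ r)
    (h : ∀ i, |(x i : ℝ) - (y i : ℝ)| ≤ r) : gridDist x y ≤ r :=
  (dist_pi_le_iff hr).mpr h

lemma one_le_gridDist {x y : Grid n N} (h : x ≠ y) : 1 ≤ gridDist x y := by
  obtain ⟨i, hi⟩ := Function.ne_iff.mp h
  have hne : ((x i : ℕ) : ℤ) - (y i : ℕ) ≠ 0 := by omega
  refine le_trans ?_ (abs_sub_le_gridDist x y i)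
  exact_mod_cast Int.one_le_abs hne

lemma gridDist_lt (x y : Grid n N) : gridDist x y < 2 ^ N := by
  refine (dist_pi_lt_iff (by positivity)).mpr fun i => ?_
  have hx : (x i : ℝ) < 2 ^ N := by exact_mod_cast (x i).2
  have hy : (y i : ℝ) < 2 ^ N := by exact_mod_cast (y i).2
  exact Real.dist_eq (x i : ℝ) _ ▸ abs_sub_lt_of_nonneg_of_lt (by positivity) hx (by positivity) hy

lemma decay_nonneg (x y : Grid n N) : 0 ≤ decay x y := by
  unfold decay gridDist
  positivity

lemma decay_comm (x y : Grid n N) : decay x y = decay y x := by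
  rw [decay, decay, gridDist_comm]

lemma card_gridDist_le (x : Grid n N) {r : ℝ} (hr : 0 ≤ r) :
    (Finset.card {y | gridDist x y ≤ r} : ℝ) ≤ (2 * r + 1) ^ n := by
  let box : Finset (Fin n → ℤ) :=
    Fintype.piFinset fun i => Finset.Icc ((x i : ℕ) - ⌊r⌋) ((x i : ℕ) + ⌊r⌋)
  have hcard : Finset.card {y | gridDist x y ≤ r} ≤ box.card := by
    refine Finset.card_le_card_of_injOn (fun y i => ((y i : ℕ) : ℤ)) (fun y hy => ?_) ?_
    · simp only [Finset.coe_filter, Finset.mem_univ, true_and, Set.mem_ofPred_eq] at hy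
      refine Finset.mem_coe.mpr (Fintype.mem_piFinset.mpr fun i => Finset.mem_Icc.mpr ?_)
      have habs : |((x i : ℕ) : ℤ) - (y i : ℕ)| ≤ ⌊r⌋ := by
        rw [Int.le_floor]
        exact_mod_cast (abs_sub_le_gridDist x y i).trans hy
      rw [abs_le] at habs
      constructor <;> linarith only [habs.1, habs.2]
    · exact fun y _ z _ hyz => funext fun i => Fin.ext (Int.ofNat_inj.mp (congrFun hyz i))
  have hside : ∀ i, ((Finset.Icc (((x i : ℕ) : ℤ) - ⌊r⌋) ((x i : ℕ) + ⌊r⌋)).card : ℝ) ≤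
      2 * r + 1 := fun i => by
    have hfloor : 0 ≤ ⌊r⌋ := Int.floor_nonneg.mpr hr
    have hlen : ((Finset.Icc (((x i : ℕ) : ℤ) - ⌊r⌋) ((x i : ℕ) + ⌊r⌋)).card : ℤ) =
        2 * ⌊r⌋ + 1 := by
      rw [Int.card_Icc]
      omega
    have hlen' : ((Finset.Icc (((x i : ℕ) : ℤ) - ⌊r⌋) ((x i : ℕ) + ⌊r⌋)).card : ℝ) =
        2 * ⌊r⌋ + 1 := by exact_mod_cast hlen
    linarith only [hlen', Int.floor_le r]
  calc (Finset.card {y | gridDist x y ≤ r} : ℝ) ≤ box.card := by exact_mod_cast hcard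
    _ ≤ ∏ _i : Fin n, (2 * r + 1) := by
      rw [Fintype.card_piFinset, Nat.cast_prod]
      exact Finset.prod_le_prod (fun _ _ => by positivity) fun i _ => hside i
    _ = (2 * r + 1) ^ n := by simp

lemma sum_decay_annulus_le (x : Grid n N) {s : ℝ} (hs : 1 ≤ s) :
    ∑ y with s ≤ gridDist x y ∧ gridDist x y ≤ 2 * s, decay x y ≤ 5 ^ n * (1 / √s) := by
  have hterm : ∀ y ∈ Finset.univ.filter fun y => s ≤ gridDist x y ∧ gridDist x y ≤ 2 * s,
      decay x y ≤ 1 / (s ^ n * √s) := fun y hy => by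
    have hsy := (Finset.mem_filter.mp hy).2.1
    have hpos : 0 ≤ gridDist x y := gridDist_nonneg x y
    unfold decay
    gcongr
  have hcard : ((Finset.univ.filter fun y =>
      s ≤ gridDist x y ∧ gridDist x y ≤ 2 * s).card : ℝ) ≤ (5 * s) ^ n := by
    refine (Nat.cast_le.mpr (Finset.card_le_card (Finset.monotone_filter_right _
      fun y _ hy => hy.2))).trans ((card_gridDist_le x (by positivity)).trans ?_)
    gcongr
    linarith only [hs]
  calc ∑ y with s ≤ gridDist x y ∧ gridDist x y ≤ 2 * s, decay x y
      ≤ (5 * s) ^ n * (1 / (s ^ n * √s)) := by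
        refine (Finset.sum_le_card_nsmul _ _ _ hterm).trans ?_
        rw [nsmul_eq_mul]
        gcongr
    _ = 5 ^ n * (1 / √s) := by
        rw [mul_pow]
        field_simp

lemma sum_decay_far_le (x : Grid n N) {t : ℝ} (ht : 1 ≤ t) :
    ∑ y with t ≤ gridDist x y, decay x y ≤ 4 * 5 ^ n * (1 / √t) := by
  have ht₀ : 0 < t := by positivity
  have hannuli : ∀ y, t ≤ gridDist x y → ∃ l ∈ Finset.range N,
      2 ^ l * t ≤ gridDist x y ∧ gridDist x y ≤ 2 * (2 ^ l * t) := by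
    intro y hy
    obtain ⟨l, hl, hl'⟩ := exists_nat_pow_near ((one_le_div ht₀).mpr hy) one_lt_two
    rw [le_div_iff₀ ht₀] at hl
    rw [div_lt_iff₀ ht₀, pow_succ] at hl'
    refine ⟨l, Finset.mem_range.mpr ((pow_lt_pow_iff_right₀ (one_lt_two (α := ℝ))).mp ?_), hl,
      by linarith only [hl']⟩
    exact (le_mul_of_one_le_right (by positivity) ht).trans_lt (hl.trans_lt (gridDist_lt x y))
  calc ∑ y with t ≤ gridDist x y, decay x y
      ≤ ∑ l ∈ Finset.range N,
          ∑ y with 2 ^ l * t ≤ gridDist x y ∧ gridDist x y ≤ 2 * (2 ^ l * t), decay x y :=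
        sum_filter_le_sum_sum_filter (decay_nonneg x) hannuli
    _ ≤ ∑ l ∈ Finset.range N, 5 ^ n * (1 / √t) * (1 / √((2 : ℝ) ^ l)) := by
        refine Finset.sum_le_sum fun l _ => ?_
        have hl : (1 : ℝ) ≤ 2 ^ l * t := one_le_mul_of_one_le_of_one_le (one_le_pow₀ one_le_two) ht
        refine (sum_decay_annulus_le x hl).trans_eq ?_
        rw [Real.sqrt_mul (by positivity)]
        field_simp
    _ ≤ 5 ^ n * (1 / √t) * 4 := by
        rw [← Finset.mul_sum]
        gcongr
        exact sum_range_one_div_sqrt_two_pow_le N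
    _ = 4 * 5 ^ n * (1 / √t) := by ring

end GridDist

section Cube

lemma isCoarsening_cube : IsCoarsening (cube (n := n) (N := N)) := by
  intro j x y h
  funext i
  have hi : (x i : ℕ) / 2 ^ j = (y i : ℕ) / 2 ^ j := congrFun h i
  rw [cube, cube, pow_succ, ← Nat.div_div_eq_div_mul, ← Nat.div_div_eq_div_mul, hi]

lemma cube_zero_injective : Function.Injective (cube (n := n) (N := N) 0) := fun x y h =>
  funext fun i => Fin.ext (by simpa only [cube, pow_zero, Nat.div_one] using congrFun h i)

lemma cube_top (x y : Grid n N) : cube N x = cube N y :=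
  funext fun i => by rw [cube, cube, Nat.div_eq_of_lt (x i).2, Nat.div_eq_of_lt (y i).2]

lemma exists_fin_div_eq_mod_eq {k : ℕ} (hk : k ≤ N) (b : Fin (2 ^ N)) {e : ℕ} (he : e < 2 ^ k) :
    ∃ a : Fin (2 ^ N), (a : ℕ) / 2 ^ k = b / 2 ^ k ∧ (a : ℕ) % 2 ^ k = e := by
  have hb : (b : ℕ) / 2 ^ k < 2 ^ (N - k) := by
    rw [Nat.div_lt_iff_lt_mul (by positivity), ← pow_add, Nat.sub_add_cancel hk]
    exact b.2
  have hlt : 2 ^ k * ((b : ℕ) / 2 ^ k) + e < 2 ^ N := by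
    calc 2 ^ k * ((b : ℕ) / 2 ^ k) + e < 2 ^ k * ((b : ℕ) / 2 ^ k + 1) := by
          rw [mul_add_one]
          omega
      _ ≤ 2 ^ k * 2 ^ (N - k) := Nat.mul_le_mul_left _ hb
      _ = 2 ^ N := by rw [← pow_add, Nat.add_sub_cancel' hk]
  refine ⟨⟨_, hlt⟩, ?_, ?_⟩
  · rw [Nat.mul_add_div (by positivity), Nat.div_eq_of_lt he, add_zero]
  · rw [Nat.mul_add_mod, Nat.mod_eq_of_lt he]

lemma sum_cube {M : Type*} [AddCommMonoid M] {k : ℕ} (hk : k ≤ N) (z : Grid n N)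
    (H : (Fin n → ℕ) → M) :
    ∑ x : Grid n N with cube k x = cube k z, H (fun i => (x i : ℕ) % 2 ^ k) =
      ∑ e ∈ Fintype.piFinset fun _ => Finset.range (2 ^ k), H e := by
  refine Finset.sum_nbij (fun x i => (x i : ℕ) % 2 ^ k) (fun x _ => ?_) (fun x hx y hy hxy => ?_)
    (fun e he => ?_) fun x _ => rfl
  · exact Fintype.mem_piFinset.mpr fun i => Finset.mem_range.mpr (Nat.mod_lt _ (by positivity))
  · have hcube : cube k x = cube k y :=
      (Finset.mem_filter.mp hx).2.trans (Finset.mem_filter.mp hy).2.symm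
    refine funext fun i => Fin.ext ?_
    rw [← Nat.div_add_mod (x i : ℕ) (2 ^ k), ← Nat.div_add_mod (y i : ℕ) (2 ^ k)]
    exact congrArg₂ (fun a b => 2 ^ k * a + b) (congrFun hcube i) (congrFun hxy i)
  · have he' := Fintype.mem_piFinset.mp (Finset.mem_coe.mp he)
    choose x hdiv hmod using fun i =>
      exists_fin_div_eq_mod_eq hk (z i) (Finset.mem_range.mp (he' i))
    have hcube : cube k x = cube k z := funext hdiv
    exact ⟨x, by simpa using hcube, funext hmod⟩

lemma card_cube {k : ℕ} (hk : k ≤ N) (z : Grid n N) :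
    (Finset.card {x : Grid n N | cube k x = cube k z} : ℝ) = ((2 : ℝ) ^ k) ^ n := by
  simpa using sum_cube hk z fun _ => (1 : ℝ)

lemma sum_cube_coord {k : ℕ} (hk : k ≤ N) (z : Grid n N) (i : Fin n) (h : ℕ → ℝ) :
    ∑ x : Grid n N with cube k x = cube k z, h ((x i : ℕ) % 2 ^ k) =
      ((2 : ℝ) ^ k) ^ n / 2 ^ k * ∑ e ∈ Finset.range (2 ^ k), h e := by
  have hpow : ((2 : ℝ) ^ k) ^ n = (2 ^ k) ^ (n - 1) * 2 ^ k := by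
    rw [← pow_succ, Nat.sub_add_cancel i.pos]
  rw [sum_cube hk z fun e => h (e i), Fintype.sum_piFinset_apply, nsmul_eq_mul, hpow]
  simp

lemma exists_add_one_le_gridDist_of_cube_ne {k : ℕ} {x y : Grid n N} (h : cube k y ≠ cube k x) :
    ∃ i, (((x i : ℕ) % 2 ^ k : ℕ) : ℝ) + 1 ≤ gridDist x y ∨
      ((2 ^ k - 1 - (x i : ℕ) % 2 ^ k : ℕ) : ℝ) + 1 ≤ gridDist x y := by
  obtain ⟨i, hi⟩ := Function.ne_iff.mp h
  refine ⟨i, ?_⟩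
  have hd := abs_sub_le_gridDist x y i
  have hx := Nat.div_add_mod (x i : ℕ) (2 ^ k)
  have hy := Nat.div_add_mod (y i : ℕ) (2 ^ k)
  have : (x i : ℕ) % 2 ^ k < 2 ^ k ∧ (y i : ℕ) % 2 ^ k < 2 ^ k :=
    ⟨Nat.mod_lt _ (by positivity), Nat.mod_lt _ (by positivity)⟩
  rcases lt_or_gt_of_ne hi with hlt | hgt
  · have hmul := Nat.mul_le_mul_left (2 ^ k) (Nat.succ_le_of_lt hlt)
    simp only [cube, Nat.succ_eq_add_one, mul_add] at hmul
    have hgap : (y i : ℕ) + ((x i : ℕ) % 2 ^ k + 1) ≤ x i := by omega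
    have hgap' : (y i : ℝ) + (((x i : ℕ) % 2 ^ k : ℕ) + 1 : ℝ) ≤ x i := by exact_mod_cast hgap
    exact Or.inl (by linarith only [hgap', hd, le_abs_self ((x i : ℝ) - y i)])
  · have hmul := Nat.mul_le_mul_left (2 ^ k) (Nat.succ_le_of_lt hgt)
    simp only [cube, Nat.succ_eq_add_one, mul_add] at hmul
    have hgap : (x i : ℕ) + (2 ^ k - 1 - (x i : ℕ) % 2 ^ k + 1) ≤ y i := by omega
    have hgap' : (x i : ℝ) + ((2 ^ k - 1 - (x i : ℕ) % 2 ^ k : ℕ) + 1 : ℝ) ≤ y i := by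
      exact_mod_cast hgap
    exact Or.inr (by linarith only [hgap', hd, neg_le_abs ((x i : ℝ) - y i)])

/-- The dimensional constant in the bound for the total decay across the boundary of a cube. -/
def boundaryConst (n : ℕ) : ℝ := 16 * n * 5 ^ n

lemma boundaryConst_nonneg (n : ℕ) : 0 ≤ boundaryConst n := by
  unfold boundaryConst
  positivity

lemma sum_decay_off_cube_le (k : ℕ) (x : Grid n N) :
    ∑ y : Grid n N with cube k y ≠ cube k x, decay x y ≤
      ∑ i, 4 * 5 ^ n * (1 / √((((x i : ℕ) % 2 ^ k : ℕ) : ℝ) + 1) +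
        1 / √(((2 ^ k - 1 - (x i : ℕ) % 2 ^ k : ℕ) : ℝ) + 1)) := by
  let face : Fin n ⊕ Fin n → ℕ :=
    Sum.elim (fun i => (x i : ℕ) % 2 ^ k) (fun i => 2 ^ k - 1 - (x i : ℕ) % 2 ^ k)
  have hface : ∀ y, cube k y ≠ cube k x → ∃ i ∈ Finset.univ, (face i : ℝ) + 1 ≤ gridDist x y := by
    intro y hy
    obtain ⟨i, hi | hi⟩ := exists_add_one_le_gridDist_of_cube_ne hy
    exacts [⟨Sum.inl i, Finset.mem_univ _, hi⟩, ⟨Sum.inr i, Finset.mem_univ _, hi⟩]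
  calc ∑ y : Grid n N with cube k y ≠ cube k x, decay x y
      ≤ ∑ i, ∑ y with (face i : ℝ) + 1 ≤ gridDist x y, decay x y :=
        sum_filter_le_sum_sum_filter (decay_nonneg x) hface
    _ ≤ ∑ i, 4 * 5 ^ n * (1 / √((face i : ℝ) + 1)) :=
        Finset.sum_le_sum fun i _ => sum_decay_far_le x (by simp)
    _ = _ := by
        rw [Fintype.sum_sum_type, ← Finset.sum_add_distrib]
        exact Finset.sum_congr rfl fun i _ => (mul_add _ _ _).symm

lemma sum_cube_sum_decay_off_cube_le {k : ℕ} (hk : k ≤ N) (z : Grid n N) :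
    ∑ x : Grid n N with cube k x = cube k z, ∑ y : Grid n N with cube k y ≠ cube k x, decay x y ≤
      boundaryConst n / √(2 ^ k) * ((2 : ℝ) ^ k) ^ n := by
  have hsum : ∑ e ∈ Finset.range (2 ^ k),
      (1 / √((e : ℝ) + 1) + 1 / √(((2 ^ k - 1 - e : ℕ) : ℝ) + 1)) ≤ 4 * √(2 ^ k) := by
    rw [Finset.sum_add_distrib, Finset.sum_range_reflect (fun e : ℕ => 1 / √((e : ℝ) + 1))]
    have := sum_range_one_div_sqrt_succ_le (2 ^ k)
    push_cast at this
    linarith only [this]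
  have hsq : √((2 : ℝ) ^ k) ^ 2 = 2 ^ k := Real.sq_sqrt (by positivity)
  refine (Finset.sum_le_sum fun x _ => sum_decay_off_cube_le k x).trans ?_
  rw [Finset.sum_comm]
  calc _ = ∑ i : Fin n, 4 * 5 ^ n * (((2 : ℝ) ^ k) ^ n / 2 ^ k * ∑ e ∈ Finset.range (2 ^ k),
          (1 / √((e : ℝ) + 1) + 1 / √(((2 ^ k - 1 - e : ℕ) : ℝ) + 1))) :=
        Finset.sum_congr rfl fun i _ => by
          rw [← Finset.mul_sum, ← sum_cube_coord hk z i fun e =>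
            1 / √((e : ℝ) + 1) + 1 / √(((2 ^ k - 1 - e : ℕ) : ℝ) + 1)]
    _ ≤ ∑ _i : Fin n, 4 * 5 ^ n * (((2 : ℝ) ^ k) ^ n / 2 ^ k * (4 * √(2 ^ k))) := by gcongr
    _ = boundaryConst n / √(2 ^ k) * ((2 : ℝ) ^ k) ^ n := by
        rw [Finset.sum_const, Finset.card_univ, Fintype.card_fin, nsmul_eq_mul, boundaryConst]
        field_simp
        rw [hsq]
        ring

lemma sum_sum_decay_off_cube_mul_le {k : ℕ} (hk : k ≤ N) {w : Grid n N → ℝ} (hw₀ : ∀ x, 0 ≤ w x)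
    (hw : w.FactorsThrough (cube k)) :
    ∑ x, ∑ y : Grid n N with cube k y ≠ cube k x, decay x y * w x ≤
      boundaryConst n / √(2 ^ k) * ∑ x, w x := by
  let out : Grid n N → ℝ := fun x => ∑ y : Grid n N with cube k y ≠ cube k x, decay x y
  have havg : ∀ x, fiberAvg (cube k) out x ≤ boundaryConst n / √(2 ^ k) := fun x => by
    rw [fiberAvg, smul_eq_mul, card_cube hk, inv_mul_le_iff₀ (by positivity), mul_comm]
    exact sum_cube_sum_decay_off_cube_le hk x
  calc ∑ x, ∑ y : Grid n N with cube k y ≠ cube k x, decay x y * w x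
      = ∑ x, w x * out x := by simp only [out, Finset.mul_sum, mul_comm]
    _ = ∑ x, w x * fiberAvg (cube k) out x :=
        (sum_apply_fiberAvg (cube k) (L := fun x => LinearMap.mulLeft ℝ (w x))
          (fun a b h => by simp only [hw h]) out).symm
    _ ≤ ∑ x, w x * (boundaryConst n / √(2 ^ k)) :=
        Finset.sum_le_sum fun x _ => mul_le_mul_of_nonneg_left (havg x) (hw₀ x)
    _ = boundaryConst n / √(2 ^ k) * ∑ x, w x := by rw [← Finset.sum_mul, mul_comm]

lemma sqrt_mul_sum_sum_decay_off_cube_mul_le {k : ℕ} (hk : k ≤ N) {w : Grid n N → ℝ}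
    (hw₀ : ∀ x, 0 ≤ w x) (hw : w.FactorsThrough (cube k)) :
    √(2 ^ (k + 1)) * ∑ x, ∑ y : Grid n N with cube k y ≠ cube k x, decay x y * w x ≤
      2 * boundaryConst n * ∑ x, w x := by
  have hC := boundaryConst_nonneg n
  have hsum : 0 ≤ ∑ x, w x := Finset.sum_nonneg fun x _ => hw₀ x
  have hsqrt : √(2 : ℝ) ≤ 2 := Real.sqrt_le_iff.mpr (by norm_num)
  calc √(2 ^ (k + 1)) * ∑ x, ∑ y : Grid n N with cube k y ≠ cube k x, decay x y * w x
      ≤ √(2 ^ (k + 1)) * (boundaryConst n / √(2 ^ k) * ∑ x, w x) := by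
        gcongr
        exact sum_sum_decay_off_cube_mul_le hk hw₀ hw
    _ = √2 * boundaryConst n * ∑ x, w x := by
        rw [pow_succ, Real.sqrt_mul (by positivity)]
        field_simp
    _ ≤ 2 * boundaryConst n * ∑ x, w x := by gcongr

lemma sum_sum_decay_off_cube_mul_comm (k : ℕ) (w : Grid n N → ℝ) :
    ∑ x, ∑ y : Grid n N with cube k y ≠ cube k x, decay x y * w y =
      ∑ x, ∑ y : Grid n N with cube k y ≠ cube k x, decay x y * w x := by
  simp only [Finset.sum_filter]
  rw [Finset.sum_comm]
  simp only [decay_comm, ne_comm]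

end Cube

section GeometricSums

lemma sum_range_sum_Ico_geom_mul_le {r : ℝ} (hr₀ : 0 ≤ r) (hr : r < 1) (N : ℕ) {a : ℕ → ℝ}
    (ha : ∀ k, 0 ≤ a k) :
    ∑ m ∈ Finset.range N, ∑ k ∈ Finset.Ico (m + 1) N, r ^ (k - (m + 1)) * a k ≤
      1 / (1 - r) * ∑ k ∈ Finset.range N, a k := by
  have hgeom : ∀ k, ∑ m ∈ Finset.range k, r ^ (k - (m + 1)) ≤ 1 / (1 - r) := fun k => by
    have hreflect := Finset.sum_range_reflect (fun l => r ^ l) k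
    simp only [Nat.sub_sub, add_comm 1] at hreflect
    rw [hreflect, Finset.range_eq_Ico]
    exact (geom_sum_Ico_le_of_lt_one hr₀ hr).trans_eq (by rw [pow_zero])
  rw [Finset.sum_comm' (t' := Finset.range N) (s' := Finset.range) (by
    intro m k
    simp only [Finset.mem_range, Finset.mem_Ico]
    omega), Finset.mul_sum]
  refine Finset.sum_le_sum fun k _ => ?_
  rw [← Finset.sum_mul]
  exact mul_le_mul_of_nonneg_right (hgeom k) (ha k)

lemma sq_norm_sum_Ico_le {E : Type*} [SeminormedAddCommGroup E] (j m : ℕ) (a : ℕ → E) :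
    ‖∑ k ∈ Finset.Ico j m, a k‖ ^ 2 ≤ 6 * ∑ k ∈ Finset.Ico j m, (6 / 5) ^ (k - j) * ‖a k‖ ^ 2 := by
  have hgeom : ∑ k ∈ Finset.Ico j m, (5 / 6 : ℝ) ^ (k - j) ≤ 6 := by
    rw [Finset.sum_Ico_eq_sum_range]
    simp only [Nat.add_sub_cancel_left]
    rw [Finset.range_eq_Ico]
    exact (geom_sum_Ico_le_of_lt_one (by norm_num) (by norm_num)).trans_eq (by norm_num)
  calc ‖∑ k ∈ Finset.Ico j m, a k‖ ^ 2 ≤ (∑ k ∈ Finset.Ico j m, ‖a k‖) ^ 2 := by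
        gcongr
        exact norm_sum_le _ _
    _ ≤ (∑ k ∈ Finset.Ico j m, (5 / 6) ^ (k - j)) *
          ∑ k ∈ Finset.Ico j m, (6 / 5) ^ (k - j) * ‖a k‖ ^ 2 := by
        refine Finset.sum_sq_le_sum_mul_sum_of_sq_le_mul _ (fun _ _ => by positivity)
          (fun _ _ => by positivity) fun k _ => ?_
        rw [← mul_assoc, ← mul_pow]
        norm_num
    _ ≤ 6 * ∑ k ∈ Finset.Ico j m, (6 / 5) ^ (k - j) * ‖a k‖ ^ 2 := by gcongr

end GeometricSums

section SquareFunction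

variable {n N : ℕ} {E : Type*} [NormedAddCommGroup E]

/-- The fractional (order `1/4`) Sobolev energy of a function on the grid. -/
def decayEnergy (h : Grid n N → E) : ℝ := ∑ x, ∑ y, decay x y * ‖h x - h y‖ ^ 2

lemma decayEnergy_le_of_factorsThrough {k : ℕ} (hk : k ≤ N) {h : Grid n N → E}
    (hh : h.FactorsThrough (cube k)) :
    decayEnergy h ≤ 4 * boundaryConst n / √(2 ^ k) * ∑ x, ‖h x‖ ^ 2 := by
  have hfst := sum_sum_decay_off_cube_mul_le hk (w := fun x => ‖h x‖ ^ 2) (fun x => by positivity)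
    fun x y hxy => by simp only [hh hxy]
  have hpoint : ∀ x y : Grid n N, decay x y * ‖h x - h y‖ ^ 2 ≤ if cube k y ≠ cube k x then
      2 * (decay x y * ‖h x‖ ^ 2) + 2 * (decay x y * ‖h y‖ ^ 2) else 0 := by
    intro x y
    split_ifs with hxy
    · have hsq : ‖h x - h y‖ ^ 2 ≤ 2 * (‖h x‖ ^ 2 + ‖h y‖ ^ 2) :=
        (pow_le_pow_left₀ (norm_nonneg _) (norm_sub_le _ _) 2).trans add_sq_le
      linarith only [mul_le_mul_of_nonneg_left hsq (decay_nonneg x y)]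
    · rw [hh (not_not.mp hxy), sub_self, norm_zero, zero_pow two_ne_zero, mul_zero]
  calc decayEnergy h ≤ ∑ x : Grid n N, ∑ y : Grid n N with cube k y ≠ cube k x,
        (2 * (decay x y * ‖h x‖ ^ 2) + 2 * (decay x y * ‖h y‖ ^ 2)) :=
        Finset.sum_le_sum fun x _ => (Finset.sum_le_sum fun y _ => hpoint x y).trans_eq
          (Finset.sum_filter _ _).symm
    _ = 4 * ∑ x : Grid n N, ∑ y : Grid n N with cube k y ≠ cube k x, decay x y * ‖h x‖ ^ 2 := by
        simp only [Finset.sum_add_distrib, ← Finset.mul_sum]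
        rw [sum_sum_decay_off_cube_mul_comm k fun x => ‖h x‖ ^ 2]
        ring
    _ ≤ 4 * (boundaryConst n / √(2 ^ k) * ∑ x, ‖h x‖ ^ 2) := by gcongr
    _ = 4 * boundaryConst n / √(2 ^ k) * ∑ x, ‖h x‖ ^ 2 := by ring

lemma fiberAvg_cube_sub [Module ℝ E] (f : Grid n N → E) {j : ℕ} (hj : j ≤ N) (x y : Grid n N) :
    fiberAvg (cube j) f x - fiberAvg (cube j) f y =
      ∑ k ∈ Finset.Ico j N, (martDiff cube k f x - martDiff cube k f y) := by
  have htelescope : ∀ x : Grid n N, ∑ k ∈ Finset.Ico j N, martDiff cube k f x =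
      fiberAvg (cube j) f x - fiberAvg (cube N) f x := fun x => by
    rw [Finset.sum_Ico_eq_sum_range]
    have := Finset.sum_range_sub' (fun i => fiberAvg (cube (j + i)) f x) (N - j)
    rwa [add_zero, Nat.add_sub_cancel' hj] at this
  rw [Finset.sum_sub_distrib, htelescope, htelescope,
    fiberAvg_factorsThrough (cube N) f (cube_top x y)]
  abel

lemma sqrt_mul_decayEnergy_fiberAvg_le [InnerProductSpace ℝ E] (f : Grid n N → E) {j : ℕ}
    (hj : j ≤ N) :
    √(2 ^ j) * decayEnergy (fiberAvg (cube j) f) ≤ 24 * boundaryConst n *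
      ∑ k ∈ Finset.Ico j N, (6 / 7) ^ (k - j) * ∑ x, ‖martDiff cube k f x‖ ^ 2 := by
  have hlevel : ∀ k ∈ Finset.Ico j N,
      √((2 : ℝ) ^ j) * (6 * (6 / 5) ^ (k - j) * decayEnergy (martDiff cube k f)) ≤
        24 * boundaryConst n * ((6 / 7) ^ (k - j) * ∑ x, ‖martDiff cube k f x‖ ^ 2) := by
    intro k hk
    obtain ⟨hjk, hkN⟩ := Finset.mem_Ico.mp hk
    obtain ⟨l, rfl⟩ := Nat.exists_eq_add_of_le hjk
    have hC := boundaryConst_nonneg n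
    have hratio : (6 / 5 : ℝ) ^ l / √(2 ^ l) ≤ (6 / 7) ^ l := by
      rw [div_le_iff₀ (by positivity), (by norm_num : (6 / 5 : ℝ) = 6 / 7 * (7 / 5)), mul_pow]
      gcongr
      exact seven_fifths_pow_le_sqrt_two_pow l
    have henergy := decayEnergy_le_of_factorsThrough hkN.le
      (martDiff_factorsThrough isCoarsening_cube (j + l) f)
    rw [Nat.add_sub_cancel_left]
    calc _ ≤ √((2 : ℝ) ^ j) * (6 * (6 / 5) ^ l * (4 * boundaryConst n / √(2 ^ (j + l)) *
          ∑ x, ‖martDiff cube (j + l) f x‖ ^ 2)) := by gcongr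
      _ = 24 * boundaryConst n * ((6 / 5) ^ l / √(2 ^ l) *
          ∑ x, ‖martDiff cube (j + l) f x‖ ^ 2) := by
        rw [pow_add 2 j l, Real.sqrt_mul (by positivity)]
        field_simp
        ring
      _ ≤ _ := by gcongr
  calc √(2 ^ j) * decayEnergy (fiberAvg (cube j) f)
      ≤ √(2 ^ j) * ∑ x, ∑ y, decay x y * (6 * ∑ k ∈ Finset.Ico j N,
          (6 / 5) ^ (k - j) * ‖martDiff cube k f x - martDiff cube k f y‖ ^ 2) := by
        unfold decayEnergy
        gcongr with x _ y _
        · exact decay_nonneg x y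
        · rw [fiberAvg_cube_sub f hj x y]
          exact sq_norm_sum_Ico_le _ _ _
    _ = ∑ k ∈ Finset.Ico j N,
          √(2 ^ j) * (6 * (6 / 5) ^ (k - j) * decayEnergy (martDiff cube k f)) := by
        simp only [decayEnergy, Finset.mul_sum]
        symm
        exact Finset.sum_comm.trans (Finset.sum_congr rfl fun x _ => Finset.sum_comm.trans
          (Finset.sum_congr rfl fun y _ => Finset.sum_congr rfl fun k _ => by ring))
    _ ≤ _ := (Finset.sum_le_sum hlevel).trans_eq (Finset.mul_sum _ _ _).symm

lemma sum_sqrt_mul_decayEnergy_fiberAvg_le [InnerProductSpace ℝ E] (f : Grid n N → E) :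
    ∑ m ∈ Finset.range N, √(2 ^ (m + 1)) * decayEnergy (fiberAvg (cube (m + 1)) f) ≤
      168 * boundaryConst n * ∑ x, ‖f x‖ ^ 2 := by
  have hC := boundaryConst_nonneg n
  calc _ ≤ ∑ m ∈ Finset.range N, 24 * boundaryConst n * ∑ k ∈ Finset.Ico (m + 1) N,
          (6 / 7) ^ (k - (m + 1)) * ∑ x, ‖martDiff cube k f x‖ ^ 2 :=
        Finset.sum_le_sum fun m hm =>
          sqrt_mul_decayEnergy_fiberAvg_le f (Finset.mem_range.mp hm)
    _ ≤ 24 * boundaryConst n * (1 / (1 - 6 / 7) *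
          ∑ k ∈ Finset.range N, ∑ x, ‖martDiff cube k f x‖ ^ 2) := by
        rw [← Finset.mul_sum]
        gcongr
        exact sum_range_sum_Ico_geom_mul_le (by norm_num) (by norm_num) N fun k => by positivity
    _ ≤ 24 * boundaryConst n * (1 / (1 - 6 / 7) * ∑ x, ‖f x‖ ^ 2) := by
        gcongr
        exact sum_sum_sq_norm_martDiff_le isCoarsening_cube N f
    _ = 168 * boundaryConst n * ∑ x, ‖f x‖ ^ 2 := by ring

end SquareFunction

/-! ### The discrete `T(1)` theorem -/

section Corner

variable {n N : ℕ}

/-- The `2 ^ j`-cubes of `x` and `y` are separated by at least eight cubes in some coordinate. -/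
def IsFar (j : ℕ) (x y : Grid n N) : Prop :=
  ∃ i, cube j x i + 9 ≤ cube j y i ∨ cube j y i + 9 ≤ cube j x i

/-- The lowest grid point of the `2 ^ j`-cube containing `x`. -/
def corner (j : ℕ) (x : Grid n N) : Grid n N :=
  fun i => ⟨2 ^ j * cube j x i, (Nat.mul_div_le _ _).trans_lt (x i).2⟩

lemma isFar_congr_left {j : ℕ} {x x' : Grid n N} (h : cube j x = cube j x') (y : Grid n N) :
    IsFar j x y ↔ IsFar j x' y := by
  rw [IsFar, IsFar, h]

lemma corner_factorsThrough_cube (j : ℕ) :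
    (corner (n := n) (N := N) j).FactorsThrough (cube j) := by
  intro x x' h
  funext i
  simp only [corner, h]

lemma two_pow_mul_cube_le (j : ℕ) (x : Grid n N) (i : Fin n) :
    (2 : ℝ) ^ j * cube j x i ≤ (x i : ℕ) := by
  exact_mod_cast Nat.mul_div_le (x i : ℕ) (2 ^ j)

lemma lt_two_pow_mul_cube_add_one (j : ℕ) (x : Grid n N) (i : Fin n) :
    ((x i : ℕ) : ℝ) < 2 ^ j * (cube j x i + 1) := by
  exact_mod_cast Nat.lt_mul_div_succ (x i : ℕ) (by positivity : 0 < 2 ^ j)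

lemma gridDist_corner_le (j : ℕ) (x : Grid n N) : gridDist x (corner j x) ≤ 2 ^ j := by
  refine gridDist_le (by positivity) fun i => ?_
  have hcorner : ((corner j x i : ℕ) : ℝ) = 2 ^ j * cube j x i := by
    simp only [corner, Nat.cast_mul, Nat.cast_pow, Nat.cast_ofNat]
  have := two_pow_mul_cube_le j x i
  have := lt_two_pow_mul_cube_add_one j x i
  rw [hcorner, abs_le]
  constructor <;> linarith

lemma IsFar.eight_mul_two_pow_le_gridDist {j : ℕ} {x y : Grid n N} (h : IsFar j x y) :
    8 * 2 ^ j ≤ gridDist x y := by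
  have hlt : ∀ {x y : Grid n N} {i : Fin n}, cube j x i + 9 ≤ cube j y i →
      8 * 2 ^ j ≤ gridDist x y := fun {x y i} hi => by
    have hcast : (cube j x i : ℝ) + 9 ≤ cube j y i := by exact_mod_cast hi
    have := two_pow_mul_cube_le j y i
    have := lt_two_pow_mul_cube_add_one j x i
    have := mul_le_mul_of_nonneg_left hcast (by positivity : (0 : ℝ) ≤ 2 ^ j)
    linarith [neg_abs_le ((x i : ℝ) - (y i : ℝ)), abs_sub_le_gridDist x y i]
  obtain ⟨i, hi | hi⟩ := h
  · exact hlt hi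
  · exact gridDist_comm x y ▸ hlt hi

lemma gridDist_le_of_not_isFar {j : ℕ} {x y : Grid n N} (h : ¬IsFar j x y) :
    gridDist x y ≤ 9 * 2 ^ j := by
  have hle : ∀ {x y : Grid n N} {i : Fin n}, ¬cube j x i + 9 ≤ cube j y i →
      (y i : ℝ) - (x i : ℝ) ≤ 9 * 2 ^ j := fun {x y i} hi => by
    have hcast : (cube j y i : ℝ) + 1 ≤ cube j x i + 9 := by exact_mod_cast not_le.mp hi
    have := two_pow_mul_cube_le j x i
    have := lt_two_pow_mul_cube_add_one j y i
    have := mul_le_mul_of_nonneg_left hcast (by positivity : (0 : ℝ) ≤ 2 ^ j)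
    linarith
  simp only [IsFar, not_exists, not_or] at h
  refine gridDist_le (by positivity) fun i => abs_le.mpr ⟨?_, hle (h i).2⟩
  linarith [hle (h i).1]

end Corner

section CZMatrix

variable {n N : ℕ}

/-- Discrete Calderón–Zygmund matrices: the size and smoothness bounds of a standard kernel off the
diagonal, bounded row and column sums (`T 1, T* 1 ∈ L^∞`), and boundedness when tested on dyadic
cubes. -/
structure IsCZMatrix (M : Matrix (Grid n N) (Grid n N) ℂ) (A : ℝ) : Prop where
  pos : 0 < A
  norm_le {x y} : x ≠ y → ‖M x y‖ ≤ A / gridDist x y ^ n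
  norm_sub_le_left {x x' y} : 8 * gridDist x x' ≤ gridDist x y →
    ‖M x y - M x' y‖ ≤ A * gridDist x x' / gridDist x y ^ (n + 1)
  norm_sub_le_right {x y y'} : 8 * gridDist y y' ≤ gridDist x y →
    ‖M x y - M x y'‖ ≤ A * gridDist y y' / gridDist x y ^ (n + 1)
  row_sum_le x : ‖∑ y, M x y‖ ≤ A
  col_sum_le y : ‖∑ x, M x y‖ ≤ A
  cube_sum_le {k} : k ≤ N → ∀ z : Grid n N, ‖∑ x : Grid n N with cube k x = cube k z,
    ∑ y : Grid n N with cube k y = cube k z, M x y‖ ≤ A * ((2 : ℝ) ^ k) ^ n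

lemma IsCZMatrix.transpose {M : Matrix (Grid n N) (Grid n N) ℂ} {A : ℝ} (h : IsCZMatrix M A) :
    IsCZMatrix M.transpose A where
  pos := h.pos
  norm_le {x y} hxy := gridDist_comm y x ▸ h.norm_le hxy.symm
  norm_sub_le_left {x x' y} hd := by
    rw [gridDist_comm x y] at hd ⊢
    exact h.norm_sub_le_right hd
  norm_sub_le_right {x y y'} hd := by
    rw [gridDist_comm x y] at hd ⊢
    exact h.norm_sub_le_left hd
  row_sum_le := h.col_sum_le
  col_sum_le := h.row_sum_le
  cube_sum_le hk z := (congrArg norm Finset.sum_comm).trans_le (h.cube_sum_le hk z)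

lemma transpose_toBilin' {ι R : Type*} [Fintype ι] [DecidableEq ι] [CommSemiring R]
    (M : Matrix ι ι R) (f g : ι → R) : M.transpose.toBilin' f g = M.toBilin' g f := by
  rw [Matrix.toBilin'_apply, Matrix.toBilin'_apply, Finset.sum_comm]
  exact Finset.sum_congr rfl fun x _ => Finset.sum_congr rfl fun y _ => by
    rw [Matrix.transpose_apply]
    ring

open Classical in
/-- The matrix `M`, corrected far away from the diagonal by its values at the corners of the
`2 ^ j`-cubes. Testing against functions of mean zero on these cubes does not see the correction,
and the corrected matrix decays faster. -/
def reducedEntry (M : Matrix (Grid n N) (Grid n N) ℂ) (j : ℕ) (x y : Grid n N) : ℂ :=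
  M x y - if IsFar j x y then M (corner j x) y else 0

lemma reducedEntry_of_cube_eq (M : Matrix (Grid n N) (Grid n N) ℂ) {j : ℕ} {x y : Grid n N}
    (h : cube j x = cube j y) : reducedEntry M j x y = M x y := by
  have hnear : ¬IsFar j x y := by
    rintro ⟨i, hi⟩
    rw [h] at hi
    omega
  rw [reducedEntry, if_neg hnear, sub_zero]

lemma IsCZMatrix.norm_reducedEntry_le {M : Matrix (Grid n N) (Grid n N) ℂ} {A : ℝ}
    (h : IsCZMatrix M A) (j : ℕ) {x y : Grid n N} (hxy : x ≠ y) :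
    ‖reducedEntry M j x y‖ ≤ 3 * A * √(2 ^ j) * decay x y := by
  have hA := h.pos
  have hd : 0 < gridDist x y := one_pos.trans_le (one_le_gridDist hxy)
  rw [reducedEntry, decay]
  split_ifs with hfar
  · have hdist := hfar.eight_mul_two_pow_le_gridDist
    have hcorner := gridDist_corner_le j x
    have hsqrt : √(2 ^ j) ≤ √(gridDist x y) := by
      gcongr
      linarith [pow_pos (zero_lt_two' ℝ) j]
    calc _ ≤ A * gridDist x (corner j x) / gridDist x y ^ (n + 1) :=
          h.norm_sub_le_left (by linarith)
      _ ≤ A * (√(2 ^ j) * √(2 ^ j)) / gridDist x y ^ (n + 1) := by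
          rw [Real.mul_self_sqrt (by positivity)]
          gcongr
      _ ≤ A * (√(2 ^ j) * √(gridDist x y)) / gridDist x y ^ (n + 1) := by gcongr
      _ = A * √(2 ^ j) * (1 / (gridDist x y ^ n * √(gridDist x y))) := by
          field_simp
          rw [Real.sq_sqrt hd.le, pow_succ']
      _ ≤ _ := by
          gcongr
          linarith
  · have hsqrt : √(gridDist x y) ≤ 3 * √(2 ^ j) := by
      rw [Real.sqrt_le_iff, mul_pow, Real.sq_sqrt (by positivity)]
      exact ⟨by positivity, (gridDist_le_of_not_isFar hfar).trans_eq (by ring)⟩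
    rw [sub_zero]
    calc ‖M x y‖ ≤ A / gridDist x y ^ n := h.norm_le hxy
      _ = A * √(gridDist x y) * (1 / (gridDist x y ^ n * √(gridDist x y))) := by field_simp
      _ ≤ A * (3 * √(2 ^ j)) * (1 / (gridDist x y ^ n * √(gridDist x y))) := by gcongr
      _ = _ := by ring

lemma sum_sum_martDiff_mul_reducedEntry (M : Matrix (Grid n N) (Grid n N) ℂ) (m : ℕ)
    (g : Grid n N → ℂ) {H : Grid n N → Grid n N → ℂ} (hH : H.FactorsThrough (cube (m + 1))) :
    ∑ x, ∑ y, martDiff cube m g x * reducedEntry M (m + 1) x y * H x y =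
      ∑ x, ∑ y, martDiff cube m g x * M x y * H x y := by
  classical
  let correction : Grid n N → Grid n N → ℂ := fun y x =>
    (if IsFar (m + 1) x y then M (corner (m + 1) x) y else 0) * H x y
  have hcorrection : ∀ y, ∑ x, correction y x * martDiff cube m g x = 0 := fun y =>
    sum_apply_martDiff isCoarsening_cube m (L := fun x => LinearMap.mulLeft ℝ (correction y x))
      (fun a b hab => by
        simp only [correction, hH hab, isFar_congr_left hab, corner_factorsThrough_cube _ hab]) g
  rw [← sub_eq_zero, ← Finset.sum_sub_distrib, ← neg_eq_zero, ← Finset.sum_neg_distrib]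
  simp_rw [← Finset.sum_sub_distrib, ← Finset.sum_neg_distrib]
  rw [Finset.sum_comm]
  refine Finset.sum_eq_zero fun y _ => Eq.trans (Finset.sum_congr rfl fun x _ => ?_) (hcorrection y)
  simp only [reducedEntry, correction]
  ring

lemma IsCZMatrix.norm_sum_off_cube_le {M : Matrix (Grid n N) (Grid n N) ℂ} {A : ℝ}
    (h : IsCZMatrix M A) {m : ℕ} (hm : m ≤ N) {v : Grid n N → ℂ} (hv : v.FactorsThrough (cube m))
    (u : Grid n N → Grid n N → ℂ) :
    ‖∑ x, ∑ y : Grid n N with cube m y ≠ cube m x, v x * reducedEntry M (m + 1) x y * u x y‖ ≤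
      3 / 2 * A * (√(2 ^ (m + 1)) *
        ∑ x, ∑ y : Grid n N with cube m y ≠ cube m x, decay x y * ‖u x y‖ ^ 2 +
        2 * boundaryConst n * ∑ x, ‖v x‖ ^ 2) := by
  have hA := h.pos
  have hentry : ∀ x : Grid n N, ∀ y ∈ Finset.univ.filter (fun y : Grid n N => cube m y ≠ cube m x),
      ‖v x * reducedEntry M (m + 1) x y * u x y‖ ≤
        3 / 2 * A * √(2 ^ (m + 1)) * (decay x y * ‖u x y‖ ^ 2 + decay x y * ‖v x‖ ^ 2) := by
    intro x y hy
    have hxy : x ≠ y := fun e => (Finset.mem_filter.mp hy).2 (by rw [e])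
    have hdecay := decay_nonneg x y
    rw [norm_mul, norm_mul]
    calc _ ≤ ‖v x‖ * (3 * A * √(2 ^ (m + 1)) * decay x y) * ‖u x y‖ := by
          gcongr
          exact h.norm_reducedEntry_le (m + 1) hxy
      _ = 3 / 2 * A * √(2 ^ (m + 1)) * decay x y * (2 * ‖u x y‖ * ‖v x‖) := by ring
      _ ≤ 3 / 2 * A * √(2 ^ (m + 1)) * decay x y * (‖u x y‖ ^ 2 + ‖v x‖ ^ 2) := by
          gcongr
          exact two_mul_le_add_sq _ _
      _ = _ := by ring
  have hv_sum := sqrt_mul_sum_sum_decay_off_cube_mul_le hm (w := fun x => ‖v x‖ ^ 2)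
    (fun x => by positivity) fun x y hxy => by simp only [hv hxy]
  refine (norm_sum_le_of_le _ fun x _ => norm_sum_le_of_le _ (hentry x)).trans ?_
  simp only [← Finset.mul_sum, Finset.sum_add_distrib]
  rw [mul_assoc (3 / 2 * A), mul_add √_]
  gcongr

lemma IsCZMatrix.norm_sum_same_cube_le {M : Matrix (Grid n N) (Grid n N) ℂ} {A : ℝ}
    (h : IsCZMatrix M A) {k : ℕ} (hk : k ≤ N) {v u : Grid n N → ℂ}
    (hv : v.FactorsThrough (cube k)) (hu : u.FactorsThrough (cube k)) :
    ‖∑ x, ∑ y : Grid n N with cube k y = cube k x, v x * M x y * u y‖ ≤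
      A / 2 * (∑ x, ‖u x‖ ^ 2 + ∑ x, ‖v x‖ ^ 2) := by
  let rowSum : Grid n N → ℂ := fun x => ∑ y : Grid n N with cube k y = cube k x, M x y
  have havg : ∀ x, ‖fiberAvg (cube k) rowSum x‖ ≤ A := fun x => by
    rw [fiberAvg, norm_smul, norm_inv, Real.norm_natCast, card_cube hk,
      inv_mul_le_iff₀ (by positivity), mul_comm]
    refine le_of_eq_of_le (congrArg norm (Finset.sum_congr rfl fun y hy => ?_)) (h.cube_sum_le hk x)
    simp only [rowSum, (Finset.mem_filter.mp hy).2]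
  have hsum : ∑ x, ∑ y : Grid n N with cube k y = cube k x, v x * M x y * u y =
      ∑ x, v x * u x * fiberAvg (cube k) rowSum x :=
    calc _ = ∑ x, v x * u x * rowSum x := Finset.sum_congr rfl fun x _ => by
          rw [Finset.mul_sum]
          exact Finset.sum_congr rfl fun y hy => by
            rw [hu (Finset.mem_filter.mp hy).2]
            ring
      _ = _ := (sum_apply_fiberAvg (cube k) (L := fun x => LinearMap.mulLeft ℝ (v x * u x))
          (fun a b hab => by simp only [hv hab, hu hab]) rowSum).symm
  rw [hsum, ← Finset.sum_add_distrib, Finset.mul_sum]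
  refine norm_sum_le_of_le _ fun x _ => ?_
  rw [norm_mul, norm_mul]
  have hyoung := two_mul_le_add_sq ‖u x‖ ‖v x‖
  calc ‖v x‖ * ‖u x‖ * ‖fiberAvg (cube k) rowSum x‖ ≤ ‖v x‖ * ‖u x‖ * A := by
        gcongr
        exact havg x
    _ = A / 2 * (2 * ‖u x‖ * ‖v x‖) := by ring
    _ ≤ A / 2 * (‖u x‖ ^ 2 + ‖v x‖ ^ 2) := by
        have := h.pos
        gcongr

end CZMatrix

section Bilinear

lemma sum_mul_mul_martDiff {X Y R : Type*} [Fintype X] [DecidableEq Y] [CommRing R] [Algebra ℝ R]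
    {p : ℕ → X → Y} (hp : IsCoarsening p) (m : ℕ) {F : X → R} (hF : F.FactorsThrough (p (m + 1)))
    (b g : X → R) :
    ∑ x, F x * b x * martDiff p m g x = ∑ x, F x * martDiff p m b x * martDiff p m g x := by
  have hfine : ∑ x, F x * martDiff p m g x * fiberAvg (p m) b x =
      ∑ x, F x * martDiff p m g x * b x :=
    sum_apply_fiberAvg (p m) (L := fun x => LinearMap.mulLeft ℝ (F x * martDiff p m g x))
      (fun x y h => by simp only [hF (hp m h), martDiff_factorsThrough hp m g h]) b
  have hcoarse : ∑ x, F x * fiberAvg (p (m + 1)) b x * martDiff p m g x = 0 :=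
    sum_apply_martDiff hp m (L := fun x => LinearMap.mulLeft ℝ (F x * fiberAvg (p (m + 1)) b x))
      (fun x y h => by simp only [hF h, fiberAvg_factorsThrough (p (m + 1)) b h]) g
  calc ∑ x, F x * b x * martDiff p m g x = ∑ x, F x * martDiff p m g x * b x :=
        Finset.sum_congr rfl fun x _ => mul_right_comm _ _ _
    _ = ∑ x, F x * martDiff p m g x * fiberAvg (p m) b x -
          ∑ x, F x * fiberAvg (p (m + 1)) b x * martDiff p m g x := by
        rw [hfine, hcoarse, sub_zero]
    _ = ∑ x, F x * martDiff p m b x * martDiff p m g x := by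
        rw [← Finset.sum_sub_distrib]
        refine Finset.sum_congr rfl fun x _ => ?_
        rw [martDiff.eq_def p m b x]
        ring

lemma map₂_telescope {R E F G : Type*} [CommSemiring R] [AddCommGroup E] [AddCommGroup F]
    [AddCommGroup G] [Module R E] [Module R F] [Module R G] (B : E →ₗ[R] F →ₗ[R] G) (a : ℕ → E)
    (b : ℕ → F) (k : ℕ) :
    B (a 0) (b 0) = B (a k) (b k) + ∑ m ∈ Finset.range k,
      (B (a m - a (m + 1)) (b (m + 1)) + B (a (m + 1)) (b m - b (m + 1)) +
        B (a m - a (m + 1)) (b m - b (m + 1))) := by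
  have hstep : ∀ m, B (a m - a (m + 1)) (b (m + 1)) + B (a (m + 1)) (b m - b (m + 1)) +
      B (a m - a (m + 1)) (b m - b (m + 1)) = B (a m) (b m) - B (a (m + 1)) (b (m + 1)) :=
    fun m => by
      simp only [map_sub, LinearMap.sub_apply]
      abel
  simp only [hstep]
  rw [Finset.sum_range_sub' fun m => B (a m) (b m)]
  abel

end Bilinear

section DiscreteTOne

variable {n N : ℕ} {M : Matrix (Grid n N) (Grid n N) ℂ} {A : ℝ}

lemma norm_sum_mul_mul_martDiff_le (hA : 0 < A) (m : ℕ) (f g b : Grid n N → ℂ) :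
    ‖∑ x, fiberAvg (cube (m + 1)) f x * b x * martDiff cube m g x‖ ≤
      1 / (2 * A) * ∑ x, ‖fiberAvg (cube (m + 1)) f x‖ ^ 2 * ‖martDiff cube m b x‖ ^ 2 +
        A / 2 * ∑ x, ‖martDiff cube m g x‖ ^ 2 := by
  rw [sum_mul_mul_martDiff isCoarsening_cube m (fiberAvg_factorsThrough _ f), Finset.mul_sum,
    Finset.mul_sum, ← Finset.sum_add_distrib]
  refine norm_sum_le_of_le _ fun x _ => ?_
  have hyoung : ∀ s t : ℝ, s * t ≤ 1 / (2 * A) * s ^ 2 + A / 2 * t ^ 2 := fun s t => by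
    have hsq : 1 / (2 * A) * s ^ 2 + A / 2 * t ^ 2 - s * t = 1 / (2 * A) * (s - A * t) ^ 2 := by
      field_simp
      ring
    linarith [(by positivity : 0 ≤ 1 / (2 * A) * (s - A * t) ^ 2)]
  rw [norm_mul, norm_mul, ← mul_pow]
  exact hyoung _ _

lemma IsCZMatrix.norm_sum_commutator_le (h : IsCZMatrix M A) {m : ℕ} (hm : m ≤ N)
    (f g : Grid n N → ℂ) :
    ‖∑ x, ∑ y, martDiff cube m g x * M x y *
        (fiberAvg (cube (m + 1)) f y - fiberAvg (cube (m + 1)) f x)‖ ≤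
      3 / 2 * A * (√(2 ^ (m + 1)) * decayEnergy (fiberAvg (cube (m + 1)) f) +
        2 * boundaryConst n * ∑ x, ‖martDiff cube m g x‖ ^ 2) := by
  have hF := fiberAvg_factorsThrough (cube (m + 1)) f
  set F := fiberAvg (cube (m + 1)) f
  have hA := h.pos
  have hoff : ∀ x, ∑ y, martDiff cube m g x * reducedEntry M (m + 1) x y * (F y - F x) =
      ∑ y : Grid n N with cube m y ≠ cube m x,
        martDiff cube m g x * reducedEntry M (m + 1) x y * (F y - F x) := fun x => by
    refine (Finset.sum_filter_of_ne (p := fun y => cube m y ≠ cube m x) fun y _ hne hxy =>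
      hne ?_).symm
    rw [hF (isCoarsening_cube m hxy), sub_self, mul_zero]
  have henergy : ∑ x, ∑ y : Grid n N with cube m y ≠ cube m x, decay x y * ‖F y - F x‖ ^ 2 ≤
      decayEnergy F := Finset.sum_le_sum fun x _ => by
    simp only [norm_sub_rev (F x)]
    exact Finset.sum_le_univ_sum_of_nonneg fun y => mul_nonneg (decay_nonneg x y) (sq_nonneg _)
  rw [← sum_sum_martDiff_mul_reducedEntry M m g (H := fun x y => F y - F x)
    fun x y hxy => by simp only [hF hxy]]
  simp only [hoff]
  refine (h.norm_sum_off_cube_le hm (martDiff_factorsThrough isCoarsening_cube m g) _).trans ?_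
  gcongr

lemma IsCZMatrix.norm_toBilin'_martDiff_fiberAvg_le (h : IsCZMatrix M A) {m : ℕ} (hm : m ≤ N)
    (f g : Grid n N → ℂ) :
    ‖M.toBilin' (martDiff cube m g) (fiberAvg (cube (m + 1)) f)‖ ≤
      1 / (2 * A) * ∑ x, ‖fiberAvg (cube (m + 1)) f x‖ ^ 2 *
          ‖martDiff cube m (fun x => ∑ y, M x y) x‖ ^ 2 +
        A / 2 * ∑ x, ‖martDiff cube m g x‖ ^ 2 +
      3 / 2 * A * (√(2 ^ (m + 1)) * decayEnergy (fiberAvg (cube (m + 1)) f) +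
        2 * boundaryConst n * ∑ x, ‖martDiff cube m g x‖ ^ 2) := by
  have hsplit : M.toBilin' (martDiff cube m g) (fiberAvg (cube (m + 1)) f) =
      ∑ x, fiberAvg (cube (m + 1)) f x * (∑ y, M x y) * martDiff cube m g x +
      ∑ x, ∑ y, martDiff cube m g x * M x y *
        (fiberAvg (cube (m + 1)) f y - fiberAvg (cube (m + 1)) f x) := by
    rw [Matrix.toBilin'_apply, ← Finset.sum_add_distrib]
    refine Finset.sum_congr rfl fun x _ => ?_
    rw [Finset.mul_sum, Finset.sum_mul, ← Finset.sum_add_distrib]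
    exact Finset.sum_congr rfl fun y _ => by ring
  rw [hsplit]
  exact (norm_add_le _ _).trans (add_le_add (norm_sum_mul_mul_martDiff_le h.pos m f g _)
    (h.norm_sum_commutator_le hm f g))

lemma IsCZMatrix.sum_norm_toBilin'_martDiff_fiberAvg_le (h : IsCZMatrix M A)
    (f g : Grid n N → ℂ) :
    ∑ m ∈ Finset.range N, ‖M.toBilin' (martDiff cube m g) (fiberAvg (cube (m + 1)) f)‖ ≤
      A * (252 * boundaryConst n + 13) * (∑ x, ‖f x‖ ^ 2 + ∑ x, ‖g x‖ ^ 2) := by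
  have hA := h.pos
  have hC := boundaryConst_nonneg n
  have hparaproduct := sum_paraproduct_le isCoarsening_cube N f h.row_sum_le
  have henergy := sum_sqrt_mul_decayEnergy_fiberAvg_le f
  have hmart := sum_sum_sq_norm_martDiff_le isCoarsening_cube N g
  refine (Finset.sum_le_sum fun m hm =>
    h.norm_toBilin'_martDiff_fiberAvg_le (Finset.mem_range.mp hm).le f g).trans ?_
  simp only [Finset.sum_add_distrib, ← Finset.mul_sum]
  calc _ ≤ 1 / (2 * A) * (26 * A ^ 2 * ∑ x, ‖f x‖ ^ 2) + A / 2 * ∑ x, ‖g x‖ ^ 2 +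
        3 / 2 * A * (168 * boundaryConst n * ∑ x, ‖f x‖ ^ 2 +
          2 * boundaryConst n * ∑ x, ‖g x‖ ^ 2) := by gcongr
    _ = A * ((252 * boundaryConst n + 13) * ∑ x, ‖f x‖ ^ 2 +
          (3 * boundaryConst n + 1 / 2) * ∑ x, ‖g x‖ ^ 2) := by
        field_simp
        ring
    _ ≤ A * ((252 * boundaryConst n + 13) * ∑ x, ‖f x‖ ^ 2 +
          (252 * boundaryConst n + 13) * ∑ x, ‖g x‖ ^ 2) := by
        gcongr <;> norm_num
    _ = _ := by ring

lemma IsCZMatrix.norm_toBilin'_martDiff_martDiff_le (h : IsCZMatrix M A) {m : ℕ} (hm : m ≤ N)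
    (f g : Grid n N → ℂ) :
    ‖M.toBilin' (martDiff cube m g) (martDiff cube m f)‖ ≤ A * (3 * boundaryConst n + 1) *
      (∑ x, ‖martDiff cube m f x‖ ^ 2 + ∑ x, ‖martDiff cube m g x‖ ^ 2) := by
  have hf := martDiff_factorsThrough isCoarsening_cube m f
  have hg := martDiff_factorsThrough isCoarsening_cube m g
  set u := martDiff cube m f
  set v := martDiff cube m g with hv
  have hA := h.pos
  have hsplit : M.toBilin' v u =
      ∑ x, ∑ y : Grid n N with cube m y = cube m x, v x * M x y * u y +
      ∑ x, ∑ y : Grid n N with cube m y ≠ cube m x, v x * reducedEntry M (m + 1) x y * u y := by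
    rw [Matrix.toBilin'_apply, hv,
      ← sum_sum_martDiff_mul_reducedEntry M m g (H := fun _ y => u y) fun _ _ _ => rfl, ← hv,
      ← Finset.sum_add_distrib]
    refine Finset.sum_congr rfl fun x _ => ?_
    rw [← Finset.sum_filter_add_sum_filter_not Finset.univ (fun y => cube m y = cube m x)]
    congr 1
    refine Finset.sum_congr rfl fun y hy => ?_
    rw [reducedEntry_of_cube_eq M (isCoarsening_cube m (Finset.mem_filter.mp hy).2.symm)]
  have hsame := h.norm_sum_same_cube_le hm hg hf
  have hoff := h.norm_sum_off_cube_le hm hg fun _ y => u y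
  have hdecay := sqrt_mul_sum_sum_decay_off_cube_mul_le hm (w := fun x => ‖u x‖ ^ 2)
    (fun x => by positivity) fun x y hxy => by simp only [hf hxy]
  rw [sum_sum_decay_off_cube_mul_comm m fun y => ‖u y‖ ^ 2] at hoff
  have hnonneg : 0 ≤ A / 2 * (∑ x, ‖u x‖ ^ 2 + ∑ x, ‖v x‖ ^ 2) := by positivity
  rw [hsplit]
  linarith [norm_add_le (∑ x, ∑ y : Grid n N with cube m y = cube m x, v x * M x y * u y)
    (∑ x, ∑ y : Grid n N with cube m y ≠ cube m x, v x * reducedEntry M (m + 1) x y * u y),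
    mul_le_mul_of_nonneg_left hdecay (by positivity : 0 ≤ 3 / 2 * A)]

lemma IsCZMatrix.norm_toBilin'_fiberAvg_top_le (h : IsCZMatrix M A) (f g : Grid n N → ℂ) :
    ‖M.toBilin' (fiberAvg (cube N) g) (fiberAvg (cube N) f)‖ ≤
      A * (∑ x, ‖f x‖ ^ 2 + ∑ x, ‖g x‖ ^ 2) := by
  have hsame := h.norm_sum_same_cube_le le_rfl (fiberAvg_factorsThrough (cube N) g)
    (fiberAvg_factorsThrough (cube N) f)
  simp only [eq_true (cube_top _ _), Finset.filter_true] at hsame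
  have hA := h.pos
  have hnonneg : 0 ≤ A / 2 * (∑ x, ‖f x‖ ^ 2 + ∑ x, ‖g x‖ ^ 2) := by positivity
  rw [Matrix.toBilin'_apply]
  calc _ ≤ _ := hsame
    _ ≤ A / 2 * (∑ x, ‖f x‖ ^ 2 + ∑ x, ‖g x‖ ^ 2) := by
        gcongr A / 2 * (?_ + ?_) <;> exact sum_sq_norm_fiberAvg_le _ _
    _ ≤ _ := by linarith

/-- The constant of the discrete local `T(1)` theorem. -/
def discreteTOneConst (n : ℕ) : ℝ := 507 * boundaryConst n + 28

lemma discreteTOneConst_pos (n : ℕ) : 0 < discreteTOneConst n := by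
  have := boundaryConst_nonneg n
  rw [discreteTOneConst]
  positivity

theorem IsCZMatrix.norm_toBilin'_le (h : IsCZMatrix M A) (f g : Grid n N → ℂ) :
    ‖M.toBilin' g f‖ ≤ A * discreteTOneConst n * (∑ x, ‖f x‖ ^ 2 + ∑ x, ‖g x‖ ^ 2) := by
  have hA := h.pos
  have hC := boundaryConst_nonneg n
  have htelescope := map₂_telescope M.toBilin' (fun m => fiberAvg (cube m) g)
    (fun m => fiberAvg (cube m) f) N
  have hzero : ∀ f : Grid n N → ℂ, fiberAvg (cube 0) f = f := fun f =>
    fiberAvg_of_factorsThrough (cube_zero_injective.factorsThrough f)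
  rw [hzero, hzero] at htelescope
  have hlow := h.sum_norm_toBilin'_martDiff_fiberAvg_le f g
  have hhigh := h.transpose.sum_norm_toBilin'_martDiff_fiberAvg_le g f
  simp only [transpose_toBilin'] at hhigh
  have hdiag : ∑ m ∈ Finset.range N, ‖M.toBilin' (martDiff cube m g) (martDiff cube m f)‖ ≤
      A * (3 * boundaryConst n + 1) * (∑ x, ‖f x‖ ^ 2 + ∑ x, ‖g x‖ ^ 2) := by
    refine (Finset.sum_le_sum fun m hm =>
      h.norm_toBilin'_martDiff_martDiff_le (Finset.mem_range.mp hm).le f g).trans ?_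
    rw [← Finset.mul_sum, Finset.sum_add_distrib]
    gcongr
    · exact sum_sum_sq_norm_martDiff_le isCoarsening_cube N f
    · exact sum_sum_sq_norm_martDiff_le isCoarsening_cube N g
  have hsum := norm_sum_le_of_le (Finset.range N) fun m (_ : m ∈ Finset.range N) =>
    norm_add₃_le (a := M.toBilin' (martDiff cube m g) (fiberAvg (cube (m + 1)) f))
      (b := M.toBilin' (fiberAvg (cube (m + 1)) g) (martDiff cube m f))
      (c := M.toBilin' (martDiff cube m g) (martDiff cube m f))
  simp only [Finset.sum_add_distrib] at hsum
  rw [htelescope, discreteTOneConst]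
  refine (norm_add_le _ _).trans ?_
  have htop := h.norm_toBilin'_fiberAvg_top_le f g
  simp only [Finset.sum_add_distrib]
  refine (add_le_add htop (hsum.trans (add_le_add_three hlow hhigh hdiag))).trans_eq ?_
  ring

end DiscreteTOne

/-! ### Adapted bump functions and the partition of unity -/

section C1Fun

lemma hasCompactSupport_of_tsupport_subset_closedBall {X α : Type*} [PseudoMetricSpace X]
    [ProperSpace X] [Zero α] {ψ : X → α} {c : X} {r : ℝ} (h : tsupport ψ ⊆ closedBall c r) :
    HasCompactSupport ψ :=
  (isCompact_closedBall c r).of_isClosed_subset (isClosed_tsupport ψ) h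

variable {E : Type*} [NormedAddCommGroup E] [NormedSpace ℝ E]

/-- The continuously differentiable complex functions on `E`, as a subalgebra of all functions. -/
def c1Subalgebra (E : Type*) [NormedAddCommGroup E] [NormedSpace ℝ E] :
    Subalgebra ℂ (E → ℂ) where
  carrier := {f | ContDiff ℝ 1 f}
  mul_mem' hf hg := Set.mem_ofPred.mpr ((Set.mem_ofPred.mp hf).mul (Set.mem_ofPred.mp hg))
  add_mem' hf hg := Set.mem_ofPred.mpr ((Set.mem_ofPred.mp hf).add (Set.mem_ofPred.mp hg))
  algebraMap_mem' _ := Set.mem_ofPred.mpr contDiff_const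

/-- A continuously differentiable complex function on `E`. Bilinear forms on this algebra are
bundled linear maps, with no side condition on their arguments. -/
abbrev C1Fun (E : Type*) [NormedAddCommGroup E] [NormedSpace ℝ E] : Type _ := c1Subalgebra E

instance : CoeFun (C1Fun E) fun _ => E → ℂ := ⟨Subtype.val⟩

lemma C1Fun.contDiff (ψ : C1Fun E) : ContDiff ℝ 1 ψ := Set.mem_ofPred.mp ψ.2

lemma C1Fun.continuous (ψ : C1Fun E) : Continuous ψ := ψ.contDiff.continuous

lemma C1Fun.differentiable (ψ : C1Fun E) : Differentiable ℝ ψ :=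
  ψ.contDiff.differentiable one_ne_zero

/-- A bump function adapted to the ball of centre `c` and radius `r`, with constant `a`. The bound
on partial derivatives of the classical definition is replaced by the one on the operator norm of
the derivative, which is independent of coordinates. -/
structure IsAdapted (c : E) (r a : ℝ) (ψ : C1Fun E) : Prop where
  radius_pos : 0 < r
  tsupport_subset : tsupport ψ ⊆ closedBall c r
  norm_le (u : E) : ‖ψ u‖ ≤ a
  norm_fderiv_le (u : E) : ‖fderiv ℝ ψ u‖ ≤ a / r

namespace IsAdapted

variable {c : E} {r a b : ℝ} {ψ : C1Fun E}

lemma const_nonneg (h : IsAdapted c r a ψ) : 0 ≤ a :=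
  (norm_nonneg _).trans (h.norm_le c)

lemma eq_zero (h : IsAdapted c r a ψ) {u : E} (hu : u ∉ closedBall c r) : ψ u = 0 :=
  image_eq_zero_of_notMem_tsupport fun hu' => hu (h.tsupport_subset hu')

lemma hasCompactSupport [ProperSpace E] (h : IsAdapted c r a ψ) : HasCompactSupport ψ :=
  hasCompactSupport_of_tsupport_subset_closedBall h.tsupport_subset

lemma mono (h : IsAdapted c r a ψ) (hab : a ≤ b) : IsAdapted c r b ψ where
  radius_pos := h.radius_pos
  tsupport_subset := h.tsupport_subset
  norm_le u := (h.norm_le u).trans hab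
  norm_fderiv_le u :=
    (h.norm_fderiv_le u).trans (div_le_div_of_nonneg_right hab h.radius_pos.le)

lemma smul (h : IsAdapted c r a ψ) (z : ℂ) : IsAdapted c r (‖z‖ * a) (z • ψ) where
  radius_pos := h.radius_pos
  tsupport_subset := (tsupport_smul_subset_right (fun _ => z) ψ).trans h.tsupport_subset
  norm_le u := by
    simpa using mul_le_mul_of_nonneg_left (h.norm_le u) (norm_nonneg z)
  norm_fderiv_le u := by
    have hderiv : fderiv ℝ (z • ψ : C1Fun E) u = z • fderiv ℝ ψ u :=
      fderiv_const_smul (ψ.differentiable u) z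
    rw [hderiv, norm_smul, mul_div_assoc]
    exact mul_le_mul_of_nonneg_left (h.norm_fderiv_le u) (norm_nonneg z)

lemma mul (h : IsAdapted c r a ψ) {L : ℝ} {Q : C1Fun E} (hQ : ∀ u ∈ closedBall c r, ‖Q u‖ ≤ b)
    (hQ' : ∀ u ∈ closedBall c r, ‖fderiv ℝ Q u‖ ≤ L) :
    IsAdapted c r (a * (b + r * L)) (Q * ψ) := by
  have hr := h.radius_pos
  have hcenter : c ∈ closedBall c r := mem_closedBall_self hr.le
  have hb : 0 ≤ b := (norm_nonneg _).trans (hQ c hcenter)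
  have hL : 0 ≤ L := (norm_nonneg _).trans (hQ' c hcenter)
  have ha := h.const_nonneg
  refine ⟨hr, (tsupport_mul_subset_right (f := Q) (g := ψ)).trans h.tsupport_subset,
    fun u => ?_, fun u => ?_⟩
  · change ‖Q u * ψ u‖ ≤ _
    by_cases hu : u ∈ closedBall c r
    · rw [norm_mul, mul_comm]
      refine (mul_le_mul (h.norm_le u) (hQ u hu) (norm_nonneg _) ha).trans ?_
      have : 0 ≤ a * (r * L) := by positivity
      linarith
    · rw [h.eq_zero hu, mul_zero, norm_zero]
      positivity
  · by_cases hu : u ∈ closedBall c r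
    · have hderiv : fderiv ℝ (Q * ψ : C1Fun E) u = Q u • fderiv ℝ ψ u + ψ u • fderiv ℝ Q u :=
        fderiv_mul (Q.differentiable u) (ψ.differentiable u)
      have hsplit : a * (b + r * L) / r = b * (a / r) + a * L := by field_simp
      rw [hderiv, hsplit]
      refine (norm_add_le _ _).trans (add_le_add ?_ ?_)
      · rw [norm_smul]
        exact mul_le_mul (hQ u hu) (h.norm_fderiv_le u) (norm_nonneg _) hb
      · rw [norm_smul]
        exact mul_le_mul (h.norm_le u) (hQ' u hu) (norm_nonneg _) ha
    · have hu' : u ∉ tsupport (Q * ψ : C1Fun E) := fun hmem =>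
        hu (h.tsupport_subset (tsupport_mul_subset_right (f := Q) (g := ψ) hmem))
      rw [fderiv_of_notMem_tsupport (𝕜 := ℝ) hu', norm_zero]
      positivity

end IsAdapted

lemma exists_isAdapted [ProperSpace E] {c : E} {r : ℝ} (hr : 0 < r) {ψ : C1Fun E}
    (h : tsupport ψ ⊆ closedBall c r) : ∃ a, 0 < a ∧ IsAdapted c r a ψ := by
  have hcompact := hasCompactSupport_of_tsupport_subset_closedBall h
  obtain ⟨b, hb⟩ := ψ.continuous.bounded_above_of_compact_support hcompact
  obtain ⟨L, hL⟩ := (ψ.contDiff.continuous_fderiv one_ne_zero).bounded_above_of_compact_support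
    (hcompact.fderiv (𝕜 := ℝ))
  refine ⟨max 1 (max b (L * r)), by positivity, hr, h, fun u => ?_, fun u => ?_⟩
  · exact (hb u).trans ((le_max_left _ _).trans (le_max_right _ _))
  · rw [le_div_iff₀ hr]
    exact (mul_le_mul_of_nonneg_right (hL u) hr.le).trans
      ((le_max_right _ _).trans (le_max_right _ _))

/-- The function `η` transported from the unit ball to the ball of centre `c` and radius `r`. -/
def C1Fun.rescale (c : E) (r : ℝ) (η : C1Fun E) : C1Fun E :=
  ⟨fun u => η (r⁻¹ • (u - c)),
    η.contDiff.comp (contDiff_const.smul (contDiff_id.sub contDiff_const))⟩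

lemma C1Fun.rescale_apply (c : E) (r : ℝ) (η : C1Fun E) (u : E) :
    η.rescale c r u = η (r⁻¹ • (u - c)) := rfl

lemma IsAdapted.rescale {s a : ℝ} {η : C1Fun E} (h : IsAdapted 0 s a η) (c : E) {r : ℝ}
    (hr : 0 < r) : IsAdapted c (r * s) a (η.rescale c r) where
  radius_pos := mul_pos hr h.radius_pos
  tsupport_subset := by
    refine closure_minimal (fun u hu => ?_) isClosed_closedBall
    by_contra hu'
    refine hu (h.eq_zero fun hmem => hu' ?_)
    rwa [mem_closedBall_zero_iff, norm_smul, norm_inv, Real.norm_of_nonneg hr.le,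
      inv_mul_le_iff₀ hr, ← mem_closedBall_iff_norm] at hmem
  norm_le _ := h.norm_le _
  norm_fderiv_le u := by
    have hinner : HasFDerivAt (fun u : E => r⁻¹ • (u - c)) (r⁻¹ • ContinuousLinearMap.id ℝ E) u :=
      ((hasFDerivAt_id u).sub_const c).const_smul r⁻¹
    have hderiv : fderiv ℝ (η.rescale c r) u = r⁻¹ • fderiv ℝ η (r⁻¹ • (u - c)) := by
      have hcomp := ((η.differentiable (r⁻¹ • (u - c))).hasFDerivAt.comp u hinner).fderiv
      rwa [ContinuousLinearMap.comp_smul, ContinuousLinearMap.comp_id] at hcomp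
    rw [hderiv, norm_smul, norm_inv, Real.norm_of_nonneg hr.le, mul_comm r s, ← div_div,
      div_eq_inv_mul _ r]
    exact mul_le_mul_of_nonneg_left (h.norm_fderiv_le _) (inv_nonneg.mpr hr.le)

end C1Fun

section EuclideanSpace

variable {n : ℕ}

/-- The space `ℝⁿ` with its Euclidean norm. -/
abbrev Eucl (n : ℕ) : Type := EuclideanSpace ℝ (Fin n)

lemma norm_le_of_forall_abs_le {v : Eucl n} {b : ℝ} (h : ∀ i, |v i| ≤ b) :
    ‖v‖ ≤ n * b := by
  calc ‖v‖ = ‖∑ i, v i • EuclideanSpace.single i (1 : ℝ)‖ := by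
        congr 1
        ext j
        simp [Pi.single_apply]
    _ ≤ ∑ i, ‖v i • EuclideanSpace.single i (1 : ℝ)‖ := norm_sum_le _ _
    _ ≤ ∑ _i : Fin n, b := Finset.sum_le_sum fun i _ => by simpa [norm_smul] using h i
    _ = n * b := by simp

lemma opNorm_le_of_forall_single_le {F : Type*} [NormedAddCommGroup F] [NormedSpace ℝ F]
    {l : Eucl n →L[ℝ] F} {L : ℝ} (hL : 0 ≤ L)
    (h : ∀ i, ‖l (EuclideanSpace.single i 1)‖ ≤ L) : ‖l‖ ≤ n * L := by
  refine l.opNorm_le_bound (by positivity) fun v => ?_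
  calc ‖l v‖ = ‖∑ i, v i • l (EuclideanSpace.single i 1)‖ := by
        simp_rw [← map_smul, ← map_sum]
        congr 2
        ext j
        simp [Pi.single_apply]
    _ ≤ ∑ i, ‖v i • l (EuclideanSpace.single i 1)‖ := norm_sum_le _ _
    _ ≤ ∑ _i : Fin n, ‖v‖ * L := Finset.sum_le_sum fun i _ => by
        rw [norm_smul]
        exact mul_le_mul (PiLp.norm_apply_le v i) (h i) (norm_nonneg _) (norm_nonneg _)
    _ = n * L * ‖v‖ := by
        rw [Finset.sum_const, Finset.card_univ, Fintype.card_fin, nsmul_eq_mul]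
        ring

/-- The volume of the unit ball of `ℝⁿ`. -/
def unitBallVolume (n : ℕ) : ℝ := volume.real (ball (0 : Eucl n) 1)

lemma unitBallVolume_nonneg (n : ℕ) : 0 ≤ unitBallVolume n := measureReal_nonneg

lemma volume_real_closedBall (c : Eucl n) {r : ℝ} (hr : 0 ≤ r) :
    volume.real (closedBall c r) = r ^ n * unitBallVolume n := by
  rw [Measure.real, Measure.addHaar_closedBall _ _ hr]
  simp [unitBallVolume, Measure.real, hr]

lemma integral_norm_le_of_eq_zero_off_closedBall {f : Eucl n → ℂ} {c : Eucl n} {r a : ℝ}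
    (hr : 0 ≤ r) (hf : ∀ u ∉ closedBall c r, f u = 0) (ha : ∀ u, ‖f u‖ ≤ a) :
    ∫ u, ‖f u‖ ≤ a * (r ^ n * unitBallVolume n) := by
  have hrestrict : ∫ u in closedBall c r, ‖f u‖ = ∫ u, ‖f u‖ :=
    setIntegral_eq_integral_of_forall_compl_eq_zero fun u hu => by rw [hf u hu, norm_zero]
  rw [← hrestrict, ← volume_real_closedBall c hr]
  refine (le_abs_self _).trans ?_
  exact norm_setIntegral_le_of_norm_le_const (μ := volume)
    (f := fun u => ‖f u‖) measure_closedBall_lt_top fun u _ => by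
    simpa using ha u

lemma IsAdapted.integral_norm_le {c : Eucl n} {r a : ℝ} {ψ : C1Fun (Eucl n)}
    (h : IsAdapted c r a ψ) : ∫ u, ‖ψ u‖ ≤ a * (r ^ n * unitBallVolume n) :=
  integral_norm_le_of_eq_zero_off_closedBall h.radius_pos.le (fun _ => h.eq_zero) h.norm_le

lemma C1Fun.integral_rescale (η : C1Fun (Eucl n)) (c : Eucl n) {r : ℝ} (hr : 0 < r) :
    ∫ u, η.rescale c r u = (r ^ n : ℝ) • ∫ u, η u := by
  simp_rw [C1Fun.rescale_apply]
  rw [integral_sub_right_eq_self (fun u => η (r⁻¹ • u)), Measure.integral_comp_inv_smul]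
  simp [abs_of_pos hr]

lemma C1Fun.integrable_of_hasCompactSupport {ψ : C1Fun (Eucl n)} (h : HasCompactSupport ψ) :
    Integrable ψ :=
  ψ.continuous.integrable_of_hasCompactSupport h

end EuclideanSpace

section UnitStep

/-- A smooth bump supported in `[-1, 1]` whose integer translates sum to one, because the sum
telescopes. -/
def unitStep (t : ℝ) : ℝ := Real.smoothTransition (t + 1) - Real.smoothTransition t

lemma contDiff_unitStep : ContDiff ℝ 1 unitStep :=
  (Real.smoothTransition.contDiff.comp (contDiff_id.add contDiff_const)).sub
    Real.smoothTransition.contDiff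

lemma unitStep_eq_zero {t : ℝ} (h : 1 ≤ |t|) : unitStep t = 0 := by
  unfold unitStep
  rcases le_abs'.mp h with h | h
  · rw [Real.smoothTransition.zero_of_nonpos (by linarith),
      Real.smoothTransition.zero_of_nonpos (by linarith), sub_self]
  · rw [Real.smoothTransition.one_of_one_le h, Real.smoothTransition.one_of_one_le (by linarith),
      sub_self]

lemma unitStep_nonneg (t : ℝ) : 0 ≤ unitStep t := by
  unfold unitStep
  rcases le_total t 0 with h | h
  · rw [Real.smoothTransition.zero_of_nonpos h, sub_zero]
    exact Real.smoothTransition.nonneg _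
  · rw [Real.smoothTransition.one_of_one_le (x := t + 1) (by linarith)]
    linarith [Real.smoothTransition.le_one t]

lemma sum_unitStep_eq_one {M : ℕ} {t : ℝ} (h₀ : 0 ≤ t) (h₁ : t ≤ M - 1) :
    ∑ a ∈ Finset.range M, unitStep (t - a) = 1 := by
  have hterm : ∀ a : ℕ, unitStep (t - a) = Real.smoothTransition (t + 1 - a) -
      Real.smoothTransition (t + 1 - (a + 1 : ℕ)) := fun a => by
    unfold unitStep
    push_cast
    ring_nf
  simp_rw [hterm]
  rw [Finset.sum_range_sub' fun a : ℕ => Real.smoothTransition (t + 1 - a),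
    Real.smoothTransition.one_of_one_le (by simpa using h₀),
    Real.smoothTransition.zero_of_nonpos (by linarith), sub_zero]

end UnitStep

section Tile

variable {n N : ℕ}

/-- The product of the one-dimensional bumps `unitStep`, whose translates by the integer lattice
form a partition of unity of `ℝⁿ`. -/
def tileBump (n : ℕ) : C1Fun (Eucl n) :=
  ⟨fun u => ((∏ i, unitStep (u i) : ℝ) : ℂ), Set.mem_ofPred.mpr <|
    Complex.ofRealCLM.contDiff.comp <|
      contDiff_prod fun i _ => contDiff_unitStep.comp 
        (by fun_prop : ContDiff ℝ 1 fun u : Eucl n => u i)⟩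

lemma tileBump_apply (u : Eucl n) : tileBump n u = ((∏ i, unitStep (u i) : ℝ) : ℂ) := rfl

lemma norm_tileBump (u : Eucl n) : ‖tileBump n u‖ = ∏ i, unitStep (u i) :=
  Complex.norm_of_nonneg (Finset.prod_nonneg fun i _ => unitStep_nonneg (u i))

lemma tsupport_tileBump_subset : tsupport (tileBump n) ⊆ closedBall 0 (n + 1) := by
  refine closure_minimal (fun u hu => ?_) isClosed_closedBall
  have hcoord : ∀ i, |u i| ≤ 1 := fun i => by
    by_contra! hi
    refine hu ?_
    rw [tileBump_apply, Finset.prod_eq_zero (Finset.mem_univ i) (unitStep_eq_zero hi.le),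
      Complex.ofReal_zero]
  rw [mem_closedBall_zero_iff]
  linarith [norm_le_of_forall_abs_le hcoord]

/-- A constant with which `tileBump n` is adapted to the ball of radius `n + 1`. -/
def tileConst (n : ℕ) : ℝ :=
  (exists_isAdapted (by positivity) (tsupport_tileBump_subset (n := n))).choose

lemma tileConst_pos (n : ℕ) : 0 < tileConst n :=
  (exists_isAdapted (by positivity) tsupport_tileBump_subset).choose_spec.1

lemma isAdapted_tileBump (n : ℕ) : IsAdapted 0 (n + 1) (tileConst n) (tileBump n) :=
  (exists_isAdapted (by positivity) tsupport_tileBump_subset).choose_spec.2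

/-- The integral of `tileBump n`. -/
def tileMass (n : ℕ) : ℝ := ∫ u : Eucl n, ‖tileBump n u‖

lemma tileMass_pos (n : ℕ) : 0 < tileMass n := by
  refine (tileBump n).continuous.norm.integral_pos_of_hasCompactSupport_nonneg_nonzero
    (isAdapted_tileBump n).hasCompactSupport.norm (fun u => norm_nonneg _) (x := 0) ?_
  simp [norm_tileBump, unitStep]

/-- The point `y` of the grid, seen in `ℝⁿ` as a point of the mesh of width `δ` whose first corner
is `(-R, …, -R)`. -/
def gridPoint (R δ : ℝ) (y : Grid n N) : Eucl n := WithLp.toLp 2 fun i => -R + δ * (y i : ℝ)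

lemma gridPoint_sub_apply (R δ : ℝ) (x y : Grid n N) (i : Fin n) :
    (gridPoint R δ x - gridPoint R δ y) i = δ * ((x i : ℝ) - (y i : ℝ)) := by
  simp only [gridPoint, PiLp.sub_apply]
  ring

lemma norm_gridPoint_sub_le (R : ℝ) {δ : ℝ} (hδ : 0 ≤ δ) (x y : Grid n N) :
    ‖gridPoint R δ x - gridPoint R δ y‖ ≤ n * (δ * gridDist x y) := by
  refine norm_le_of_forall_abs_le fun i => ?_
  rw [gridPoint_sub_apply, abs_mul, abs_of_nonneg hδ]
  exact mul_le_mul_of_nonneg_left (abs_sub_le_gridDist x y i) hδ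

lemma mul_gridDist_le_norm_gridPoint_sub (R : ℝ) {δ : ℝ} (hδ : 0 < δ) (x y : Grid n N) :
    δ * gridDist x y ≤ ‖gridPoint R δ x - gridPoint R δ y‖ := by
  rw [← le_div_iff₀' hδ]
  refine gridDist_le (by positivity) fun i => ?_
  rw [le_div_iff₀' hδ]
  have hcoord := PiLp.norm_apply_le (gridPoint R δ x - gridPoint R δ y) i
  rwa [gridPoint_sub_apply, Real.norm_eq_abs, abs_mul, abs_of_pos hδ] at hcoord

/-- The translated and dilated bump `tileBump n` attached to a point of the mesh of width `δ`; the
tiles form a partition of unity on the cube spanned by the mesh. -/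
def tile (R δ : ℝ) (y : Grid n N) : C1Fun (Eucl n) := (tileBump n).rescale (gridPoint R δ y) δ

lemma isAdapted_tile (R : ℝ) {δ : ℝ} (hδ : 0 < δ) (y : Grid n N) :
    IsAdapted (gridPoint R δ y) (δ * (n + 1)) (tileConst n) (tile R δ y) :=
  (isAdapted_tileBump n).rescale _ hδ

lemma ofReal_norm_tile (R δ : ℝ) (y : Grid n N) (u : Eucl n) :
    ((‖tile R δ y u‖ : ℝ) : ℂ) = tile R δ y u := by
  rw [tile, C1Fun.rescale_apply, norm_tileBump, tileBump_apply]

lemma integral_tile (R : ℝ) {δ : ℝ} (hδ : 0 < δ) (y : Grid n N) :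
    ∫ u, tile R δ y u = ((δ ^ n * tileMass n : ℝ) : ℂ) := by
  have hmass : ∫ u, tileBump n u = (tileMass n : ℂ) := by
    simp_rw [tileMass, norm_tileBump, tileBump_apply]
    exact integral_ofReal
  rw [tile, C1Fun.integral_rescale _ _ hδ, hmass, Complex.real_smul, Complex.ofReal_mul]

lemma integral_norm_tile (R : ℝ) {δ : ℝ} (hδ : 0 < δ) (y : Grid n N) :
    ∫ u, ‖tile R δ y u‖ = δ ^ n * tileMass n := by
  have h : ∫ u, ((‖tile R δ y u‖ : ℝ) : ℂ) = ((δ ^ n * tileMass n : ℝ) : ℂ) := by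
    simp_rw [ofReal_norm_tile]
    exact integral_tile R hδ y
  exact_mod_cast integral_complex_ofReal.symm.trans h

lemma integrable_norm_tile (R : ℝ) {δ : ℝ} (hδ : 0 < δ) (y : Grid n N) :
    Integrable fun u => ‖tile R δ y u‖ :=
  (C1Fun.integrable_of_hasCompactSupport (isAdapted_tile R hδ y).hasCompactSupport).norm

lemma sum_norm_tile_eq_one {R δ : ℝ} (hδ : 0 < δ) (hR : 2 * R ≤ δ * (2 ^ N - 1)) {u : Eucl n}
    (hu : u ∈ closedBall 0 R) : ∑ y : Grid n N, ‖tile R δ y u‖ = 1 := by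
  have hcoord : ∀ (y : Grid n N) i,
      (δ⁻¹ • (u - gridPoint R δ y)) i = δ⁻¹ * (u i + R) - ((y i : ℕ) : ℝ) := fun y i => by
    simp only [gridPoint, PiLp.smul_apply, PiLp.sub_apply, smul_eq_mul]
    field
  have hfactor : ∀ i, ∑ a : Fin (2 ^ N), unitStep (δ⁻¹ * (u i + R) - (a : ℕ)) = 1 := fun i => by
    have hui : |u i| ≤ R :=
      (PiLp.norm_apply_le u i).trans (mem_closedBall_zero_iff.mp hu)
    rw [Fin.sum_univ_eq_sum_range fun a : ℕ => unitStep (δ⁻¹ * (u i + R) - a)]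
    refine sum_unitStep_eq_one (mul_nonneg (by positivity) (by linarith [(abs_le.mp hui).1])) ?_
    rw [inv_mul_le_iff₀ hδ]
    push_cast
    linarith [(abs_le.mp hui).2]
  simp_rw [tile, C1Fun.rescale_apply, norm_tileBump, hcoord]
  exact (Finset.prod_univ_sum (fun _ : Fin n => (Finset.univ : Finset (Fin (2 ^ N))))
    fun i a => unitStep (δ⁻¹ * (u i + R) - (a : ℕ))).symm.trans
      (Finset.prod_eq_one fun i _ => hfactor i)

lemma sum_tile_eq_one {R δ : ℝ} (hδ : 0 < δ) (hR : 2 * R ≤ δ * (2 ^ N - 1)) {u : Eucl n}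
    (hu : u ∈ closedBall 0 R) : ∑ y : Grid n N, tile R δ y u = 1 := by
  have h := congrArg Complex.ofReal (sum_norm_tile_eq_one hδ hR hu)
  simpa only [Complex.ofReal_sum, ofReal_norm_tile, Complex.ofReal_one] using h

end Tile

/-! ### Calderón–Zygmund forms -/

section CZForm

variable {n : ℕ} {B : C1Fun (Eucl n) →ₗ[ℂ] C1Fun (Eucl n) →ₗ[ℂ] ℂ} {R A : ℝ}

/-- The hypotheses of the `T(1)` theorem on the ball of radius `R` about the origin, stated for the
bilinear form `B f g = ∫ (T f) g` of an operator `T`: locality, `L^∞` bounds on bump functions, and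
the size and smoothness of the kernel, in the form of estimates for functions with supports at
distance at least `D`, with cancellation or without. -/
structure IsCZForm (B : C1Fun (Eucl n) →ₗ[ℂ] C1Fun (Eucl n) →ₗ[ℂ] ℂ) (R A : ℝ) : Prop where
  pos : 0 < A
  congr_left {f f' g : C1Fun (Eucl n)} : Set.EqOn f f' (closedBall 0 R) → B f g = B f' g
  congr_right {f g g' : C1Fun (Eucl n)} : Set.EqOn g g' (closedBall 0 R) → B f g = B f g'
  bump_left {f g : C1Fun (Eucl n)} {c : Eucl n} {r : ℝ} :
    IsAdapted c r 1 f → HasCompactSupport g → ‖B f g‖ ≤ A * ∫ u, ‖g u‖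
  bump_right {f g : C1Fun (Eucl n)} {c : Eucl n} {r : ℝ} :
    HasCompactSupport f → IsAdapted c r 1 g → ‖B f g‖ ≤ A * ∫ u, ‖f u‖
  norm_le {f g : C1Fun (Eucl n)} {D : ℝ} : 0 < D → HasCompactSupport f → HasCompactSupport g →
    (∀ w ∈ tsupport f, ∀ u ∈ tsupport g, D ≤ dist w u) →
    ‖B f g‖ ≤ A / D ^ n * ((∫ w, ‖f w‖) * ∫ u, ‖g u‖)
  norm_le_of_integral_left {f g : C1Fun (Eucl n)} {c : Eucl n} {D s : ℝ} : 0 < D →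
    tsupport f ⊆ closedBall c s → HasCompactSupport g →
    (∀ w ∈ tsupport f, ∀ u ∈ tsupport g, D ≤ dist w u) → 4 * s ≤ D → ∫ w, f w = 0 →
    ‖B f g‖ ≤ A * s / D ^ (n + 1) * ((∫ w, ‖f w‖) * ∫ u, ‖g u‖)
  norm_le_of_integral_right {f g : C1Fun (Eucl n)} {c : Eucl n} {D s : ℝ} : 0 < D →
    HasCompactSupport f → tsupport g ⊆ closedBall c s →
    (∀ w ∈ tsupport f, ∀ u ∈ tsupport g, D ≤ dist w u) → 4 * s ≤ D → ∫ u, g u = 0 →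
    ‖B f g‖ ≤ A * s / D ^ (n + 1) * ((∫ w, ‖f w‖) * ∫ u, ‖g u‖)

namespace IsCZForm

lemma flip (h : IsCZForm B R A) : IsCZForm B.flip R A where
  pos := h.pos
  congr_left hff' := h.congr_right hff'
  congr_right hgg' := h.congr_left hgg'
  bump_left hf hg := h.bump_right hg hf
  bump_right hf hg := h.bump_left hg hf
  norm_le hD hf hg hsep := by
    rw [mul_comm (∫ w, _)]
    exact h.norm_le hD hg hf fun w hw u hu => dist_comm w u ▸ hsep u hu w hw
  norm_le_of_integral_left hD hf hg hsep hs hint := by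
    rw [mul_comm (∫ w, _)]
    exact h.norm_le_of_integral_right hD hg hf
      (fun w hw u hu => dist_comm w u ▸ hsep u hu w hw) hs hint
  norm_le_of_integral_right hD hf hg hsep hs hint := by
    rw [mul_comm (∫ w, _)]
    exact h.norm_le_of_integral_left hD hg hf
      (fun w hw u hu => dist_comm w u ▸ hsep u hu w hw) hs hint

lemma norm_le_of_isAdapted (h : IsCZForm B R A) {f g : C1Fun (Eucl n)} {c : Eucl n} {r a : ℝ}
    (hf : IsAdapted c r a f) (hg : HasCompactSupport g) :
    ‖B f g‖ ≤ A * a * ∫ u, ‖g u‖ := by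
  rcases hf.const_nonneg.eq_or_lt with rfl | ha
  · have hf₀ : f = 0 := Subtype.ext (funext fun u => norm_le_zero_iff.mp (hf.norm_le u))
    simp [hf₀]
  · have hunit : ‖((a⁻¹ : ℝ) : ℂ)‖ * a = 1 := by
      rw [Complex.norm_of_nonneg (inv_nonneg.mpr ha.le), inv_mul_cancel₀ ha.ne']
    have hbump := h.bump_left (hunit ▸ hf.smul ((a⁻¹ : ℝ) : ℂ)) hg
    rw [map_smul, LinearMap.smul_apply, norm_smul,
      Complex.norm_of_nonneg (inv_nonneg.mpr ha.le), inv_mul_le_iff₀ ha] at hbump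
    linarith

end IsCZForm

/-- The constant in the size estimate for a Calderón–Zygmund form. -/
def sizeConst (n : ℕ) : ℝ := 5 ^ n * (unitBallVolume n * (1 + unitBallVolume n))

lemma sizeConst_nonneg (n : ℕ) : 0 ≤ sizeConst n := by
  have := unitBallVolume_nonneg n
  unfold sizeConst
  positivity

lemma IsCZForm.norm_apply_le (h : IsCZForm B R A) {f g : C1Fun (Eucl n)} {p q : Eucl n}
    {r a b : ℝ} (hf : IsAdapted p r a f) (hg : IsAdapted q r b g) :
    ‖B f g‖ ≤ A * sizeConst n * (a * b) * ((r ^ n) ^ 2 / (r + dist p q) ^ n) := by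
  have hr := hf.radius_pos
  have hA := h.pos
  have ha := hf.const_nonneg
  have hb := hg.const_nonneg
  have hV := unitBallVolume_nonneg n
  set V := unitBallVolume n
  have : 0 < r + dist p q := by positivity
  rcases le_or_gt (dist p q) (4 * r) with hnear | hfar
  · have hpow : (r + dist p q) ^ n ≤ 5 ^ n * r ^ n := by
      rw [← mul_pow]
      gcongr
      linarith
    calc ‖B f g‖ ≤ A * a * (b * (r ^ n * V)) :=
          (h.norm_le_of_isAdapted hf hg.hasCompactSupport).trans <| by
            gcongr
            exact hg.integral_norm_le
      _ = A * (5 ^ n * V) * (a * b) * ((r ^ n) ^ 2 / (5 ^ n * r ^ n)) := by field_simp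
      _ ≤ A * sizeConst n * (a * b) * ((r ^ n) ^ 2 / (r + dist p q) ^ n) := by
          have hconst : 5 ^ n * V ≤ sizeConst n :=
            mul_le_mul_of_nonneg_left (le_mul_of_one_le_right hV (by linarith)) (by positivity)
          have := sizeConst_nonneg n
          gcongr
  · have hsep : ∀ w ∈ tsupport f, ∀ u ∈ tsupport g, (r + dist p q) / 5 ≤ dist w u := by
      intro w hw u hu
      have hw' := mem_closedBall'.mp (hf.tsupport_subset hw)
      have hu' := mem_closedBall.mp (hg.tsupport_subset hu)
      linarith [dist_triangle4 p w u q]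
    calc ‖B f g‖
        ≤ A / ((r + dist p q) / 5) ^ n * ((a * (r ^ n * V)) * (b * (r ^ n * V))) :=
          (h.norm_le (by positivity) hf.hasCompactSupport hg.hasCompactSupport hsep).trans <| by
            gcongr
            · exact hf.integral_norm_le
            · exact hg.integral_norm_le
      _ = A * (5 ^ n * (V * V)) * (a * b) * ((r ^ n) ^ 2 / (r + dist p q) ^ n) := by
          rw [div_pow]
          field_simp
      _ ≤ A * sizeConst n * (a * b) * ((r ^ n) ^ 2 / (r + dist p q) ^ n) := by
          have hconst : 5 ^ n * (V * V) ≤ sizeConst n := by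
            unfold sizeConst
            gcongr
            linarith
          gcongr

/-- The constant in the smoothness estimate for a Calderón–Zygmund form. -/
def smoothConst (n : ℕ) (K : ℝ) : ℝ :=
  12 * sizeConst n * (1 + K ^ n) + 2 ^ (n + 2) * unitBallVolume n ^ 2

lemma smoothConst_nonneg (n : ℕ) {K : ℝ} (hK : 0 ≤ K) : 0 ≤ smoothConst n K := by
  have := unitBallVolume_nonneg n
  have := sizeConst_nonneg n
  unfold smoothConst
  positivity

lemma IsCZForm.norm_apply_sub_le_of_near (h : IsCZForm B R A) {f g g' : C1Fun (Eucl n)}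
    {p q q' : Eucl n} {r a b K : ℝ} (hf : IsAdapted p r a f) (hg : IsAdapted q r b g)
    (hg' : IsAdapted q' r b g') (hK : 0 ≤ K) (hpq : r + dist p q ≤ K * (r + dist p q'))
    (hnear : r + dist p q ≤ 12 * (r + dist q q')) :
    ‖B f g - B f g'‖ ≤ A * (12 * sizeConst n * (1 + K ^ n)) * (a * b) *
      ((r ^ n) ^ 2 * (r + dist q q') / (r + dist p q) ^ (n + 1)) := by
  have hr := hf.radius_pos
  have hA := h.pos
  have ha := hf.const_nonneg
  have hb := hg.const_nonneg
  have hS := sizeConst_nonneg n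
  have hρ : 0 < r + dist p q := by positivity
  have : 0 < r + dist p q' := by positivity
  have hcompare : 1 / (r + dist p q') ^ n ≤ K ^ n / (r + dist p q) ^ n := by
    rw [div_le_div_iff₀ (by positivity) (by positivity), one_mul, ← mul_pow]
    exact pow_le_pow_left₀ hρ.le hpq n
  have hone : 1 ≤ 12 * (r + dist q q') / (r + dist p q) := (one_le_div hρ).mpr hnear
  calc ‖B f g - B f g'‖
      ≤ A * sizeConst n * (a * b) * ((r ^ n) ^ 2 / (r + dist p q) ^ n) +
          A * sizeConst n * (a * b) * ((r ^ n) ^ 2 / (r + dist p q') ^ n) :=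
        (norm_sub_le _ _).trans (add_le_add (h.norm_apply_le hf hg) (h.norm_apply_le hf hg'))
    _ = A * sizeConst n * (a * b) * (r ^ n) ^ 2 *
          (1 / (r + dist p q) ^ n + 1 / (r + dist p q') ^ n) := by ring
    _ ≤ A * sizeConst n * (a * b) * (r ^ n) ^ 2 *
          (1 / (r + dist p q) ^ n + K ^ n / (r + dist p q) ^ n) := by gcongr
    _ = A * sizeConst n * (a * b) * (r ^ n) ^ 2 * ((1 + K ^ n) / (r + dist p q) ^ n) * 1 := by
        ring
    _ ≤ A * sizeConst n * (a * b) * (r ^ n) ^ 2 * ((1 + K ^ n) / (r + dist p q) ^ n) *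
          (12 * (r + dist q q') / (r + dist p q)) := by gcongr
    _ = _ := by
        field_simp
        ring

lemma IsCZForm.norm_apply_sub_le_of_far (h : IsCZForm B R A) {f g g' : C1Fun (Eucl n)}
    {p q q' : Eucl n} {r a b : ℝ} (hf : IsAdapted p r a f) (hg : IsAdapted q r b g)
    (hg' : IsAdapted q' r b g') (hint : ∫ u, g u = ∫ u, g' u)
    (hfar : 12 * (r + dist q q') ≤ r + dist p q) :
    ‖B f g - B f g'‖ ≤ A * (2 ^ (n + 2) * unitBallVolume n ^ 2) * (a * b) *
      ((r ^ n) ^ 2 * (r + dist q q') / (r + dist p q) ^ (n + 1)) := by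
  have hr := hf.radius_pos
  have hA := h.pos
  have ha := hf.const_nonneg
  have hV := unitBallVolume_nonneg n
  set V := unitBallVolume n
  have hd : 0 ≤ dist q q' := dist_nonneg
  have : 0 < r + dist p q := by positivity
  have hint_g := C1Fun.integrable_of_hasCompactSupport hg.hasCompactSupport
  have hint_g' := C1Fun.integrable_of_hasCompactSupport hg'.hasCompactSupport
  have hsupp : tsupport (g - g' : C1Fun (Eucl n)) ⊆ closedBall q (r + dist q q') :=
    (tsupport_sub g g').trans <| Set.union_subset
      (hg.tsupport_subset.trans (closedBall_subset_closedBall (by linarith)))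
      (hg'.tsupport_subset.trans (closedBall_subset_closedBall' (dist_comm q q' ▸ le_rfl)))
  have hsep : ∀ w ∈ tsupport f, ∀ u ∈ tsupport (g - g' : C1Fun (Eucl n)),
      (r + dist p q) / 2 ≤ dist w u := by
    intro w hw u hu
    have hw' := mem_closedBall'.mp (hf.tsupport_subset hw)
    have hu' := mem_closedBall.mp (hsupp hu)
    linarith [dist_triangle4 p w u q]
  have hzero : ∫ u, (g - g' : C1Fun (Eucl n)) u = 0 :=
    (integral_sub hint_g hint_g').trans (sub_eq_zero.mpr hint)
  have hmass : ∫ u, ‖(g - g' : C1Fun (Eucl n)) u‖ ≤ 2 * (b * (r ^ n * V)) := by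
    calc ∫ u, ‖(g - g' : C1Fun (Eucl n)) u‖ ≤ ∫ u, (‖g u‖ + ‖g' u‖) :=
          integral_mono (hint_g.sub hint_g').norm (hint_g.norm.add hint_g'.norm)
            fun u => norm_sub_le (g u) (g' u)
      _ = (∫ u, ‖g u‖) + ∫ u, ‖g' u‖ := integral_add hint_g.norm hint_g'.norm
      _ ≤ _ := by linarith [hg.integral_norm_le, hg'.integral_norm_le]
  rw [← map_sub]
  calc ‖B f (g - g')‖
      ≤ A * (r + dist q q') / ((r + dist p q) / 2) ^ (n + 1) *
          ((a * (r ^ n * V)) * (2 * (b * (r ^ n * V)))) :=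
        (h.norm_le_of_integral_right (by positivity) hf.hasCompactSupport hsupp hsep
          (by linarith) hzero).trans <| by
            gcongr
            exact hf.integral_norm_le
    _ = _ := by
        rw [div_pow, pow_succ 2 (n + 1)]
        field_simp

lemma IsCZForm.norm_apply_sub_le (h : IsCZForm B R A) {f g g' : C1Fun (Eucl n)}
    {p q q' : Eucl n} {r a b K : ℝ} (hf : IsAdapted p r a f) (hg : IsAdapted q r b g)
    (hg' : IsAdapted q' r b g') (hint : ∫ u, g u = ∫ u, g' u) (hK : 0 ≤ K)
    (hpq : r + dist p q ≤ K * (r + dist p q')) :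
    ‖B f g - B f g'‖ ≤ A * smoothConst n K * (a * b) *
      ((r ^ n) ^ 2 * (r + dist q q') / (r + dist p q) ^ (n + 1)) := by
  have hr := hf.radius_pos
  have hA := h.pos
  have ha := hf.const_nonneg
  have hb := hg.const_nonneg
  have := sizeConst_nonneg n
  have := unitBallVolume_nonneg n
  rcases le_total (r + dist p q) (12 * (r + dist q q')) with hnear | hfar
  · refine (h.norm_apply_sub_le_of_near hf hg hg' hK hpq hnear).trans ?_
    gcongr
    exact le_add_of_nonneg_right (by positivity)
  · refine (h.norm_apply_sub_le_of_far hf hg hg' hint hfar).trans ?_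
    gcongr
    exact le_add_of_nonneg_left (by positivity)

end CZForm

section FormMatrix

variable {n N : ℕ} {B : C1Fun (Eucl n) →ₗ[ℂ] C1Fun (Eucl n) →ₗ[ℂ] ℂ} {R A δ : ℝ}

/-- The matrix of the form `B` in the partition of unity of mesh `δ`, normalized so that the sums
over a cube of the grid have the order of the number of its points. -/
def formMatrix (B : C1Fun (Eucl n) →ₗ[ℂ] C1Fun (Eucl n) →ₗ[ℂ] ℂ) (R δ : ℝ) :
    Matrix (Grid n N) (Grid n N) ℂ :=
  Matrix.of fun x y => ((δ ^ n : ℝ) : ℂ)⁻¹ * B (tile R δ y) (tile R δ x)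

lemma formMatrix_apply (x y : Grid n N) :
    formMatrix B R δ x y = ((δ ^ n : ℝ) : ℂ)⁻¹ * B (tile R δ y) (tile R δ x) := rfl

lemma formMatrix_flip (x y : Grid n N) : formMatrix B.flip R δ x y = formMatrix B R δ y x := rfl

lemma norm_inv_pow_mul_le (hδ : 0 < δ) {z : ℂ} {b : ℝ} (h : ‖z‖ ≤ b * δ ^ n) :
    ‖((δ ^ n : ℝ) : ℂ)⁻¹ * z‖ ≤ b := by
  rw [norm_mul, norm_inv, Complex.norm_of_nonneg (by positivity), inv_mul_le_iff₀ (by positivity)]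
  linarith

lemma mul_one_add_gridDist_le (R : ℝ) (hδ : 0 < δ) (x y : Grid n N) :
    δ * (1 + gridDist x y) ≤ δ * (n + 1) + dist (gridPoint R δ y) (gridPoint R δ x) := by
  rw [dist_comm, dist_eq_norm]
  have hn : (0 : ℝ) ≤ δ * n := by positivity
  linarith [mul_gridDist_le_norm_gridPoint_sub R hδ x y]

/-- The constant in the size estimate for the entries of `formMatrix`. -/
def gridSizeConst (n : ℕ) : ℝ := sizeConst n * (((n : ℝ) + 1) ^ n) ^ 2

lemma gridSizeConst_nonneg (n : ℕ) : 0 ≤ gridSizeConst n := by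
  have := sizeConst_nonneg n
  unfold gridSizeConst
  positivity

lemma IsCZForm.norm_apply_le_of_grid (h : IsCZForm B R A) (hδ : 0 < δ) {x y : Grid n N}
    {ψ θ : C1Fun (Eucl n)} {a b : ℝ} (hψ : IsAdapted (gridPoint R δ y) (δ * (n + 1)) a ψ)
    (hθ : IsAdapted (gridPoint R δ x) (δ * (n + 1)) b θ) :
    ‖B ψ θ‖ ≤ A * gridSizeConst n * (a * b) * (1 / (1 + gridDist x y) ^ n) * δ ^ n := by
  have hA := h.pos
  have ha := hψ.const_nonneg
  have hb := hθ.const_nonneg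
  have hS := sizeConst_nonneg n
  have hd := gridDist_nonneg x y
  calc ‖B ψ θ‖ ≤ A * sizeConst n * (a * b) * (((δ * (n + 1)) ^ n) ^ 2 /
          (δ * (n + 1) + dist (gridPoint R δ y) (gridPoint R δ x)) ^ n) := h.norm_apply_le hψ hθ
    _ ≤ A * sizeConst n * (a * b) * (((δ * (n + 1)) ^ n) ^ 2 / (δ * (1 + gridDist x y)) ^ n) := by
        gcongr
        exact mul_one_add_gridDist_le R hδ x y
    _ = A * gridSizeConst n * (a * b) * (1 / (1 + gridDist x y) ^ n) * δ ^ n := by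
        rw [gridSizeConst, mul_pow, mul_pow δ (1 + _)]
        field_simp

lemma IsCZForm.norm_formMatrix_le (h : IsCZForm B R A) (hδ : 0 < δ) (x y : Grid n N) :
    ‖formMatrix B R δ x y‖ ≤
      A * (gridSizeConst n * tileConst n ^ 2) * (1 / (1 + gridDist x y) ^ n) := by
  refine norm_inv_pow_mul_le hδ
    ((h.norm_apply_le_of_grid hδ (isAdapted_tile R hδ y) (isAdapted_tile R hδ x)).trans_eq ?_)
  ring

lemma add_dist_gridPoint_le (R : ℝ) (hδ : 0 < δ) {x x' y : Grid n N}
    (hxy : 8 * gridDist x x' ≤ gridDist x y) :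
    δ * (n + 1) + dist (gridPoint R δ y) (gridPoint R δ x) ≤
      3 * (n + 1) * (δ * (n + 1) + dist (gridPoint R δ y) (gridPoint R δ x')) := by
  have hupper : dist (gridPoint R δ y) (gridPoint R δ x) ≤ n * (δ * gridDist x y) := by
    rw [dist_comm, dist_eq_norm]
    exact norm_gridPoint_sub_le R hδ.le x y
  have hhalf : gridDist x y ≤ 2 * (1 + gridDist x' y) := by
    linarith [gridDist_triangle x x' y, gridDist_nonneg x' y]
  calc _ ≤ δ * (n + 1) + n * (δ * (2 * (1 + gridDist x' y))) := by
        refine add_le_add_right (hupper.trans ?_) _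
        gcongr
    _ ≤ 3 * (n + 1) * (δ * (1 + gridDist x' y)) := by
        have := mul_nonneg hδ.le (gridDist_nonneg x' y)
        nlinarith [mul_nonneg hδ.le (Nat.cast_nonneg (α := ℝ) n),
          mul_nonneg (mul_nonneg hδ.le (gridDist_nonneg x' y)) (Nat.cast_nonneg (α := ℝ) n)]
    _ ≤ _ := by
        gcongr
        exact mul_one_add_gridDist_le R hδ x' y

/-- The constant in the smoothness estimate for the entries of `formMatrix`. -/
def gridSmoothConst (n : ℕ) : ℝ :=
  smoothConst n (3 * (n + 1)) * tileConst n ^ 2 * ((((n : ℝ) + 1) ^ n) ^ 2 * (2 * n + 1))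

lemma gridSmoothConst_nonneg (n : ℕ) : 0 ≤ gridSmoothConst n := by
  have := smoothConst_nonneg n (by positivity : (0 : ℝ) ≤ 3 * (n + 1))
  unfold gridSmoothConst
  positivity

lemma IsCZForm.norm_formMatrix_sub_le (h : IsCZForm B R A) (hδ : 0 < δ) {x x' y : Grid n N}
    (hxy : 8 * gridDist x x' ≤ gridDist x y) :
    ‖formMatrix B R δ x y - formMatrix B R δ x' y‖ ≤
      A * gridSmoothConst n * gridDist x x' / gridDist x y ^ (n + 1) := by
  have hA := h.pos
  rcases eq_or_ne x x' with rfl | hne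
  · have := gridDist_nonneg x x
    have := gridDist_nonneg x y
    have := gridSmoothConst_nonneg n
    rw [sub_self, norm_zero]
    positivity
  have hd := one_le_gridDist hne
  have hd' : 0 < gridDist x y := by linarith
  have hρ : δ * gridDist x y ≤ δ * (n + 1) + dist (gridPoint R δ y) (gridPoint R δ x) := by
    linarith [mul_one_add_gridDist_le R hδ x y]
  have hxx' : δ * (n + 1) + dist (gridPoint R δ x) (gridPoint R δ x') ≤
      δ * ((2 * n + 1) * gridDist x x') := by
    have hupper : dist (gridPoint R δ x) (gridPoint R δ x') ≤ n * (δ * gridDist x x') :=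
      dist_eq_norm (gridPoint R δ x) _ ▸ norm_gridPoint_sub_le R hδ.le x x'
    have : δ * (n + 1) * 1 ≤ δ * (n + 1) * gridDist x x' := by gcongr
    linarith
  have hK : (0 : ℝ) ≤ 3 * (n + 1) := by positivity
  have := smoothConst_nonneg n hK
  have := tileConst_pos n
  rw [formMatrix_apply, formMatrix_apply, ← mul_sub]
  refine norm_inv_pow_mul_le hδ ?_
  calc _ ≤ A * smoothConst n (3 * (n + 1)) * (tileConst n * tileConst n) *
          (((δ * (n + 1)) ^ n) ^ 2 *
              (δ * (n + 1) + dist (gridPoint R δ x) (gridPoint R δ x')) /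
            (δ * (n + 1) + dist (gridPoint R δ y) (gridPoint R δ x)) ^ (n + 1)) :=
        h.norm_apply_sub_le (isAdapted_tile R hδ y) (isAdapted_tile R hδ x)
          (isAdapted_tile R hδ x') (by rw [integral_tile R hδ, integral_tile R hδ]) hK
          (add_dist_gridPoint_le R hδ hxy)
    _ ≤ A * smoothConst n (3 * (n + 1)) * (tileConst n * tileConst n) *
          (((δ * (n + 1)) ^ n) ^ 2 * (δ * ((2 * n + 1) * gridDist x x')) /
            (δ * gridDist x y) ^ (n + 1)) := by gcongr
    _ = A * gridSmoothConst n * gridDist x x' / gridDist x y ^ (n + 1) * δ ^ n := by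
        rw [gridSmoothConst, mul_pow δ (gridDist x y), mul_pow]
        field_simp
        ring

end FormMatrix

section CubeCutoff

/-- A smooth bump function of Mathlib as an element of `C1Fun E`. -/
def bumpFun {E : Type*} [NormedAddCommGroup E] [NormedSpace ℝ E] [HasContDiffBump E] {c : E}
    (χ : ContDiffBump c) : C1Fun E :=
  ⟨fun u => (χ u : ℂ), Complex.ofRealCLM.contDiff.comp χ.contDiff⟩

section

variable {E : Type*} [NormedAddCommGroup E] [NormedSpace ℝ E] [HasContDiffBump E] {c : E}
  (χ : ContDiffBump c)

lemma bumpFun_apply (u : E) : bumpFun χ u = (χ u : ℂ) := rfl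

lemma bumpFun_eq_one {u : E} (hu : u ∈ closedBall c χ.rIn) : bumpFun χ u = 1 := by
  rw [bumpFun_apply, χ.one_of_mem_closedBall hu, Complex.ofReal_one]

lemma tsupport_bumpFun : tsupport (bumpFun χ) = closedBall c χ.rOut := by
  have hsupport : Function.support (bumpFun χ) = Function.support χ := by
    ext u
    simp only [Function.mem_support, bumpFun_apply, ne_eq, Complex.ofReal_eq_zero]
  rw [tsupport, hsupport, χ.support_eq, closure_ball _ χ.rOut_pos.ne']

end

/-- The smooth cutoff which equals `1` on the unit ball and vanishes off the ball of radius `2`. -/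
def plateau (n : ℕ) : C1Fun (Eucl n) :=
  bumpFun (c := 0) ⟨1, 2, one_pos, one_lt_two⟩

lemma tsupport_plateau_subset (n : ℕ) : tsupport (plateau n) ⊆ closedBall 0 2 :=
  (tsupport_bumpFun _).subset

/-- A constant with which `plateau n` is adapted to the ball of radius `2`. -/
def plateauConst (n : ℕ) : ℝ :=
  (exists_isAdapted two_pos (tsupport_plateau_subset n)).choose

lemma plateauConst_pos (n : ℕ) : 0 < plateauConst n :=
  (exists_isAdapted two_pos (tsupport_plateau_subset n)).choose_spec.1

lemma isAdapted_plateau (n : ℕ) : IsAdapted 0 2 (plateauConst n) (plateau n) :=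
  (exists_isAdapted two_pos (tsupport_plateau_subset n)).choose_spec.2

variable {n N : ℕ} {R δ : ℝ} {k : ℕ}

/-- The radius of the balls which contain the tiles of a dyadic cube of side `2 ^ k`. -/
def cubeRadius (n : ℕ) (δ : ℝ) (k : ℕ) : ℝ := δ * (2 ^ k * (2 * (n + 1)))

lemma cubeRadius_pos (n : ℕ) (hδ : 0 < δ) (k : ℕ) : 0 < cubeRadius n δ k := by
  unfold cubeRadius
  positivity

lemma mul_add_one_le_cubeRadius (n : ℕ) (hδ : 0 < δ) (k : ℕ) :
    δ * (n + 1) ≤ cubeRadius n δ k := by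
  unfold cubeRadius
  gcongr
  nlinarith [one_le_pow₀ (n := k) (one_le_two (α := ℝ)), Nat.cast_nonneg (α := ℝ) n]

/-- A cutoff which equals `1` on the tiles of the dyadic cube of side `2 ^ k` of the point `z`. -/
def cubeCutoff (R δ : ℝ) (k : ℕ) (z : Grid n N) : C1Fun (Eucl n) :=
  (plateau n).rescale (gridPoint R δ z) (cubeRadius n δ k)

lemma isAdapted_cubeCutoff (R : ℝ) (hδ : 0 < δ) (k : ℕ) (z : Grid n N) :
    IsAdapted (gridPoint R δ z) (cubeRadius n δ k * 2) (plateauConst n) (cubeCutoff R δ k z) :=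
  (isAdapted_plateau n).rescale _ (cubeRadius_pos n hδ k)

lemma cubeCutoff_eq_one (hδ : 0 < δ) {z : Grid n N} {u : Eucl n}
    (hu : u ∈ closedBall (gridPoint R δ z) (cubeRadius n δ k)) : cubeCutoff R δ k z u = 1 := by
  have hr := cubeRadius_pos n hδ k
  refine bumpFun_eq_one (c := (0 : Eucl n)) ⟨1, 2, one_pos, one_lt_two⟩ ?_
  rwa [mem_closedBall_zero_iff, norm_smul, norm_inv, Real.norm_of_nonneg hr.le,
    inv_mul_le_iff₀ hr, mul_one, ← mem_closedBall_iff_norm]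

lemma gridDist_le_of_cube_eq {x z : Grid n N} (h : cube k x = cube k z) :
    gridDist x z ≤ 2 ^ k := by
  refine gridDist_le (by positivity) fun i => ?_
  have hcube : cube k x i = cube k z i := congrFun h i
  have hx := lt_two_pow_mul_cube_add_one k x i
  have hx' := two_pow_mul_cube_le k x i
  have hz := lt_two_pow_mul_cube_add_one k z i
  have hz' := two_pow_mul_cube_le k z i
  rw [hcube] at hx hx'
  rw [abs_le]
  constructor <;> linarith

lemma cubeCutoff_mul_tile_of_cube_eq (hδ : 0 < δ) {y z : Grid n N} (h : cube k y = cube k z) :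
    cubeCutoff R δ k z * tile R δ y = tile R δ y := by
  refine Subtype.ext (funext fun u => ?_)
  change cubeCutoff R δ k z u * tile R δ y u = tile R δ y u
  by_cases hu : u ∈ closedBall (gridPoint R δ y) (δ * (n + 1))
  · have hdist : dist (gridPoint R δ y) (gridPoint R δ z) ≤ n * (δ * 2 ^ k) := by
      rw [dist_eq_norm]
      refine (norm_gridPoint_sub_le R hδ.le y z).trans ?_
      gcongr
      exact gridDist_le_of_cube_eq h
    have hradius : δ * (n + 1) + n * (δ * 2 ^ k) ≤ cubeRadius n δ k := by
      have hk : δ * (n + 1) * 1 ≤ δ * (n + 1) * 2 ^ k := by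
        gcongr
        exact one_le_pow₀ one_le_two
      have hpos : 0 < δ * 2 ^ k := by positivity
      rw [cubeRadius]
      linarith
    rw [cubeCutoff_eq_one hδ, one_mul]
    exact closedBall_subset_closedBall' (by linarith) hu
  · rw [(isAdapted_tile R hδ y).eq_zero hu, mul_zero]

lemma isAdapted_cubeCutoff_mul_tile (hδ : 0 < δ) (k : ℕ) (y z : Grid n N) :
    IsAdapted (gridPoint R δ y) (δ * (n + 1)) (tileConst n * (2 * plateauConst n))
      (cubeCutoff R δ k z * tile R δ y) := by
  have hr := cubeRadius_pos n hδ k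
  have hT := tileConst_pos n
  have hP := plateauConst_pos n
  refine ((isAdapted_tile R hδ y).mul (fun u _ => (isAdapted_cubeCutoff R hδ k z).norm_le u)
    fun u _ => (isAdapted_cubeCutoff R hδ k z).norm_fderiv_le u).mono ?_
  have hratio : δ * (n + 1) * (plateauConst n / (cubeRadius n δ k * 2)) ≤ plateauConst n := by
    rw [mul_div_left_comm]
    refine mul_le_of_le_one_right hP.le ((div_le_one (by positivity)).mpr ?_)
    linarith [mul_add_one_le_cubeRadius n hδ k]
  gcongr
  linarith

lemma gridDist_le_of_cubeCutoff_mul_tile_ne_zero (hδ : 0 < δ) {y z : Grid n N}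
    (h : cubeCutoff R δ k z * tile R δ y ≠ 0) : gridDist y z ≤ 5 * (n + 1) * 2 ^ k := by
  obtain ⟨u, hu⟩ : ∃ u, cubeCutoff R δ k z u * tile R δ y u ≠ 0 := by
    by_contra! hzero
    exact h (Subtype.ext (funext hzero))
  have huz : u ∈ closedBall (gridPoint R δ z) (cubeRadius n δ k * 2) := by
    by_contra hmem
    exact hu (by rw [(isAdapted_cubeCutoff R hδ k z).eq_zero hmem, zero_mul])
  have huy : u ∈ closedBall (gridPoint R δ y) (δ * (n + 1)) := by
    by_contra hmem
    exact hu (by rw [(isAdapted_tile R hδ y).eq_zero hmem, mul_zero])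
  have hyz : δ * gridDist y z ≤ δ * (n + 1) + cubeRadius n δ k * 2 :=
    calc δ * gridDist y z ≤ dist (gridPoint R δ y) (gridPoint R δ z) :=
          dist_eq_norm (gridPoint R δ y) _ ▸ mul_gridDist_le_norm_gridPoint_sub R hδ y z
      _ ≤ _ := (dist_triangle_left _ _ u).trans
          (add_le_add (mem_closedBall.mp huy) (mem_closedBall.mp huz))
  have hk : δ * (n + 1) * 1 ≤ δ * (n + 1) * 2 ^ k := by
    gcongr
    exact one_le_pow₀ one_le_two
  rw [cubeRadius] at hyz
  exact le_of_mul_le_mul_left (by linarith) hδ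

end CubeCutoff

section CubeSums

variable {n N : ℕ} {B : C1Fun (Eucl n) →ₗ[ℂ] C1Fun (Eucl n) →ₗ[ℂ] ℂ} {R A δ : ℝ} {k : ℕ}

lemma IsCZForm.apply_eq_sum_apply_mul_tile (h : IsCZForm B R A) (hδ : 0 < δ)
    (hR : 2 * R ≤ δ * (2 ^ N - 1)) (f g : C1Fun (Eucl n)) :
    B f g = ∑ y : Grid n N, B (f * tile R δ y) g := by
  have hpartition : Set.EqOn f (∑ y : Grid n N, f * tile R δ y : C1Fun (Eucl n))
      (closedBall 0 R) := fun u hu => by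
    have hsum : (∑ y : Grid n N, tile R δ y : C1Fun (Eucl n)) u = 1 := by
      rw [AddSubmonoidClass.coe_finsetSum, Finset.sum_apply]
      exact sum_tile_eq_one hδ hR hu
    rw [← Finset.mul_sum]
    change f u = f u * (∑ y : Grid n N, tile R δ y : C1Fun (Eucl n)) u
    rw [hsum, mul_one]
  rw [h.congr_left hpartition, map_sum, LinearMap.sum_apply]

/-- The constant in the bound for the tiles which cross the boundary of a dyadic cube. -/
def crossConst (n : ℕ) : ℝ :=
  gridSizeConst n * (tileConst n * (2 * plateauConst n) * tileConst n) * (3 * (n + 1))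

lemma crossConst_nonneg (n : ℕ) : 0 ≤ crossConst n := by
  have := gridSizeConst_nonneg n
  have := tileConst_pos n
  have := plateauConst_pos n
  unfold crossConst
  positivity

lemma one_div_one_add_gridDist_pow_le {x y : Grid n N} (hne : x ≠ y) {s : ℝ}
    (hs : gridDist x y ≤ s) : 1 / (1 + gridDist x y) ^ n ≤ √s * decay x y := by
  have hd₀ : 0 < gridDist x y := one_pos.trans_le (one_le_gridDist hne)
  calc 1 / (1 + gridDist x y) ^ n ≤ 1 / gridDist x y ^ n := by
        gcongr
        linarith
    _ = √(gridDist x y) * decay x y := by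
        rw [decay]
        field_simp
    _ ≤ √s * decay x y := mul_le_mul_of_nonneg_right (Real.sqrt_le_sqrt hs) (decay_nonneg x y)

lemma IsCZForm.norm_apply_cubeCutoff_mul_tile_le (h : IsCZForm B R A) (hδ : 0 < δ)
    {x y z : Grid n N} (hx : cube k x = cube k z) (hy : cube k y ≠ cube k x) :
    ‖B (cubeCutoff R δ k z * tile R δ y) (tile R δ x)‖ ≤
      A * crossConst n * √(2 ^ k) * decay x y * δ ^ n := by
  have hA := h.pos
  have hd := decay_nonneg x y
  have := crossConst_nonneg n
  have := gridSizeConst_nonneg n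
  have := tileConst_pos n
  have := plateauConst_pos n
  by_cases hzero : cubeCutoff R δ k z * tile R δ y = 0
  · rw [hzero, map_zero, LinearMap.zero_apply, norm_zero]
    positivity
  have hxy : gridDist x y ≤ (3 * (n + 1)) ^ 2 * 2 ^ k := by
    have hpos : (0 : ℝ) ≤ n * 2 ^ k := by positivity
    have hlinear : gridDist x y ≤ 6 * (n + 1) * 2 ^ k := by
      linarith [gridDist_triangle x z y, gridDist_le_of_cube_eq hx, gridDist_comm y z,
        gridDist_le_of_cubeCutoff_mul_tile_ne_zero hδ hzero]
    refine hlinear.trans (mul_le_mul_of_nonneg_right ?_ (by positivity))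
    nlinarith [n.cast_nonneg (α := ℝ)]
  have hne : x ≠ y := fun hxy => hy (hxy ▸ rfl)
  calc _ ≤ A * gridSizeConst n * (tileConst n * (2 * plateauConst n) * tileConst n) *
          (1 / (1 + gridDist x y) ^ n) * δ ^ n :=
        h.norm_apply_le_of_grid hδ (isAdapted_cubeCutoff_mul_tile hδ k y z) (isAdapted_tile R hδ x)
    _ ≤ A * gridSizeConst n * (tileConst n * (2 * plateauConst n) * tileConst n) *
          (√((3 * (n + 1)) ^ 2 * 2 ^ k) * decay x y) * δ ^ n := by
        gcongr
        exact one_div_one_add_gridDist_pow_le hne hxy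
    _ = A * crossConst n * √(2 ^ k) * decay x y * δ ^ n := by
        rw [crossConst, Real.sqrt_mul (by positivity), Real.sqrt_sq (by positivity)]
        ring

lemma IsCZForm.norm_sum_cube_formMatrix_le (h : IsCZForm B R A) (hδ : 0 < δ)
    (hR : 2 * R ≤ δ * (2 ^ N - 1)) {x z : Grid n N} (hx : cube k x = cube k z) :
    ‖∑ y : Grid n N with cube k y = cube k z, formMatrix B R δ x y‖ ≤
      A * (plateauConst n * tileMass n) + A * crossConst n * √(2 ^ k) *
        ∑ y : Grid n N with cube k y ≠ cube k x, decay x y := by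
  set ω := cubeCutoff R δ k z
  have hω : ‖B ω (tile R δ x)‖ ≤ A * plateauConst n * (δ ^ n * tileMass n) :=
    integral_norm_tile R hδ x ▸ h.norm_le_of_isAdapted (isAdapted_cubeCutoff R hδ k z)
      (isAdapted_tile R hδ x).hasCompactSupport
  have hoff : ‖∑ y : Grid n N with cube k y ≠ cube k x, B (ω * tile R δ y) (tile R δ x)‖ ≤
      A * crossConst n * √(2 ^ k) * (∑ y : Grid n N with cube k y ≠ cube k x, decay x y) *
        δ ^ n := by
    rw [Finset.mul_sum, Finset.sum_mul]
    exact norm_sum_le_of_le _ fun y hy =>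
      h.norm_apply_cubeCutoff_mul_tile_le hδ hx (Finset.mem_filter.mp hy).2
  have hsplit : ∑ y : Grid n N with cube k y = cube k x, B (tile R δ y) (tile R δ x) =
      B ω (tile R δ x) -
        ∑ y : Grid n N with cube k y ≠ cube k x, B (ω * tile R δ y) (tile R δ x) := by
    rw [h.apply_eq_sum_apply_mul_tile hδ hR ω, eq_sub_iff_add_eq,
      ← Finset.sum_filter_add_sum_filter_not Finset.univ (fun y => cube k y = cube k x)]
    refine congrArg (· + _) (Finset.sum_congr rfl fun y hy => ?_)
    rw [cubeCutoff_mul_tile_of_cube_eq hδ ((Finset.mem_filter.mp hy).2.trans hx)]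
  simp_rw [formMatrix_apply]
  rw [← Finset.mul_sum, ← hx]
  refine norm_inv_pow_mul_le hδ ?_
  rw [hsplit]
  linarith [norm_sub_le (B ω (tile R δ x))
    (∑ y : Grid n N with cube k y ≠ cube k x, B (ω * tile R δ y) (tile R δ x))]

lemma IsCZForm.norm_row_sum_formMatrix_le (h : IsCZForm B R A) (hδ : 0 < δ)
    (hR : 2 * R ≤ δ * (2 ^ N - 1)) (x : Grid n N) :
    ‖∑ y, formMatrix B R δ x y‖ ≤ A * (plateauConst n * tileMass n) := by
  simpa [cube_top _ x] using h.norm_sum_cube_formMatrix_le hδ hR (rfl : cube N x = cube N x)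

lemma IsCZForm.norm_sum_cube_sum_cube_formMatrix_le (h : IsCZForm B R A) (hδ : 0 < δ)
    (hR : 2 * R ≤ δ * (2 ^ N - 1)) (hk : k ≤ N) (z : Grid n N) :
    ‖∑ x : Grid n N with cube k x = cube k z, ∑ y : Grid n N with cube k y = cube k z,
      formMatrix B R δ x y‖ ≤
      A * (plateauConst n * tileMass n + crossConst n * boundaryConst n) * ((2 : ℝ) ^ k) ^ n := by
  have hA := h.pos
  have hC := crossConst_nonneg n
  calc _ ≤ ∑ x : Grid n N with cube k x = cube k z,
          (A * (plateauConst n * tileMass n) + A * crossConst n * √(2 ^ k) *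
            ∑ y : Grid n N with cube k y ≠ cube k x, decay x y) :=
        norm_sum_le_of_le _ fun x hx =>
          h.norm_sum_cube_formMatrix_le hδ hR (Finset.mem_filter.mp hx).2
    _ = A * (plateauConst n * tileMass n) * ((2 : ℝ) ^ k) ^ n + A * crossConst n * √(2 ^ k) *
          ∑ x : Grid n N with cube k x = cube k z,
            ∑ y : Grid n N with cube k y ≠ cube k x, decay x y := by
        rw [Finset.sum_add_distrib, Finset.sum_const, nsmul_eq_mul, card_cube hk, ← Finset.mul_sum]
        ring
    _ ≤ A * (plateauConst n * tileMass n) * ((2 : ℝ) ^ k) ^ n + A * crossConst n * √(2 ^ k) *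
          (boundaryConst n / √(2 ^ k) * ((2 : ℝ) ^ k) ^ n) := by
        gcongr
        exact sum_cube_sum_decay_off_cube_le hk z
    _ = _ := by
        field_simp

/-- The constant with which the matrix of a Calderón–Zygmund form satisfies `IsCZMatrix`. -/
def formConst (n : ℕ) : ℝ :=
  gridSizeConst n * tileConst n ^ 2 + gridSmoothConst n +
    (plateauConst n * tileMass n + crossConst n * boundaryConst n)

lemma le_formConst (n : ℕ) : gridSizeConst n * tileConst n ^ 2 ≤ formConst n ∧
    gridSmoothConst n ≤ formConst n ∧
    plateauConst n * tileMass n + crossConst n * boundaryConst n ≤ formConst n := by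
  have hsize := mul_nonneg (gridSizeConst_nonneg n) (sq_nonneg (tileConst n))
  have hsmooth := gridSmoothConst_nonneg n
  have hmass := mul_pos (plateauConst_pos n) (tileMass_pos n)
  have hcross := mul_nonneg (crossConst_nonneg n) (boundaryConst_nonneg n)
  unfold formConst
  refine ⟨?_, ?_, ?_⟩ <;> linarith

lemma formConst_pos (n : ℕ) : 0 < formConst n := by
  have hmass := mul_pos (plateauConst_pos n) (tileMass_pos n)
  have hcross := mul_nonneg (crossConst_nonneg n) (boundaryConst_nonneg n)
  linarith [(le_formConst n).2.2]

lemma IsCZForm.isCZMatrix_formMatrix (h : IsCZForm B R A) (hδ : 0 < δ)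
    (hR : 2 * R ≤ δ * (2 ^ N - 1)) :
    IsCZMatrix (formMatrix B R δ : Matrix (Grid n N) (Grid n N) ℂ) (A * formConst n) := by
  have hA := h.pos
  obtain ⟨hsize, hsmooth, hcube⟩ := le_formConst n
  have hmass : plateauConst n * tileMass n ≤ formConst n := by
    linarith [mul_nonneg (crossConst_nonneg n) (boundaryConst_nonneg n)]
  have hF := formConst_pos n
  refine ⟨mul_pos hA hF, fun {x y} hxy => ?_, fun {x x' y} hxx' => ?_, fun {x y y'} hyy' => ?_,
    fun x => ?_, fun y => ?_, fun {k} hk z => ?_⟩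
  · have hd := one_pos.trans_le (one_le_gridDist hxy)
    rw [div_eq_mul_one_div]
    refine (h.norm_formMatrix_le hδ x y).trans ?_
    gcongr
    linarith
  · have := gridDist_nonneg x y
    have := gridDist_nonneg x x'
    refine (h.norm_formMatrix_sub_le hδ hxx').trans ?_
    gcongr
  · have := gridDist_nonneg y x
    have := gridDist_nonneg y y'
    rw [gridDist_comm x y] at hyy' ⊢
    rw [← formMatrix_flip y x, ← formMatrix_flip y' x]
    refine (h.flip.norm_formMatrix_sub_le hδ hyy').trans ?_
    gcongr
  · refine (h.norm_row_sum_formMatrix_le hδ hR x).trans ?_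
    gcongr
  · simp_rw [← formMatrix_flip y]
    refine (h.flip.norm_row_sum_formMatrix_le hδ hR y).trans ?_
    gcongr
  · refine (h.norm_sum_cube_sum_cube_formMatrix_le hδ hR hk z).trans ?_
    gcongr

end CubeSums

/-! ### The limit of vanishing mesh -/

section Discretization

lemma IsAdapted.norm_sub_le {E : Type*} [NormedAddCommGroup E] [NormedSpace ℝ E] {c : E}
    {r a : ℝ} {ψ : C1Fun E} (h : IsAdapted c r a ψ) (u v : E) :
    ‖ψ u - ψ v‖ ≤ a / r * ‖u - v‖ :=
  convex_univ.norm_image_sub_le_of_norm_fderiv_le (fun w _ => ψ.differentiable w)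
    (fun w _ => h.norm_fderiv_le w) (Set.mem_univ v) (Set.mem_univ u)

lemma IsAdapted.sub_center_mul {E : Type*} [NormedAddCommGroup E] [NormedSpace ℝ E] {c p : E}
    {r s a b : ℝ} {f ψ : C1Fun E} (hf : IsAdapted p s b f) (hψ : IsAdapted c r a ψ) :
    IsAdapted c r (a * (2 * (r * (b / s)))) ((f - algebraMap ℂ (C1Fun E) (f c)) * ψ) := by
  have hL := (norm_nonneg _).trans (hf.norm_fderiv_le c)
  have hclose : ∀ u ∈ closedBall c r,
      ‖(f - algebraMap ℂ (C1Fun E) (f c) : C1Fun E) u‖ ≤ r * (b / s) := fun u hu => by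
    refine (hf.norm_sub_le u c).trans ?_
    rw [mul_comm]
    exact mul_le_mul_of_nonneg_right (mem_closedBall_iff_norm.mp hu) hL
  have hderiv : ∀ u, fderiv ℝ (f - algebraMap ℂ (C1Fun E) (f c) : C1Fun E) u = fderiv ℝ f u :=
    fun u => fderiv_sub_const (f c)
  convert hψ.mul hclose (fun u _ => (hderiv u).symm ▸ hf.norm_fderiv_le u) using 1
  ring

variable {n N : ℕ} {B : C1Fun (Eucl n) →ₗ[ℂ] C1Fun (Eucl n) →ₗ[ℂ] ℂ} {R A δ a : ℝ}
  {f g : C1Fun (Eucl n)}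

lemma sum_one_div_one_add_gridDist_pow_le (x : Grid n N) :
    ∑ y, 1 / (1 + gridDist x y) ^ n ≤ 5 * 5 ^ n * √(2 ^ N) := by
  have hdiag : 1 / (1 + gridDist x x) ^ n ≤ 1 :=
    div_le_one_of_le₀ (one_le_pow₀ (by linarith [gridDist_nonneg x x]))
      (by linarith [one_le_pow₀ (n := n) (by linarith [gridDist_nonneg x x] :
        1 ≤ 1 + gridDist x x)])
  have hoff : ∑ y ∈ Finset.univ.erase x, 1 / (1 + gridDist x y) ^ n ≤
      √(2 ^ N) * (4 * 5 ^ n * (1 / √1)) :=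
    calc _ ≤ ∑ y ∈ Finset.univ.erase x, √(2 ^ N) * decay x y :=
          Finset.sum_le_sum fun y hy =>
            one_div_one_add_gridDist_pow_le (Finset.ne_of_mem_erase hy).symm (gridDist_lt x y).le
      _ ≤ ∑ y with 1 ≤ gridDist x y, √(2 ^ N) * decay x y := by
          refine Finset.sum_le_sum_of_subset_of_nonneg (fun y hy => ?_) fun y _ _ =>
            mul_nonneg (Real.sqrt_nonneg _) (decay_nonneg x y)
          exact Finset.mem_filter.mpr
            ⟨Finset.mem_univ y, one_le_gridDist (Finset.ne_of_mem_erase hy).symm⟩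
      _ ≤ √(2 ^ N) * (4 * 5 ^ n * (1 / √1)) := by
          rw [← Finset.mul_sum]
          gcongr
          exact sum_decay_far_le x le_rfl
  have hone : 1 ≤ 5 ^ n * √((2 : ℝ) ^ N) := one_le_mul_of_one_le_of_one_le
    (one_le_pow₀ (by norm_num)) (Real.one_le_sqrt.mpr (one_le_pow₀ one_le_two))
  rw [← Finset.add_sum_erase _ _ (Finset.mem_univ x)]
  rw [Real.sqrt_one, div_one, mul_one] at hoff
  linarith

lemma card_grid : (Fintype.card (Grid n N) : ℝ) = ((2 : ℝ) ^ N) ^ n := by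
  simp [Grid]

lemma IsAdapted.sq_norm_gridPoint_mul_le (hf : IsAdapted 0 R a f) (hδ : 0 < δ) (y : Grid n N)
    (u : Eucl n) : ‖f (gridPoint R δ y)‖ ^ 2 * ‖tile R δ y u‖ ≤
      2 * ‖f u‖ ^ 2 * ‖tile R δ y u‖ + 2 * (δ * (n + 1) * (a / R)) ^ 2 * ‖tile R δ y u‖ := by
  have hL : 0 ≤ a / R := (norm_nonneg _).trans (hf.norm_fderiv_le u)
  by_cases hu : u ∈ closedBall (gridPoint R δ y) (δ * (n + 1))
  · have hclose : ‖f (gridPoint R δ y) - f u‖ ≤ δ * (n + 1) * (a / R) := by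
      refine (hf.norm_sub_le _ _).trans ?_
      rw [mul_comm]
      exact mul_le_mul_of_nonneg_right (mem_closedBall_iff_norm'.mp hu) hL
    have hnorm : ‖f (gridPoint R δ y)‖ ≤ ‖f u‖ + δ * (n + 1) * (a / R) :=
      (norm_le_norm_add_norm_sub' _ _).trans (by gcongr)
    rw [← add_mul, ← mul_add]
    gcongr
    exact (pow_le_pow_left₀ (norm_nonneg _) hnorm 2).trans (add_sq_le)
  · simp [(isAdapted_tile R hδ y).eq_zero hu]

lemma C1Fun.integrable_sq_norm (h : HasCompactSupport f) : Integrable fun u => ‖f u‖ ^ 2 := by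
  refine Continuous.integrable_of_hasCompactSupport (f.continuous.norm.pow 2) ?_
  exact h.norm.comp_left (g := fun t : ℝ => t ^ 2) (zero_pow two_ne_zero)

lemma IsAdapted.sum_sq_norm_gridPoint_le (hf : IsAdapted 0 R a f) (hδ : 0 < δ)
    (hR : 2 * R ≤ δ * (2 ^ N - 1)) :
    tileMass n * δ ^ n * ∑ y : Grid n N, ‖f (gridPoint R δ y)‖ ^ 2 ≤
      2 * (∫ u, ‖f u‖ ^ 2) +
        2 * (δ * (n + 1) * (a / R)) ^ 2 * tileMass n * (δ * 2 ^ N) ^ n := by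
  set ε := 2 * (δ * (n + 1) * (a / R)) ^ 2
  have hpointwise : ∀ u, ∑ y : Grid n N, ‖f (gridPoint R δ y)‖ ^ 2 * ‖tile R δ y u‖ ≤
      2 * ‖f u‖ ^ 2 + ∑ y : Grid n N, ε * ‖tile R δ y u‖ := fun u => by
    refine (Finset.sum_le_sum fun y _ => hf.sq_norm_gridPoint_mul_le hδ y u).trans ?_
    rw [Finset.sum_add_distrib, ← Finset.mul_sum]
    refine add_le_add_left ?_ _
    by_cases hu : u ∈ closedBall (0 : Eucl n) R
    · rw [sum_norm_tile_eq_one hδ hR hu, mul_one]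
    · simp [hf.eq_zero hu]
  have hint : ∀ b : Grid n N → ℝ, Integrable fun u => ∑ y : Grid n N, b y * ‖tile R δ y u‖ :=
    fun b => integrable_finsetSum _ fun y _ => (integrable_norm_tile R hδ y).const_mul _
  have hvalue : ∀ b : Grid n N → ℝ,
      ∫ u, ∑ y : Grid n N, b y * ‖tile R δ y u‖ = tileMass n * δ ^ n * ∑ y, b y := fun b => by
    rw [integral_finsetSum _ fun y _ => (integrable_norm_tile R hδ y).const_mul _, Finset.mul_sum]
    refine Finset.sum_congr rfl fun y _ => ?_
    rw [integral_const_mul, integral_norm_tile R hδ]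
    ring
  calc _ = ∫ u, ∑ y : Grid n N, ‖f (gridPoint R δ y)‖ ^ 2 * ‖tile R δ y u‖ := (hvalue _).symm
    _ ≤ ∫ u, (2 * ‖f u‖ ^ 2 + ∑ y : Grid n N, ε * ‖tile R δ y u‖) :=
        integral_mono (hint _)
          (((C1Fun.integrable_sq_norm hf.hasCompactSupport).const_mul 2).add (hint _)) hpointwise
    _ = 2 * (∫ u, ‖f u‖ ^ 2) + tileMass n * δ ^ n * ∑ _y : Grid n N, ε := by
        rw [integral_add ((C1Fun.integrable_sq_norm hf.hasCompactSupport).const_mul 2) (hint _),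
          integral_const_mul, hvalue]
    _ = _ := by
        rw [Finset.sum_const, nsmul_eq_mul, Finset.card_univ, card_grid]
        ring

lemma IsCZForm.apply_eq_sum_sum (h : IsCZForm B R A) (hδ : 0 < δ)
    (hR : 2 * R ≤ δ * (2 ^ N - 1)) (f g : C1Fun (Eucl n)) :
    B f g = ∑ x : Grid n N, ∑ y : Grid n N, B (f * tile R δ y) (g * tile R δ x) := by
  change B.flip g f = _
  rw [h.flip.apply_eq_sum_apply_mul_tile hδ hR g f]
  exact Finset.sum_congr rfl fun x _ => h.apply_eq_sum_apply_mul_tile hδ hR f _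

/-- The constant in the bound for the error of discretization of a Calderón–Zygmund form. -/
def discretizationConst (n : ℕ) : ℝ :=
  gridSizeConst n * tileConst n ^ 2 * (2 * (n + 1) * (n + 3))

lemma discretizationConst_nonneg (n : ℕ) : 0 ≤ discretizationConst n := by
  have := gridSizeConst_nonneg n
  unfold discretizationConst
  positivity

lemma IsCZForm.norm_apply_mul_tile_sub_le (h : IsCZForm B R A) (hδ : 0 < δ) (hδR : δ ≤ R)
    (hf : IsAdapted 0 R a f) (hg : IsAdapted 0 R a g) (x y : Grid n N) :
    ‖B (f * tile R δ y) (g * tile R δ x) -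
        f (gridPoint R δ y) * g (gridPoint R δ x) * B (tile R δ y) (tile R δ x)‖ ≤
      A * discretizationConst n * a ^ 2 * (δ / R) * δ ^ n * (1 / (1 + gridDist x y) ^ n) := by
  have hA := h.pos
  have ha := hf.const_nonneg
  have hS := gridSizeConst_nonneg n
  have hT := tileConst_pos n
  have hd := gridDist_nonneg x y
  have hRpos := hf.radius_pos
  set p := gridPoint R δ y
  set q := gridPoint R δ x
  have hψ := isAdapted_tile R hδ y
  have hθ := isAdapted_tile R hδ x
  have hsplit : B (f * tile R δ y) (g * tile R δ x) - f p * g q * B (tile R δ y) (tile R δ x) =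
      B ((f - algebraMap ℂ _ (f p)) * tile R δ y) (g * tile R δ x) +
        f p * B (tile R δ y) ((g - algebraMap ℂ _ (g q)) * tile R δ x) := by
    simp only [sub_mul, ← Algebra.smul_def, map_sub, map_smul, LinearMap.sub_apply,
      LinearMap.smul_apply, smul_eq_mul]
    ring
  have hleft := h.norm_apply_le_of_grid hδ (hf.sub_center_mul hψ)
    (hθ.mul (fun u _ => hg.norm_le u) fun u _ => hg.norm_fderiv_le u)
  have hright := h.norm_apply_le_of_grid hδ hψ (hg.sub_center_mul hθ)
  have hmesh : δ / R ≤ 1 := (div_le_one hRpos).mpr hδR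
  rw [hsplit]
  calc _ ≤ _ + a * _ := (norm_add_le _ _).trans
        (add_le_add hleft ((norm_mul_le _ _).trans
          (mul_le_mul (hf.norm_le p) hright (norm_nonneg _) ha)))
    _ = A * gridSizeConst n * tileConst n ^ 2 * a ^ 2 * (2 * (n + 1) * (2 + (n + 1) * (δ / R))) *
          (δ / R) * δ ^ n * (1 / (1 + gridDist x y) ^ n) := by ring
    _ ≤ A * gridSizeConst n * tileConst n ^ 2 * a ^ 2 * (2 * (n + 1) * (2 + (n + 1) * 1)) *
          (δ / R) * δ ^ n * (1 / (1 + gridDist x y) ^ n) := by gcongr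
    _ = _ := by
        rw [discretizationConst]
        ring

lemma IsCZForm.norm_sub_toBilin'_formMatrix_le (h : IsCZForm B R A) (hδ : 0 < δ)
    (hR : 2 * R ≤ δ * (2 ^ N - 1)) (hδR : δ ≤ R) (hf : IsAdapted 0 R a f)
    (hg : IsAdapted 0 R a g) :
    ‖B f g - ((δ ^ n : ℝ) : ℂ) * (formMatrix B R δ).toBilin'
        (fun x : Grid n N => g (gridPoint R δ x)) (fun y => f (gridPoint R δ y))‖ ≤
      A * discretizationConst n * a ^ 2 * (δ / R) * (δ * 2 ^ N) ^ n * (5 * 5 ^ n * √(2 ^ N)) := by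
  have hA := h.pos
  have hD := discretizationConst_nonneg n
  have hRpos := hf.radius_pos
  have hmatrix : ((δ ^ n : ℝ) : ℂ) * (formMatrix B R δ).toBilin'
      (fun x : Grid n N => g (gridPoint R δ x)) (fun y => f (gridPoint R δ y)) =
      ∑ x : Grid n N, ∑ y : Grid n N,
        f (gridPoint R δ y) * g (gridPoint R δ x) * B (tile R δ y) (tile R δ x) := by
    have hne : ((δ ^ n : ℝ) : ℂ) ≠ 0 := Complex.ofReal_ne_zero.mpr (pow_pos hδ n).ne'
    simp_rw [Matrix.toBilin'_apply, Finset.mul_sum, formMatrix_apply]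
    refine Finset.sum_congr rfl fun x _ => Finset.sum_congr rfl fun y _ => ?_
    field_simp
  rw [hmatrix, h.apply_eq_sum_sum hδ hR f g, ← Finset.sum_sub_distrib]
  simp_rw [← Finset.sum_sub_distrib]
  calc _ ≤ ∑ x : Grid n N, ∑ y : Grid n N,
          A * discretizationConst n * a ^ 2 * (δ / R) * δ ^ n * (1 / (1 + gridDist x y) ^ n) :=
        norm_sum_le_of_le _ fun x _ => norm_sum_le_of_le _ fun y _ =>
          h.norm_apply_mul_tile_sub_le hδ hδR hf hg x y
    _ ≤ ∑ _x : Grid n N,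
          A * discretizationConst n * a ^ 2 * (δ / R) * δ ^ n * (5 * 5 ^ n * √(2 ^ N)) := by
        refine Finset.sum_le_sum fun x _ => ?_
        rw [← Finset.mul_sum]
        gcongr
        exact sum_one_div_one_add_gridDist_pow_le x
    _ = _ := by
        rw [Finset.sum_const, nsmul_eq_mul, Finset.card_univ, card_grid]
        ring

end Discretization

section CZFormBound

variable {n : ℕ} {B : C1Fun (Eucl n) →ₗ[ℂ] C1Fun (Eucl n) →ₗ[ℂ] ℂ} {R A a : ℝ}
  {f g : C1Fun (Eucl n)}

/-- The constant in the `L²` bound for Calderón–Zygmund forms. -/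
def formTOneConst (n : ℕ) : ℝ := 2 * (formConst n * discreteTOneConst n / tileMass n)

lemma formTOneConst_pos (n : ℕ) : 0 < formTOneConst n :=
  mul_pos two_pos (div_pos (mul_pos (formConst_pos n) (discreteTOneConst_pos n)) (tileMass_pos n))

lemma IsCZForm.norm_apply_le_of_mesh {N : ℕ} {δ : ℝ} (h : IsCZForm B R A) (hδ : 0 < δ)
    (hR : 2 * R ≤ δ * (2 ^ N - 1)) (hδR : δ ≤ R) (hf : IsAdapted 0 R a f)
    (hg : IsAdapted 0 R a g) :
    ‖B f g‖ ≤ A * formTOneConst n * ((∫ u, ‖f u‖ ^ 2) + (∫ u, ‖g u‖ ^ 2) +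
        2 * (δ * (n + 1) * (a / R)) ^ 2 * tileMass n * (δ * 2 ^ N) ^ n) +
      A * discretizationConst n * a ^ 2 * (δ / R) * (δ * 2 ^ N) ^ n * (5 * 5 ^ n * √(2 ^ N)) := by
  have hA := h.pos
  have hF := formConst_pos n
  have hT := discreteTOneConst_pos n
  have hM := tileMass_pos n
  have hsum_f := hf.sum_sq_norm_gridPoint_le hδ hR
  have hsum_g := hg.sum_sq_norm_gridPoint_le hδ hR
  set F := fun y : Grid n N => f (gridPoint R δ y)
  set G := fun x : Grid n N => g (gridPoint R δ x)
  set Z := (formMatrix B R δ).toBilin' G F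
  set ε := (δ * (n + 1) * (a / R)) ^ 2 * tileMass n * (δ * 2 ^ N) ^ n with hε
  have hdiscrete : ‖((δ ^ n : ℝ) : ℂ) * Z‖ ≤
      A * formTOneConst n * ((∫ u, ‖f u‖ ^ 2) + (∫ u, ‖g u‖ ^ 2) + 2 * ε) :=
    calc _ = δ ^ n * ‖Z‖ := by
          rw [norm_mul, Complex.norm_of_nonneg (by positivity)]
      _ ≤ δ ^ n * (A * formConst n * discreteTOneConst n *
            (∑ y, ‖F y‖ ^ 2 + ∑ x, ‖G x‖ ^ 2)) := by
          gcongr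
          exact (h.isCZMatrix_formMatrix hδ hR).norm_toBilin'_le F G
      _ = A * formConst n * discreteTOneConst n / tileMass n *
            (tileMass n * δ ^ n * ∑ y, ‖F y‖ ^ 2 + tileMass n * δ ^ n * ∑ x, ‖G x‖ ^ 2) := by
          field_simp
      _ ≤ A * formConst n * discreteTOneConst n / tileMass n *
            ((2 * (∫ u, ‖f u‖ ^ 2) + 2 * ε) + (2 * (∫ u, ‖g u‖ ^ 2) + 2 * ε)) := by
          rw [hε]
          gcongr
          · linarith
          · linarith
      _ = _ := by
          rw [formTOneConst]
          ring
  calc ‖B f g‖ ≤ ‖((δ ^ n : ℝ) : ℂ) * Z‖ + ‖B f g - ((δ ^ n : ℝ) : ℂ) * Z‖ :=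
        norm_le_norm_add_norm_sub' _ _
    _ ≤ _ := add_le_add (hdiscrete.trans_eq (by rw [hε]; ring))
        (h.norm_sub_toBilin'_formMatrix_le hδ hR hδR hf hg)

lemma IsCZForm.norm_apply_le_add (h : IsCZForm B R A) (hf : IsAdapted 0 R a f)
    (hg : IsAdapted 0 R a g) (m : ℕ) :
    ‖B f g‖ ≤ A * formTOneConst n * ((∫ u, ‖f u‖ ^ 2) + (∫ u, ‖g u‖ ^ 2) +
        2 * (4 * (n + 1) * a * (2 ^ (m + 2))⁻¹) ^ 2 * tileMass n * (4 * R) ^ n) +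
      A * discretizationConst n * a ^ 2 * (4 * R) ^ n * (20 * 5 ^ n) * (√(2 ^ (m + 2)))⁻¹ := by
  have hRpos := hf.radius_pos
  set N := m + 2
  set δ := 4 * R * (2 ^ N)⁻¹ with hδ_def
  have hδ : 0 < δ := by positivity
  have hδN : δ * 2 ^ N = 4 * R := by
    rw [hδ_def]
    field_simp
  have hN : (4 : ℝ) ≤ 2 ^ N := by
    rw [pow_add]
    linarith [one_le_pow₀ (n := m) (one_le_two (α := ℝ))]
  have hδR : δ ≤ R := by
    rw [hδ_def, ← div_eq_mul_inv, div_le_iff₀ (by positivity)]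
    nlinarith
  have hslope : δ * (n + 1) * (a / R) = 4 * (n + 1) * a * (2 ^ N)⁻¹ := by
    rw [hδ_def]
    field_simp
  have hsqrt : δ / R * √(2 ^ N) = 4 * (√(2 ^ N))⁻¹ := by
    have hmul : √((2 : ℝ) ^ N) * √(2 ^ N) = 2 ^ N := Real.mul_self_sqrt (by positivity)
    rw [hδ_def]
    field_simp
    linarith
  have hmesh := h.norm_apply_le_of_mesh hδ (by linarith) hδR hf hg
  rw [hslope, hδN] at hmesh
  refine hmesh.trans_eq (congrArg _ ?_)
  linear_combination A * discretizationConst n * a ^ 2 * (4 * R) ^ n * (5 * 5 ^ n) * hsqrt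

theorem IsCZForm.norm_apply_le_of_tsupport_subset (h : IsCZForm B R A) (hR : 0 < R)
    (hf : tsupport f ⊆ closedBall 0 R) (hg : tsupport g ⊆ closedBall 0 R) :
    ‖B f g‖ ≤ A * formTOneConst n * ((∫ u, ‖f u‖ ^ 2) + ∫ u, ‖g u‖ ^ 2) := by
  obtain ⟨a, -, ha⟩ := exists_isAdapted hR hf
  obtain ⟨b, -, hb⟩ := exists_isAdapted hR hg
  set d := max a b
  have hpow : Filter.Tendsto (fun m : ℕ => (2 : ℝ) ^ (m + 2)) Filter.atTop Filter.atTop :=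
    (tendsto_pow_atTop_atTop_of_one_lt one_lt_two).comp (Filter.tendsto_add_atTop_nat 2)
  have hinv := tendsto_inv_atTop_zero.comp hpow
  have hsqrt := tendsto_inv_atTop_zero.comp (Real.tendsto_sqrt_atTop.comp hpow)
  have hlim := ((((((((hinv.const_mul (4 * (n + 1) * d)).pow 2).const_mul 2).mul_const
    (tileMass n)).mul_const ((4 * R) ^ n)).const_add ((∫ u, ‖f u‖ ^ 2) + ∫ u, ‖g u‖ ^ 2)).const_mul
      (A * formTOneConst n)).add
        (hsqrt.const_mul (A * discretizationConst n * d ^ 2 * (4 * R) ^ n * (20 * 5 ^ n))))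
  refine (ge_of_tendsto' hlim fun m => ?_).trans_eq (by simp)
  exact h.norm_apply_le_add (ha.mono (le_max_left a b)) (hb.mono (le_max_right a b)) m

end CZFormBound

/-! ### Cut-off operators -/

section Kernel

variable {E : Type*} [NormedAddCommGroup E] [NormedSpace ℝ E]

/-- The Calderón–Zygmund estimates of dimension `d` with constant `A`, for `x ∈ U` and `y ∈ V`, for
a kernel `K x y` which is `C¹` off the diagonal of the whole space. -/
structure IsCZKernelOn (K : E → E → ℂ) (U V : Set E) (d : ℕ) (A : ℝ) : Prop where
  pos : 0 < A
  contDiffOn : ContDiffOn ℝ 1 (fun p : E × E => K p.1 p.2) {p | p.1 ≠ p.2}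
  norm_le {x y : E} : x ∈ U → y ∈ V → x ≠ y → ‖K x y‖ ≤ A / dist x y ^ d
  norm_fderiv_left_le {x y : E} : x ∈ U → y ∈ V → x ≠ y →
    ‖fderiv ℝ (fun z => K z y) x‖ ≤ A / dist x y ^ (d + 1)
  norm_fderiv_right_le {x y : E} : x ∈ U → y ∈ V → x ≠ y →
    ‖fderiv ℝ (fun z => K x z) y‖ ≤ A / dist x y ^ (d + 1)

namespace IsCZKernelOn

variable {K : E → E → ℂ} {U V : Set E} {d : ℕ} {A : ℝ}

lemma flip (h : IsCZKernelOn K U V d A) : IsCZKernelOn (fun y x => K x y) V U d A where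
  pos := h.pos
  contDiffOn :=
    h.contDiffOn.comp (contDiff_snd.prodMk contDiff_fst).contDiffOn fun _ hp => Ne.symm hp
  norm_le {y x} hy hx hyx := dist_comm x y ▸ h.norm_le hx hy hyx.symm
  norm_fderiv_left_le {y x} hy hx hyx := dist_comm x y ▸ h.norm_fderiv_right_le hx hy hyx.symm
  norm_fderiv_right_le {y x} hy hx hyx := dist_comm x y ▸ h.norm_fderiv_left_le hx hy hyx.symm

lemma differentiableAt_left (h : IsCZKernelOn K U V d A) {x y : E} (hxy : x ≠ y) :
    DifferentiableAt ℝ (fun z => K z y) x := by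
  have hopen : IsOpen {p : E × E | p.1 ≠ p.2} := isOpen_ne_fun continuous_fst continuous_snd
  have hjoint : DifferentiableAt ℝ (fun p : E × E => K p.1 p.2) (x, y) :=
    (h.contDiffOn.contDiffAt (hopen.mem_nhds hxy)).differentiableAt one_ne_zero
  exact hjoint.comp (f := fun z => (z, y)) x (by fun_prop)

lemma norm_fderiv_mul_left_le (h : IsCZKernelOn K U V d A) {c : E} {ρ a R : ℝ} {χ : C1Fun E}
    (hχ : IsAdapted c ρ a χ) {x y : E} (hx : x ∈ U) (hy : y ∈ V) (hxy : x ≠ y) (hR : 0 ≤ R)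
    (hdist : K x y ≠ 0 → dist x y ≤ R) :
    ‖fderiv ℝ (fun z => χ z * K z y) x‖ ≤ a * (1 + R / ρ) * A / dist x y ^ (d + 1) := by
  have hpos := dist_pos.mpr hxy
  have hA := h.pos
  have ha := hχ.const_nonneg
  have := hχ.radius_pos
  have hK : ‖K x y‖ ≤ R * (A / dist x y ^ (d + 1)) := by
    by_cases hzero : K x y = 0
    · rw [hzero, norm_zero]
      positivity
    · calc ‖K x y‖ ≤ A / dist x y ^ d := h.norm_le hx hy hxy
        _ = dist x y * (A / dist x y ^ (d + 1)) := by
            field_simp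
            ring
        _ ≤ R * (A / dist x y ^ (d + 1)) := by
            gcongr
            exact hdist hzero
  rw [fderiv_fun_mul (χ.differentiable x) (h.differentiableAt_left hxy)]
  calc _ ≤ a * (A / dist x y ^ (d + 1)) + R * (A / dist x y ^ (d + 1)) * (a / ρ) := by
        refine (norm_add_le _ _).trans ?_
        rw [norm_smul, norm_smul]
        gcongr
        · exact hχ.norm_le x
        · exact h.norm_fderiv_left_le hx hy hxy
        · exact hχ.norm_fderiv_le x
    _ = _ := by ring

lemma mul_left (h : IsCZKernelOn K U V d A) {c : E} {ρ a R : ℝ} {χ : C1Fun E}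
    (hχ : IsAdapted c ρ a χ) (ha : 0 < a) (hU : tsupport χ ⊆ U) (hR : 0 ≤ R)
    (hdist : ∀ x ∈ U, ∀ y ∈ V, K x y ≠ 0 → dist x y ≤ R) :
    IsCZKernelOn (fun x y => χ x * K x y) Set.univ V d (a * (1 + R / ρ) * A) := by
  have hA := h.pos
  have hρ := hχ.radius_pos
  have hone : 1 ≤ 1 + R / ρ := le_add_of_nonneg_right (by positivity)
  have hconst : a * A ≤ a * (1 + R / ρ) * A := by
    gcongr
    exact le_mul_of_one_le_right ha.le hone
  refine ⟨by positivity, (χ.contDiff.comp contDiff_fst).contDiffOn.mul h.contDiffOn,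
    fun {x y} _ hy hxy => ?_, fun {x y} _ hy hxy => ?_, fun {x y} _ hy hxy => ?_⟩ <;>
    by_cases hx : x ∈ tsupport χ
  · calc ‖χ x * K x y‖ ≤ a * (A / dist x y ^ d) := by
          rw [norm_mul]
          exact mul_le_mul (hχ.norm_le x) (h.norm_le (hU hx) hy hxy) (norm_nonneg _) ha.le
      _ = a * A / dist x y ^ d := by ring
      _ ≤ _ := by gcongr
  · rw [image_eq_zero_of_notMem_tsupport hx, zero_mul, norm_zero]
    positivity
  · exact h.norm_fderiv_mul_left_le hχ (hU hx) hy hxy hR (hdist x (hU hx) y hy)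
  · have hx' : x ∉ tsupport fun z => χ z * K z y := fun hmem => hx (tsupport_mul_subset_left hmem)
    rw [fderiv_of_notMem_tsupport (𝕜 := ℝ) hx', norm_zero]
    positivity
  · rw [fderiv_const_mul (h.flip.differentiableAt_left hxy.symm)]
    calc ‖χ x • fderiv ℝ (fun z => K x z) y‖ ≤ a * (A / dist x y ^ (d + 1)) := by
          rw [norm_smul]
          exact mul_le_mul (hχ.norm_le x) (h.norm_fderiv_right_le (hU hx) hy hxy)
            (norm_nonneg _) ha.le
      _ = a * A / dist x y ^ (d + 1) := by ring
      _ ≤ _ := by gcongr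
  · simp only [image_eq_zero_of_notMem_tsupport hx, zero_mul, fderiv_fun_const, Pi.zero_apply,
      norm_zero]
    positivity

lemma norm_sub_le_left (h : IsCZKernelOn K Set.univ Set.univ d A) {x x' y : E} {D s : ℝ}
    (hD : 0 < D) (hxy : D ≤ dist x y) (hs : dist x x' ≤ s) (hsD : 2 * s ≤ D) :
    ‖K x y - K x' y‖ ≤ 2 ^ (d + 1) * A * s / D ^ (d + 1) := by
  have hA := h.pos
  have hfar : ∀ z ∈ closedBall x s, D / 2 ≤ dist z y := fun z hz => by
    have := mem_closedBall'.mp hz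
    linarith [dist_triangle x z y]
  have hne : ∀ z ∈ closedBall x s, z ≠ y := fun z hz =>
    dist_pos.mp ((half_pos hD).trans_le (hfar z hz))
  have hderiv : ∀ z ∈ closedBall x s, ‖fderiv ℝ (fun w => K w y) z‖ ≤ A / (D / 2) ^ (d + 1) :=
    fun z hz => (h.norm_fderiv_left_le trivial trivial (hne z hz)).trans <| by
      have := hfar z hz
      gcongr
  calc ‖K x y - K x' y‖ ≤ A / (D / 2) ^ (d + 1) * ‖x - x'‖ :=
        (convex_closedBall x s).norm_image_sub_le_of_norm_fderiv_le
          (fun z hz => h.differentiableAt_left (hne z hz)) hderiv (mem_closedBall'.mpr hs)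
          (mem_closedBall_self (dist_nonneg.trans hs))
    _ ≤ A / (D / 2) ^ (d + 1) * s := by
        rw [← dist_eq_norm]
        gcongr
    _ = _ := by
        rw [div_pow]
        field_simp

lemma continuousAt_right (h : IsCZKernelOn K U V d A) {x y : E} (hxy : x ≠ y) :
    ContinuousAt (fun z => K x z) y :=
  (h.flip.differentiableAt_left hxy.symm).continuousAt

end IsCZKernelOn

end Kernel

section KernelIntegral

lemma norm_integral_mul_le {α : Type*} [MeasurableSpace α] {μ : Measure α} {G g : α → ℂ} {b : ℝ}
    (hg : Integrable g μ) (h : ∀ᵐ x ∂μ, g x ≠ 0 → ‖G x‖ ≤ b) :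
    ‖∫ x, G x * g x ∂μ‖ ≤ b * ∫ x, ‖g x‖ ∂μ := by
  rw [← integral_const_mul]
  refine norm_integral_le_of_norm_le (hg.norm.const_mul b) (h.mono fun x hx => ?_)
  by_cases hgx : g x = 0
  · simp [hgx]
  · rw [norm_mul]
    exact mul_le_mul_of_nonneg_right (hx hgx) (norm_nonneg _)

variable {E : Type*} [NormedAddCommGroup E] [NormedSpace ℝ E] [MeasurableSpace E]
  {μ : Measure E} {K : E → E → ℂ} {d : ℕ} {A D : ℝ} {f g : E → ℂ}

namespace IsCZKernelOn

lemma norm_integral_le (h : IsCZKernelOn K Set.univ Set.univ d A) (hD : 0 < D)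
    (hf : Integrable f μ) (hg : Integrable g μ)
    (hsep : ∀ w ∈ tsupport f, ∀ u ∈ tsupport g, D ≤ dist w u) :
    ‖∫ x, (∫ y, K x y * f y ∂μ) * g x ∂μ‖ ≤ A / D ^ d * ((∫ w, ‖f w‖ ∂μ) * ∫ u, ‖g u‖ ∂μ) := by
  have hA := h.pos
  rw [← mul_assoc]
  refine norm_integral_mul_le hg <| .of_forall fun x hx =>
    norm_integral_mul_le hf <| .of_forall fun y hy => ?_
  have hxy : D ≤ dist x y :=
    dist_comm x y ▸ hsep y (subset_tsupport f hy) x (subset_tsupport g hx)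
  refine (h.norm_le trivial trivial (dist_pos.mp (hD.trans_le hxy))).trans ?_
  gcongr

variable [BorelSpace E] [IsFiniteMeasureOnCompacts μ]

lemma integrable_mul {U V : Set E} (h : IsCZKernelOn K U V d A) (hf : Continuous f)
    (hfc : HasCompactSupport f) {x : E} (hx : x ∉ tsupport f) :
    Integrable (fun y => K x y * f y) μ := by
  refine (continuous_of_tsupport fun y hy => ?_).integrable_of_hasCompactSupport hfc.mul_left
  have hy' : y ∈ tsupport f := tsupport_mul_subset_right (f := fun y => K x y) hy
  exact (h.continuousAt_right fun hxy : x = y => hx (hxy ▸ hy')).mul hf.continuousAt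

lemma norm_integral_le_of_integral_left (h : IsCZKernelOn K Set.univ Set.univ d A) (hD : 0 < D)
    (hf : Continuous f) (hfc : HasCompactSupport f) (hg : Integrable g μ) {c : E} {s : ℝ}
    (hfs : tsupport f ⊆ closedBall c s)
    (hsep : ∀ w ∈ tsupport f, ∀ u ∈ tsupport g, D ≤ dist w u) (hs : 2 * s ≤ D)
    (hint : ∫ y, f y ∂μ = 0) :
    ‖∫ x, (∫ y, K x y * f y ∂μ) * g x ∂μ‖ ≤
      2 ^ (d + 1) * A * s / D ^ (d + 1) * ((∫ w, ‖f w‖ ∂μ) * ∫ u, ‖g u‖ ∂μ) := by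
  have hf_int := hf.integrable_of_hasCompactSupport (μ := μ) hfc
  rw [← mul_assoc]
  refine norm_integral_mul_le hg <| .of_forall fun x hx => ?_
  have hx' := subset_tsupport g hx
  have hxf : x ∉ tsupport f := fun hmem => hD.not_ge (dist_self x ▸ hsep x hmem x hx')
  have hcancel : ∫ y, K x y * f y ∂μ = ∫ y, (K x y - K x c) * f y ∂μ := by
    simp_rw [sub_mul]
    rw [integral_sub (h.integrable_mul hf hfc hxf) (hf_int.const_mul _), integral_const_mul, hint,
      mul_zero, sub_zero]
  rw [hcancel]
  refine norm_integral_mul_le hf_int <| .of_forall fun y hy => ?_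
  have hy' := subset_tsupport f hy
  exact h.flip.norm_sub_le_left hD (hsep y hy' x hx') (mem_closedBall.mp (hfs hy')) hs

lemma norm_integral_le_of_integral_right (h : IsCZKernelOn K Set.univ Set.univ d A) (hD : 0 < D)
    (hf : Continuous f) (hfc : HasCompactSupport f) (hg : Integrable g μ) {c : E} {s : ℝ}
    (hgs : tsupport g ⊆ closedBall c s)
    (hsep : ∀ w ∈ tsupport f, ∀ u ∈ tsupport g, D ≤ dist w u) (hs : 2 * s < D)
    (hint : ∫ x, g x ∂μ = 0) :
    ‖∫ x, (∫ y, K x y * f y ∂μ) * g x ∂μ‖ ≤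
      2 ^ (d + 1) * A * s / D ^ (d + 1) * ((∫ w, ‖f w‖ ∂μ) * ∫ u, ‖g u‖ ∂μ) := by
  have hA := h.pos
  have hf_int := hf.integrable_of_hasCompactSupport (μ := μ) hfc
  rcases eq_or_ne g 0 with rfl | hg₀
  · simp
  obtain ⟨u₀, hu₀⟩ := Function.ne_iff.mp hg₀
  have hs₀ : 0 ≤ s := dist_nonneg.trans (mem_closedBall.mp (hgs (subset_tsupport g hu₀)))
  by_cases hint_g : Integrable (fun x => (∫ y, K x y * f y ∂μ) * g x) μ
  · have hcancel : ∫ x, (∫ y, K x y * f y ∂μ) * g x ∂μ =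
        ∫ x, ((∫ y, K x y * f y ∂μ) - ∫ y, K c y * f y ∂μ) * g x ∂μ := by
      simp_rw [sub_mul]
      rw [integral_sub hint_g (hg.const_mul _), integral_const_mul, hint, mul_zero, sub_zero]
    rw [hcancel, ← mul_assoc]
    refine norm_integral_mul_le hg <| .of_forall fun x hx => ?_
    have hx' := subset_tsupport g hx
    have hxc := mem_closedBall.mp (hgs hx')
    have hxf : x ∉ tsupport f := fun hmem => hD.not_ge (dist_self x ▸ hsep x hmem x hx')
    have hcf : c ∉ tsupport f := fun hmem => by
      linarith [hsep c hmem x hx', dist_comm x c]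
    rw [← integral_sub (h.integrable_mul hf hfc hxf) (h.integrable_mul hf hfc hcf)]
    simp_rw [← sub_mul]
    refine norm_integral_mul_le hf_int <| .of_forall fun y hy => ?_
    exact h.norm_sub_le_left hD (dist_comm x y ▸ hsep y (subset_tsupport f hy) x hx') hxc hs.le
  · rw [integral_undef hint_g, norm_zero]
    positivity

end IsCZKernelOn

end KernelIntegral

section Conj

variable {E : Type*} [NormedAddCommGroup E] [NormedSpace ℝ E]

/-- The complex conjugate of a `C¹` function. -/
def C1Fun.conj (ψ : C1Fun E) : C1Fun E :=
  ⟨fun u => starRingEnd ℂ (ψ u), Complex.conjCLE.contDiff.comp ψ.contDiff⟩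

lemma C1Fun.conj_apply (ψ : C1Fun E) (u : E) : ψ.conj u = starRingEnd ℂ (ψ u) := rfl

lemma C1Fun.tsupport_conj (ψ : C1Fun E) : tsupport ψ.conj = tsupport ψ :=
  congr_arg closure (Set.ext fun _ => (map_ne_zero (starRingEnd ℂ)))

namespace IsAdapted

variable {c c' : E} {r r' a b : ℝ} {ψ θ : C1Fun E}

lemma conj (h : IsAdapted c r a ψ) : IsAdapted c r a ψ.conj where
  radius_pos := h.radius_pos
  tsupport_subset := ψ.tsupport_conj.trans_subset h.tsupport_subset
  norm_le u := (RCLike.norm_conj _).trans_le (h.norm_le u)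
  norm_fderiv_le u := by
    have hderiv : fderiv ℝ ψ.conj u = (Complex.conjCLE : ℂ →L[ℝ] ℂ).comp (fderiv ℝ ψ u) :=
      (Complex.conjCLE.hasFDerivAt.comp u (ψ.differentiable u).hasFDerivAt).fderiv
    rw [hderiv]
    exact (Complex.conjLIE.toLinearIsometry.norm_toContinuousLinearMap_comp).trans_le
      (h.norm_fderiv_le u)

lemma mul_of_radius_le (h : IsAdapted c r a ψ) (h' : IsAdapted c' r' b θ) (hr : r ≤ r') :
    IsAdapted c r (2 * (a * b)) (θ * ψ) := by
  have ha := h.const_nonneg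
  have hb := h'.const_nonneg
  have hr' := h'.radius_pos
  refine (h.mul (fun u _ => h'.norm_le u) fun u _ => h'.norm_fderiv_le u).mono ?_
  have hderiv : r * (b / r') ≤ b := by
    rw [mul_div_left_comm]
    exact mul_le_of_le_one_right hb ((div_le_one hr').mpr hr)
  calc a * (b + r * (b / r')) ≤ a * (b + b) := by gcongr
    _ = 2 * (a * b) := by ring

lemma exists_mul (h : IsAdapted c r a ψ) (h' : IsAdapted c' r' b θ) :
    ∃ p, IsAdapted p (min r r') (2 * (a * b)) (ψ * θ) := by
  rcases le_total r r' with hr | hr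
  · rw [min_eq_left hr, mul_comm ψ]
    exact ⟨c, h.mul_of_radius_le h' hr⟩
  · rw [min_eq_right hr, mul_comm a]
    exact ⟨c', h'.mul_of_radius_le h hr⟩

end IsAdapted

end Conj

section Bump

variable {n : ℕ} {p : Eucl n} {r ρ a A : ℝ} {ψ : C1Fun (Eucl n)}

lemma IsAdapted.isBump (h : IsAdapted p r 1 ψ) : IsBump n r ψ :=
  ⟨ψ.contDiff, ⟨p, h.tsupport_subset⟩, h.norm_le, fun i u =>
    ((fderiv ℝ ψ u).le_opNorm _).trans <| by
      simpa using h.norm_fderiv_le u⟩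

lemma norm_apply_le_of_isBump {μ : Measure (Eucl n)} {S : (Eucl n → ℂ) →ₗ[ℂ] Lp ℂ 2 μ}
    {U : Set (Eucl n)}
    (hS : ∀ r, 0 < r → r ≤ ρ → ∀ ω, IsBump n r ω → tsupport ω ⊆ U → ∀ᵐ x ∂μ, ‖S ω x‖ ≤ A)
    (hψ : IsAdapted p r a ψ) (ha : 0 < a) (hr : r ≤ ρ) (hU : tsupport ψ ⊆ U) :
    ∀ᵐ x ∂μ, ‖S ψ x‖ ≤ a * A := by
  have hnorm : ‖((a⁻¹ : ℝ) : ℂ)‖ = a⁻¹ := Complex.norm_of_nonneg (inv_nonneg.mpr ha.le)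
  have hunit : IsAdapted p r 1 (((a⁻¹ : ℝ) : ℂ) • ψ) := by
    have hone : ‖((a⁻¹ : ℝ) : ℂ)‖ * a = 1 := by rw [hnorm, inv_mul_cancel₀ ha.ne']
    exact hone ▸ hψ.smul _
  have hbump := hS r hψ.radius_pos hr _ hunit.isBump
    ((tsupport_smul_subset_right (fun _ => ((a⁻¹ : ℝ) : ℂ)) ψ).trans hU)
  have hmap : S (((a⁻¹ : ℝ) : ℂ) • ψ : C1Fun (Eucl n)) = ((a⁻¹ : ℝ) : ℂ) • S ψ := map_smul S _ _
  rw [hmap] at hbump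
  filter_upwards [hbump, Lp.coeFn_smul ((a⁻¹ : ℝ) : ℂ) (S ψ)] with x hx hsmul
  rwa [hsmul, Pi.smul_apply, norm_smul, hnorm, inv_mul_le_iff₀ ha] at hx

end Bump

section TestFunctions

variable {E : Type*} [NormedAddCommGroup E] [NormedSpace ℝ E]

/-- The space `C¹_c(U)` of continuously differentiable functions with compact support in `U`. -/
def testFunctions (U : Set E) : Submodule ℂ (E → ℂ) where
  carrier := {f | ContDiff ℝ 1 f ∧ HasCompactSupport f ∧ tsupport f ⊆ U}
  zero_mem' := Set.mem_ofPred.mpr ⟨contDiff_const, HasCompactSupport.zero, by simp⟩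
  add_mem' {f g} hf hg := by
    obtain ⟨hf, hfc, hfU⟩ := Set.mem_ofPred.mp hf
    obtain ⟨hg, hgc, hgU⟩ := Set.mem_ofPred.mp hg
    exact Set.mem_ofPred.mpr
      ⟨hf.add hg, hfc.add hgc, (tsupport_add f g).trans (Set.union_subset hfU hgU)⟩
  smul_mem' z f hf := by
    obtain ⟨hf, hfc, hfU⟩ := Set.mem_ofPred.mp hf
    exact Set.mem_ofPred.mpr ⟨hf.const_smul z, hfc.smul_left (f := fun _ => z),
      (tsupport_smul_subset_right (fun _ => z) f).trans hfU⟩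

lemma mem_testFunctions {U : Set E} {f : E → ℂ} :
    f ∈ testFunctions U ↔ ContDiff ℝ 1 f ∧ HasCompactSupport f ∧ tsupport f ⊆ U :=
  Iff.rfl

lemma C1Fun.mul_mem_testFunctions {χ : C1Fun E} {U : Set E} (hχ : HasCompactSupport χ)
    (hU : tsupport χ ⊆ U) (f : C1Fun E) : ((χ * f : C1Fun E) : E → ℂ) ∈ testFunctions U :=
  mem_testFunctions.mpr ⟨(χ * f).contDiff, hχ.mul_right,
    (tsupport_mul_subset_left (f := χ) (g := f)).trans hU⟩

lemma C1Fun.conj_mem_testFunctions {ψ : C1Fun E} {U : Set E} (h : (ψ : E → ℂ) ∈ testFunctions U) :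
    (ψ.conj : E → ℂ) ∈ testFunctions U := by
  obtain ⟨-, hc, hU⟩ := mem_testFunctions.mp h
  exact mem_testFunctions.mpr ⟨ψ.conj.contDiff, hc.comp_left (map_zero _),
    ψ.tsupport_conj.trans_subset hU⟩

lemma C1Fun.mul_congr {χ f f' : C1Fun E} {s : Set E} (hχ : tsupport χ ⊆ s)
    (hff' : Set.EqOn f f' s) : χ * f = χ * f' := by
  refine Subtype.ext (funext fun u => ?_)
  change χ u * f u = χ u * f' u
  by_cases hu : u ∈ tsupport χ
  · rw [hff' (hχ hu)]
  · rw [image_eq_zero_of_notMem_tsupport hu, zero_mul, zero_mul]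

end TestFunctions

section CutoffForm

variable {E : Type*} [NormedAddCommGroup E] [NormedSpace ℝ E] [MeasurableSpace E] [BorelSpace E]
  {μ : Measure E} [IsFiniteMeasureOnCompacts μ]

lemma integrable_mul_mul_of_hasCompactSupport (F : Lp ℂ 2 μ) {χ : C1Fun E}
    (hχ : HasCompactSupport χ) (g : C1Fun E) :
    Integrable (fun x => F x * (χ * g : C1Fun E) x) μ :=
  (Lp.memLp F).integrable_mul (p := 2) (q := 2)
    ((χ * g).continuous.memLp_of_hasCompactSupport hχ.mul_right)

/-- The bilinear form `∫ T (χ₁ f) · (χ₂ g)` of the operator `T` cut off by `χ₁` and `χ₂`. -/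
def cutoffForm (T : (E → ℂ) →ₗ[ℂ] Lp ℂ 2 μ) (χ₁ : C1Fun E) {χ₂ : C1Fun E}
    (hχ₂ : HasCompactSupport χ₂) : C1Fun E →ₗ[ℂ] C1Fun E →ₗ[ℂ] ℂ :=
  LinearMap.mk₂ ℂ (fun f g => ∫ x, T (χ₁ * f : C1Fun E) x * (χ₂ * g : C1Fun E) x ∂μ)
    (fun f f' g => by
      have hadd : T (χ₁ * (f + f') : C1Fun E) = T (χ₁ * f : C1Fun E) + T (χ₁ * f' : C1Fun E) := by
        rw [← map_add, mul_add]
        rfl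
      rw [hadd, ← integral_add (integrable_mul_mul_of_hasCompactSupport _ hχ₂ g)
        (integrable_mul_mul_of_hasCompactSupport _ hχ₂ g)]
      refine integral_congr_ae ?_
      filter_upwards [Lp.coeFn_add (T (χ₁ * f : C1Fun E)) (T (χ₁ * f' : C1Fun E))] with x hx
      rw [hx, Pi.add_apply, add_mul])
    (fun z f g => by
      have hsmul : T (χ₁ * (z • f) : C1Fun E) = z • T (χ₁ * f : C1Fun E) := by
        rw [← map_smul, mul_smul_comm]
        rfl
      rw [hsmul, smul_eq_mul, ← integral_const_mul]
      refine integral_congr_ae ?_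
      filter_upwards [Lp.coeFn_smul z (T (χ₁ * f : C1Fun E))] with x hx
      rw [hx, Pi.smul_apply, smul_eq_mul, mul_assoc])
    (fun f g g' => by
      rw [← integral_add (integrable_mul_mul_of_hasCompactSupport _ hχ₂ g)
        (integrable_mul_mul_of_hasCompactSupport _ hχ₂ g')]
      refine integral_congr_ae (.of_forall fun x => ?_)
      rw [mul_add χ₂]
      exact mul_add _ _ _)
    (fun z f g => by
      rw [smul_eq_mul, ← integral_const_mul]
      simp_rw [mul_smul_comm]
      refine integral_congr_ae (.of_forall fun x => ?_)
      exact mul_left_comm _ _ _)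

lemma cutoffForm_apply (T : (E → ℂ) →ₗ[ℂ] Lp ℂ 2 μ) (χ₁ : C1Fun E) {χ₂ : C1Fun E}
    (hχ₂ : HasCompactSupport χ₂) (f g : C1Fun E) :
    cutoffForm T χ₁ hχ₂ f g = ∫ x, T (χ₁ * f : C1Fun E) x * (χ₂ * g : C1Fun E) x ∂μ :=
  rfl

lemma norm_integral_mul_mul_le {s : Set E} {F : E → ℂ} {χ g : C1Fun E} {b a : ℝ} (hb : 0 ≤ b)
    (ha : 0 ≤ a) (hF : ∀ᵐ x ∂μ.restrict s, ‖F x‖ ≤ b) (hχ : ∀ x, ‖χ x‖ ≤ a)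
    (hg : HasCompactSupport g) :
    ‖∫ x in s, F x * (χ * g : C1Fun E) x ∂μ‖ ≤ b * a * ∫ x, ‖g x‖ ∂μ := by
  have hg_int := g.continuous.integrable_of_hasCompactSupport (μ := μ) hg
  calc ‖∫ x in s, F x * (χ * g : C1Fun E) x ∂μ‖ = ‖∫ x in s, F x * χ x * g x ∂μ‖ := by
        simp_rw [mul_assoc]
        rfl
    _ ≤ b * a * ∫ x in s, ‖g x‖ ∂μ :=
        norm_integral_mul_le hg_int.integrableOn <| hF.mono fun x hx _ => by
          rw [norm_mul]
          exact mul_le_mul hx (hχ x) (norm_nonneg _) hb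
    _ ≤ b * a * ∫ x, ‖g x‖ ∂μ := by
        gcongr
        · exact .of_forall fun _ => norm_nonneg _
        · exact hg_int.norm
        · exact Measure.restrict_le_self

end CutoffForm

section CZOperator

lemma disjoint_of_forall_le_dist {X : Type*} [PseudoMetricSpace X] {s t : Set X} {D : ℝ}
    (hD : 0 < D) (h : ∀ x ∈ s, ∀ y ∈ t, D ≤ dist x y) : Disjoint s t :=
  Set.disjoint_left.mpr fun x hx hx' => hD.not_ge (dist_self x ▸ h x hx x hx')

variable {n : ℕ} {c₁ c₂ : Eucl n} {r₁ r₂ A : ℝ}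
  {T : (Eucl n → ℂ) →ₗ[ℂ] Lp ℂ 2 (volume.restrict (ball c₂ r₂))}
  {T' : (Eucl n → ℂ) →ₗ[ℂ] Lp ℂ 2 (volume.restrict (ball c₁ r₁))}
  {K : Eucl n → Eucl n → ℂ}

/-- The hypotheses of the local `T(1)` theorem other than the localization: `T'` is a formal
adjoint of `T`, both are bounded by `A` on bump functions, and `T` is given off the support of its
argument by the Calderón–Zygmund kernel `K`. Only the values on test functions matter. -/
structure IsCZOperator (c₁ c₂ : Eucl n) (r₁ r₂ : ℝ)
    (T : (Eucl n → ℂ) →ₗ[ℂ] Lp ℂ 2 (volume.restrict (ball c₂ r₂)))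
    (T' : (Eucl n → ℂ) →ₗ[ℂ] Lp ℂ 2 (volume.restrict (ball c₁ r₁)))
    (K : Eucl n → Eucl n → ℂ) (A : ℝ) : Prop where
  kernel : IsCZKernelOn K (ball c₂ r₂) (ball c₁ r₁) n A
  adjoint {f g : Eucl n → ℂ} : f ∈ testFunctions (ball c₁ r₁) → g ∈ testFunctions (ball c₂ r₂) →
    ∫ x in ball c₂ r₂, T f x * starRingEnd ℂ (g x) =
      ∫ x in ball c₁ r₁, f x * starRingEnd ℂ (T' g x)
  bump : ∀ r, 0 < r → r ≤ r₁ → ∀ ω, IsBump n r ω → tsupport ω ⊆ ball c₁ r₁ →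
    ∀ᵐ x ∂volume.restrict (ball c₂ r₂), ‖T ω x‖ ≤ A
  bump_adjoint : ∀ r, 0 < r → r ≤ r₂ → ∀ ω, IsBump n r ω → tsupport ω ⊆ ball c₂ r₂ →
    ∀ᵐ x ∂volume.restrict (ball c₁ r₁), ‖T' ω x‖ ≤ A
  apply_eq_integral {f : Eucl n → ℂ} : f ∈ testFunctions (ball c₁ r₁) →
    ∀ᵐ x ∂volume.restrict (ball c₂ r₂), x ∉ tsupport f → T f x = ∫ y, K x y * f y

/-- A smooth cut-off `χ` supported in the open ball of centre `c` and radius `r`, and adapted to it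
with constant `a`. It need not be real. -/
structure IsCutoff (c : Eucl n) (r a : ℝ) (χ : C1Fun (Eucl n)) : Prop extends
    IsAdapted c r a χ where
  const_pos : 0 < a
  tsupport_subset_ball : tsupport χ ⊆ ball c r

/-- The kernel `K x y` cut off by `χ₂` in `x` and by `χ₁` in `y`. -/
def cutoffKernel (K : Eucl n → Eucl n → ℂ) (χ₁ χ₂ : C1Fun (Eucl n)) (x y : Eucl n) : ℂ :=
  χ₁ y * (χ₂ x * K x y)

/-- The factor by which the Calderón–Zygmund constant of a kernel grows when it is cut off to the
balls of radii `r₁` and `r₂` inside a ball of radius `R`, by cut-offs with constants `a₁` and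
`a₂`. -/
def cutoffKernelConst (R r₁ r₂ a₁ a₂ : ℝ) : ℝ :=
  a₁ * (1 + 2 * R / r₁) * (a₂ * (1 + 2 * R / r₂))

/-- The factor for the bilinear form of the cut-off operator; the power of `2` is lost when the
smoothness of the kernel is integrated against functions of mean zero. -/
def cutoffConst (n : ℕ) (R r₁ r₂ a₁ a₂ : ℝ) : ℝ := 2 ^ (n + 1) * cutoffKernelConst R r₁ r₂ a₁ a₂

variable {R a₁ a₂ : ℝ} {χ₁ χ₂ : C1Fun (Eucl n)}

lemma IsCutoff.mul_le_cutoffKernelConst (hχ₁ : IsCutoff c₁ r₁ a₁ χ₁) (hχ₂ : IsCutoff c₂ r₂ a₂ χ₂)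
    (hR : 0 < R) : a₁ * a₂ ≤ cutoffKernelConst R r₁ r₂ a₁ a₂ := by
  have hle {c : Eucl n} {r a : ℝ} {χ : C1Fun (Eucl n)} (hχ : IsCutoff c r a χ) :
      a ≤ a * (1 + 2 * R / r) :=
    le_mul_of_one_le_right hχ.const_nonneg <|
      le_add_of_nonneg_right (div_nonneg (by positivity) hχ.radius_pos.le)
  exact mul_le_mul (hle hχ₁) (hle hχ₂) hχ₂.const_nonneg (hχ₁.const_nonneg.trans (hle hχ₁))

lemma IsCutoff.cutoffConst_pos (hχ₁ : IsCutoff c₁ r₁ a₁ χ₁) (hχ₂ : IsCutoff c₂ r₂ a₂ χ₂)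
    (hR : 0 < R) : 0 < cutoffConst n R r₁ r₂ a₁ a₂ :=
  mul_pos (by positivity) <|
    (mul_pos hχ₁.const_pos hχ₂.const_pos).trans_le (hχ₁.mul_le_cutoffKernelConst hχ₂ hR)

lemma IsCutoff.isCZKernelOn_cutoffKernel (hχ₁ : IsCutoff c₁ r₁ a₁ χ₁)
    (hχ₂ : IsCutoff c₂ r₂ a₂ χ₂) (hK : IsCZKernelOn K (ball c₂ r₂) (ball c₁ r₁) n A) (hR : 0 < R)
    (hball₁ : ball c₁ r₁ ⊆ closedBall 0 R) (hball₂ : ball c₂ r₂ ⊆ closedBall 0 R) :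
    IsCZKernelOn (cutoffKernel K χ₁ χ₂) Set.univ Set.univ n
      (cutoffKernelConst R r₁ r₂ a₁ a₂ * A) := by
  have hdist : ∀ x ∈ ball c₂ r₂, ∀ y ∈ ball c₁ r₁, dist x y ≤ 2 * R := fun x hx y hy => by
    linarith [dist_triangle_right x y 0, mem_closedBall.mp (hball₁ hy),
      mem_closedBall.mp (hball₂ hx)]
  have hcut₂ := hK.mul_left hχ₂.toIsAdapted hχ₂.const_pos hχ₂.tsupport_subset_ball (R := 2 * R)
    (by positivity) fun x hx y hy _ => hdist x hx y hy
  rw [cutoffKernelConst, mul_assoc]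
  refine (hcut₂.flip.mul_left hχ₁.toIsAdapted hχ₁.const_pos hχ₁.tsupport_subset_ball (R := 2 * R)
    (by positivity) fun y hy x _ hne => ?_).flip
  have hx : x ∈ tsupport χ₂ := subset_tsupport χ₂ (left_ne_zero_of_mul hne)
  exact dist_comm x y ▸ hdist x (hχ₂.tsupport_subset_ball hx) y hy

namespace IsCZOperator

lemma norm_cutoffForm_le_of_isAdapted_left (h : IsCZOperator c₁ c₂ r₁ r₂ T T' K A)
    (hχ₁ : IsCutoff c₁ r₁ a₁ χ₁) (hχ₂ : IsCutoff c₂ r₂ a₂ χ₂) {f g : C1Fun (Eucl n)}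
    {c : Eucl n} {r : ℝ} (hf : IsAdapted c r 1 f) (hg : HasCompactSupport g) :
    ‖cutoffForm T χ₁ hχ₂.hasCompactSupport f g‖ ≤ 2 * (a₁ * a₂) * A * ∫ u, ‖g u‖ := by
  have ha₁ := hχ₁.const_pos
  have hA := h.kernel.pos
  obtain ⟨p, hp⟩ := hχ₁.exists_mul hf
  have hbound := norm_apply_le_of_isBump h.bump hp (by positivity) (min_le_left _ _)
    ((tsupport_mul_subset_left (f := χ₁) (g := f)).trans hχ₁.tsupport_subset_ball)
  refine (norm_integral_mul_mul_le (by positivity) hχ₂.const_nonneg hbound hχ₂.norm_le hg).trans_eq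
    (by ring)

lemma cutoffForm_eq_integral_adjoint (h : IsCZOperator c₁ c₂ r₁ r₂ T T' K A)
    (hχ₁ : IsCutoff c₁ r₁ a₁ χ₁) (hχ₂ : IsCutoff c₂ r₂ a₂ χ₂) (f g : C1Fun (Eucl n)) :
    cutoffForm T χ₁ hχ₂.hasCompactSupport f g =
      ∫ x in ball c₁ r₁, starRingEnd ℂ (T' (χ₂ * g).conj x) * (χ₁ * f : C1Fun (Eucl n)) x := by
  have hadj := h.adjoint
    (C1Fun.mul_mem_testFunctions hχ₁.hasCompactSupport hχ₁.tsupport_subset_ball f)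
    (C1Fun.conj_mem_testFunctions
      (C1Fun.mul_mem_testFunctions hχ₂.hasCompactSupport hχ₂.tsupport_subset_ball g))
  simp only [C1Fun.conj_apply, Complex.conj_conj] at hadj
  simp_rw [cutoffForm_apply, hadj, mul_comm]

lemma norm_cutoffForm_le_of_isAdapted_right (h : IsCZOperator c₁ c₂ r₁ r₂ T T' K A)
    (hχ₁ : IsCutoff c₁ r₁ a₁ χ₁) (hχ₂ : IsCutoff c₂ r₂ a₂ χ₂) {f g : C1Fun (Eucl n)}
    {c : Eucl n} {r : ℝ} (hf : HasCompactSupport f) (hg : IsAdapted c r 1 g) :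
    ‖cutoffForm T χ₁ hχ₂.hasCompactSupport f g‖ ≤ 2 * (a₁ * a₂) * A * ∫ u, ‖f u‖ := by
  have ha₂ := hχ₂.const_pos
  have hA := h.kernel.pos
  obtain ⟨p, hp⟩ := hχ₂.exists_mul hg
  have hbound := norm_apply_le_of_isBump h.bump_adjoint hp.conj (by positivity) (min_le_left _ _)
    ((χ₂ * g).tsupport_conj.trans_subset
      ((tsupport_mul_subset_left (f := χ₂) (g := g)).trans hχ₂.tsupport_subset_ball))
  rw [h.cutoffForm_eq_integral_adjoint hχ₁ hχ₂]
  refine (norm_integral_mul_mul_le (b := 2 * (a₂ * 1) * A) (by positivity) hχ₁.const_nonneg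
    (hbound.mono fun x hx => (RCLike.norm_conj _).trans_le hx) hχ₁.norm_le hf).trans_eq (by ring)

lemma cutoffForm_eq_integral_kernel (h : IsCZOperator c₁ c₂ r₁ r₂ T T' K A)
    (hχ₁ : IsCutoff c₁ r₁ a₁ χ₁) (hχ₂ : IsCutoff c₂ r₂ a₂ χ₂) {f g : C1Fun (Eucl n)}
    (hfg : Disjoint (tsupport f) (tsupport g)) :
    cutoffForm T χ₁ hχ₂.hasCompactSupport f g =
      ∫ x, (∫ y, cutoffKernel K χ₁ χ₂ x y * f y) * g x := by
  have hrestrict : ∫ x in ball c₂ r₂, (∫ y, cutoffKernel K χ₁ χ₂ x y * f y) * g x =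
      ∫ x, (∫ y, cutoffKernel K χ₁ χ₂ x y * f y) * g x :=
    setIntegral_eq_integral_of_forall_compl_eq_zero fun x hx => by
      have hχx : χ₂ x = 0 :=
        image_eq_zero_of_notMem_tsupport fun hx' => hx (hχ₂.tsupport_subset_ball hx')
      simp [cutoffKernel, hχx]
  have hpull (x : Eucl n) : ∫ y, cutoffKernel K χ₁ χ₂ x y * f y =
      χ₂ x * ∫ y, K x y * (χ₁ * f : C1Fun (Eucl n)) y := by
    rw [← integral_const_mul]
    refine integral_congr_ae (.of_forall fun y => ?_)
    change χ₁ y * (χ₂ x * K x y) * f y = χ₂ x * (K x y * (χ₁ y * f y))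
    ring
  rw [← hrestrict, cutoffForm_apply]
  refine integral_congr_ae ?_
  filter_upwards [h.apply_eq_integral (C1Fun.mul_mem_testFunctions hχ₁.hasCompactSupport
    hχ₁.tsupport_subset_ball f)] with x hx
  change _ * (χ₂ x * g x) = _
  by_cases hgx : g x = 0
  · simp [hgx]
  · have hxf : x ∉ tsupport (χ₁ * f : C1Fun (Eucl n)) := fun hx' => hfg.le_bot
      ⟨tsupport_mul_subset_right (f := χ₁) hx', subset_tsupport g hgx⟩
    rw [hx hxf, hpull]
    ring

lemma isCZForm_cutoffForm (h : IsCZOperator c₁ c₂ r₁ r₂ T T' K A)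
    (hχ₁ : IsCutoff c₁ r₁ a₁ χ₁) (hχ₂ : IsCutoff c₂ r₂ a₂ χ₂) (hR : 0 < R)
    (hball₁ : ball c₁ r₁ ⊆ closedBall 0 R) (hball₂ : ball c₂ r₂ ⊆ closedBall 0 R) :
    IsCZForm (cutoffForm T χ₁ hχ₂.hasCompactSupport) R (cutoffConst n R r₁ r₂ a₁ a₂ * A) := by
  have hA := h.kernel.pos
  have hK := hχ₁.isCZKernelOn_cutoffKernel hχ₂ h.kernel hR hball₁ hball₂
  have hbump : 2 * (a₁ * a₂) * A ≤ cutoffConst n R r₁ r₂ a₁ a₂ * A :=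
    mul_le_mul_of_nonneg_right (mul_le_mul (le_self_pow₀ one_le_two n.succ_ne_zero)
      (hχ₁.mul_le_cutoffKernelConst hχ₂ hR) (mul_pos hχ₁.const_pos hχ₂.const_pos).le
      (by positivity)) hA.le
  have hsmooth : cutoffConst n R r₁ r₂ a₁ a₂ * A =
      2 ^ (n + 1) * (cutoffKernelConst R r₁ r₂ a₁ a₂ * A) := mul_assoc _ _ _
  have hsize : cutoffKernelConst R r₁ r₂ a₁ a₂ * A ≤ cutoffConst n R r₁ r₂ a₁ a₂ * A := by
    rw [hsmooth]
    exact le_mul_of_one_le_left hK.pos.le (one_le_pow₀ one_le_two)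
  exact
  { pos := hK.pos.trans_le hsize
    congr_left := fun hff' => by
      simp_rw [cutoffForm_apply,
        C1Fun.mul_congr (hχ₁.tsupport_subset_ball.trans hball₁) hff']
    congr_right := fun hgg' => by
      simp_rw [cutoffForm_apply,
        C1Fun.mul_congr (hχ₂.tsupport_subset_ball.trans hball₂) hgg']
    bump_left := fun hf hg =>
      (h.norm_cutoffForm_le_of_isAdapted_left hχ₁ hχ₂ hf hg).trans (by gcongr)
    bump_right := fun hf hg =>
      (h.norm_cutoffForm_le_of_isAdapted_right hχ₁ hχ₂ hf hg).trans (by gcongr)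
    norm_le := fun hD hf hg hsep => by
      rw [h.cutoffForm_eq_integral_kernel hχ₁ hχ₂ (disjoint_of_forall_le_dist hD hsep)]
      exact (hK.norm_integral_le hD (C1Fun.integrable_of_hasCompactSupport hf)
        (C1Fun.integrable_of_hasCompactSupport hg) hsep).trans (by gcongr)
    norm_le_of_integral_left := fun {f g c D s} hD hf hg hsep hs hint => by
      rw [h.cutoffForm_eq_integral_kernel hχ₁ hχ₂ (disjoint_of_forall_le_dist hD hsep),
        hsmooth]
      exact hK.norm_integral_le_of_integral_left hD f.continuous
        (hasCompactSupport_of_tsupport_subset_closedBall hf)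
        (C1Fun.integrable_of_hasCompactSupport hg) hf hsep (by linarith) hint
    norm_le_of_integral_right := fun {f g c D s} hD hf hg hsep hs hint => by
      rw [h.cutoffForm_eq_integral_kernel hχ₁ hχ₂ (disjoint_of_forall_le_dist hD hsep),
        hsmooth]
      exact hK.norm_integral_le_of_integral_right hD f.continuous hf
        (C1Fun.integrable_of_hasCompactSupport
          (hasCompactSupport_of_tsupport_subset_closedBall hg)) hg hsep (by linarith) hint }

end IsCZOperator

end CZOperator

/-! ### Passage to `L²` -/

section TestFunctionsToL2

variable {E : Type*} [NormedAddCommGroup E] [NormedSpace ℝ E] [MeasurableSpace E] [BorelSpace E]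
  {μ : Measure E} [IsFiniteMeasureOnCompacts μ] {U : Set E}

namespace testFunctions

/-- A test function, as an element of the algebra of `C¹` functions. -/
def toC1Fun {E : Type*} [NormedAddCommGroup E] [NormedSpace ℝ E] {U : Set E}
    (f : testFunctions U) : C1Fun E := ⟨f, (mem_testFunctions.mp f.2).1⟩

lemma memLp (μ : Measure E) [IsFiniteMeasureOnCompacts μ] (f : testFunctions U) :
    MemLp f.1 2 (μ.restrict U) :=
  let ⟨hf, hc, _⟩ := mem_testFunctions.mp f.2
  (hf.continuous.memLp_of_hasCompactSupport hc).restrict U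

/-- The inclusion of `C¹_c(U)` into `L²(U)`. -/
def toL2 (μ : Measure E) [IsFiniteMeasureOnCompacts μ] (U : Set E) :
    testFunctions U →ₗ[ℂ] Lp ℂ 2 (μ.restrict U) where
  toFun f := (memLp μ f).toLp
  map_add' f g := MemLp.toLp_add (memLp μ f) (memLp μ g)
  map_smul' z f := MemLp.toLp_const_smul z (memLp μ f)

lemma coeFn_toL2 (f : testFunctions U) : toL2 μ U f =ᵐ[μ.restrict U] f.1 :=
  (memLp μ f).coeFn_toLp

lemma integral_sq_norm_eq (f : testFunctions U) :
    ∫ u, ‖f.1 u‖ ^ 2 ∂μ = ‖toL2 μ U f‖ ^ 2 := by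
  have hrestrict : ∫ u in U, ‖f.1 u‖ ^ 2 ∂μ = ∫ u, ‖f.1 u‖ ^ 2 ∂μ :=
    setIntegral_eq_integral_of_forall_compl_eq_zero fun u hu => by
      rw [image_eq_zero_of_notMem_tsupport fun hu' => hu ((mem_testFunctions.mp f.2).2.2 hu'),
        norm_zero, zero_pow two_ne_zero]
  have hinner : ((∫ u in U, ‖f.1 u‖ ^ 2 ∂μ : ℝ) : ℂ) = inner ℂ (toL2 μ U f) (toL2 μ U f) := by
    rw [L2.inner_def, ← integral_complex_ofReal]
    refine integral_congr_ae ?_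
    filter_upwards [coeFn_toL2 f] with u hu
    rw [hu, inner_self_eq_norm_sq_to_K, Complex.ofReal_pow]
    rfl
  rw [← hrestrict]
  refine Complex.ofReal_injective (hinner.trans ?_)
  rw [inner_self_eq_norm_sq_to_K, Complex.ofReal_pow]
  rfl

lemma inner_toL2 (g : testFunctions U) (v : Lp ℂ 2 (μ.restrict U)) :
    inner ℂ (toL2 μ U g) v = ∫ x in U, v x * starRingEnd ℂ (g.1 x) ∂μ := by
  rw [L2.inner_def]
  refine integral_congr_ae ?_
  filter_upwards [coeFn_toL2 g] with x hx
  rw [hx, RCLike.inner_apply]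

lemma denseRange_toL2 [FiniteDimensional ℝ E] (hU : IsOpen U) : DenseRange (toL2 μ U) := by
  suffices horth : (LinearMap.range (toL2 μ U))ᗮ = ⊥ by
    rw [← Submodule.topologicalClosure_eq_top_iff,
      ← Submodule.dense_iff_topologicalClosure_eq_top] at horth
    exact horth
  refine (Submodule.eq_bot_iff _).mpr fun v hv => Lp.eq_zero_iff_ae_eq_zero.mpr ?_
  have hloc : LocallyIntegrableOn v U μ := locallyIntegrableOn_of_locallyIntegrable_restrict
    ((Lp.memLp v).locallyIntegrable one_le_two)
  have hzero := hU.ae_eq_zero_of_integral_contDiff_smul_eq_zero hloc fun g hg hgc hgU => by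
    have hsupport : tsupport (fun u => (g u : ℂ)) ⊆ tsupport g :=
      closure_mono fun u hu => Complex.ofReal_ne_zero.mp hu
    let G : testFunctions U := ⟨fun u => (g u : ℂ), mem_testFunctions.mpr
      ⟨Complex.ofRealCLM.contDiff.comp (hg.of_le (by norm_cast)), hgc.comp_left Complex.ofReal_zero,
        hsupport.trans hgU⟩⟩
    have hinner := (Submodule.mem_orthogonal _ v).mp hv _ ⟨G, rfl⟩
    rw [inner_toL2] at hinner
    rw [← hinner, ← setIntegral_eq_integral_of_forall_compl_eq_zero fun x hx => by
      rw [image_eq_zero_of_notMem_tsupport fun hx' => hx (hgU hx'), zero_smul]]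
    exact integral_congr_ae (.of_forall fun x => by
      simp only [G, Complex.conj_ofReal, Complex.real_smul, mul_comm])
  exact (ae_restrict_iff' hU.measurableSet).mpr hzero

end testFunctions

end TestFunctionsToL2

section Localization

variable {E : Type*} [NormedAddCommGroup E] [NormedSpace ℝ E] [MeasurableSpace E]
  {μ : Measure E} {T : (E → ℂ) →ₗ[ℂ] Lp ℂ 2 μ} {U K₁ K₂ : Set E}

/-- The operator `T` on `C¹_c(U)` is localized: it ignores the functions supported off `K₁`, and
its values vanish off `K₂`. -/
structure IsLocalized (T : (E → ℂ) →ₗ[ℂ] Lp ℂ 2 μ) (U K₁ K₂ : Set E) : Prop where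
  ae_eq_zero {f : E → ℂ} : f ∈ testFunctions U → ∀ᵐ x ∂μ, x ∉ K₂ → T f x = 0
  apply_eq_zero {f : E → ℂ} : f ∈ testFunctions U → Disjoint (tsupport f) K₁ → T f = 0

namespace IsLocalized

lemma apply_mul_eq (h : IsLocalized T U K₁ K₂) {χ f : C1Fun E} (hχ : HasCompactSupport χ)
    (hχU : tsupport χ ⊆ U) (hχ_one : (χ : E → ℂ) =ᶠ[nhdsSet K₁] 1)
    (hf : (f : E → ℂ) ∈ testFunctions U) : T (χ * f : C1Fun E) = T f := by
  have hdisj : Disjoint (tsupport ((f : E → ℂ) - ((χ * f : C1Fun E) : E → ℂ))) K₁ :=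
    Set.disjoint_right.mpr fun u hu => notMem_tsupport_iff_eventuallyEq.mpr <| by
      filter_upwards [hχ_one.filter_mono (nhds_le_nhdsSet hu)] with w hw
      change f w - χ w * f w = 0
      rw [hw, Pi.one_apply, one_mul, sub_self]
  have hzero := h.apply_eq_zero
    ((testFunctions U).sub_mem hf (C1Fun.mul_mem_testFunctions hχ hχU f)) hdisj
  rw [map_sub, sub_eq_zero] at hzero
  exact hzero.symm

lemma cutoffForm_conj_eq_inner [BorelSpace E] {V : Set E} {μ : Measure E}
    [IsFiniteMeasureOnCompacts μ] {T : (E → ℂ) →ₗ[ℂ] Lp ℂ 2 (μ.restrict V)}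
    (h : IsLocalized T U K₁ K₂) {χ₁ χ₂ : C1Fun E} (hχ₁ : HasCompactSupport χ₁)
    (hχ₁U : tsupport χ₁ ⊆ U) (hχ₁_one : (χ₁ : E → ℂ) =ᶠ[nhdsSet K₁] 1)
    (hχ₂ : HasCompactSupport χ₂) (hχ₂_one : Set.EqOn χ₂ 1 K₂) (f : testFunctions U)
    (g : testFunctions V) :
    cutoffForm T χ₁ hχ₂ (testFunctions.toC1Fun f) (testFunctions.toC1Fun g).conj =
      inner ℂ (testFunctions.toL2 μ V g) (T f) := by
  rw [testFunctions.inner_toL2, cutoffForm_apply, h.apply_mul_eq hχ₁ hχ₁U hχ₁_one f.2]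
  refine integral_congr_ae ?_
  filter_upwards [h.ae_eq_zero f.2] with x hx
  change T f x * (χ₂ x * starRingEnd ℂ (g.1 x)) = _
  by_cases hxK : x ∈ K₂
  · rw [hχ₂_one hxK, Pi.one_apply, one_mul]
  · rw [hx hxK, zero_mul, zero_mul]

end IsLocalized

end Localization

section L2Bound

lemma norm_le_of_forall_norm_inner_le {H ι : Type*} [NormedAddCommGroup H] [InnerProductSpace ℂ H]
    {v : H} {Q b : ℝ} (hQ : 0 < Q) (hb : 0 ≤ b) {e : ι → H} (he : DenseRange e)
    (h : ∀ i, ‖inner ℂ (e i) v‖ ≤ Q * (b ^ 2 + ‖e i‖ ^ 2)) : ‖v‖ ≤ 2 * Q * b := by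
  have hall : ∀ w : H, ‖inner ℂ w v‖ ≤ Q * (b ^ 2 + ‖w‖ ^ 2) := fun w =>
    he.induction (P := fun w : H => ‖inner ℂ w v‖ ≤ Q * (b ^ 2 + ‖w‖ ^ 2))
      (by rintro _ ⟨i, rfl⟩; exact h i) (isClosed_le (by fun_prop) (by fun_prop)) w
  -- `w = v / (2 Q)` balances the two terms on the right.
  have hv := hall ((((2 * Q)⁻¹ : ℝ) : ℂ) • v)
  have hnorm : ‖(((2 * Q)⁻¹ : ℝ) : ℂ)‖ = (2 * Q)⁻¹ := Complex.norm_of_nonneg (by positivity)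
  rw [inner_smul_left, norm_mul, RCLike.norm_conj, norm_smul, hnorm, inner_self_eq_norm_sq_to_K,
    norm_pow, RCLike.norm_ofReal, abs_norm] at hv
  refine (sq_le_sq₀ (norm_nonneg v) (by positivity)).mp ?_
  field_simp at hv
  linarith

end L2Bound

section Extension

variable {n : ℕ} {c₁ c₂ : Eucl n} {r₁ r₂ A : ℝ} {K₁ K₂ : Set (Eucl n)}
  {T : (Eucl n → ℂ) →ₗ[ℂ] Lp ℂ 2 (volume.restrict (ball c₂ r₂))}
  {T' : (Eucl n → ℂ) →ₗ[ℂ] Lp ℂ 2 (volume.restrict (ball c₁ r₁))}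
  {K : Eucl n → Eucl n → ℂ}

lemma exists_isCutoff {c : Eucl n} {r : ℝ} {s : Set (Eucl n)} (hr : 0 < r) (hs : IsClosed s)
    (h : s ⊆ ball c r) :
    ∃ a, ∃ χ : C1Fun (Eucl n), IsCutoff c r a χ ∧ (χ : Eucl n → ℂ) =ᶠ[nhdsSet s] 1 := by
  obtain ⟨r', ⟨hr', hr'r⟩, hsr'⟩ := exists_pos_lt_subset_ball hr hs h
  let χ : ContDiffBump c := ⟨r', (r' + r) / 2, hr', by linarith⟩
  have hsupport : tsupport (bumpFun χ) ⊆ ball c r :=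
    (tsupport_bumpFun χ).trans_subset <| closedBall_subset_ball <| by
      change (r' + r) / 2 < r
      linarith
  obtain ⟨a, ha, hχ⟩ := exists_isAdapted hr (hsupport.trans ball_subset_closedBall)
  refine ⟨a, bumpFun χ, ⟨hχ, ha, hsupport⟩, ?_⟩
  filter_upwards [isOpen_ball.mem_nhdsSet.mpr hsr'] with u hu
  exact bumpFun_eq_one χ (ball_subset_closedBall hu)

lemma IsCZOperator.norm_apply_le {R a₁ a₂ : ℝ} {χ₁ χ₂ : C1Fun (Eucl n)}
    (h : IsCZOperator c₁ c₂ r₁ r₂ T T' K A) (hT : IsLocalized T (ball c₁ r₁) K₁ K₂)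
    (hχ₁ : IsCutoff c₁ r₁ a₁ χ₁) (hχ₁_one : (χ₁ : Eucl n → ℂ) =ᶠ[nhdsSet K₁] 1)
    (hχ₂ : IsCutoff c₂ r₂ a₂ χ₂) (hχ₂_one : Set.EqOn χ₂ 1 K₂) (hR : 0 < R)
    (hball₁ : ball c₁ r₁ ⊆ closedBall 0 R) (hball₂ : ball c₂ r₂ ⊆ closedBall 0 R)
    (f : testFunctions (ball c₁ r₁)) :
    ‖T f‖ ≤ 2 * (cutoffConst n R r₁ r₂ a₁ a₂ * formTOneConst n) * A *
      ‖testFunctions.toL2 volume _ f‖ := by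
  have hform := h.isCZForm_cutoffForm hχ₁ hχ₂ hR hball₁ hball₂
  have hpos := mul_pos hform.pos (formTOneConst_pos n)
  refine (norm_le_of_forall_norm_inner_le hpos (norm_nonneg (testFunctions.toL2 volume _ f))
    (testFunctions.denseRange_toL2 isOpen_ball) fun g => ?_).trans_eq (by ring)
  have hsupport {c : Eucl n} {r : ℝ} (hball : ball c r ⊆ closedBall 0 R)
      (φ : testFunctions (ball c r)) : tsupport (testFunctions.toC1Fun φ) ⊆ closedBall 0 R :=
    (mem_testFunctions.mp φ.2).2.2.trans hball
  have hbound := hform.norm_apply_le_of_tsupport_subset hR (hsupport hball₁ f)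
    ((C1Fun.tsupport_conj _).trans_subset (hsupport hball₂ g))
  rw [hT.cutoffForm_conj_eq_inner hχ₁.hasCompactSupport hχ₁.tsupport_subset_ball hχ₁_one
    hχ₂.hasCompactSupport hχ₂_one] at hbound
  simp_rw [C1Fun.conj_apply, RCLike.norm_conj] at hbound
  rw [← testFunctions.integral_sq_norm_eq f, ← testFunctions.integral_sq_norm_eq g]
  exact hbound

lemma exists_forall_norm_apply_le (hr₁ : 0 < r₁) (hr₂ : 0 < r₂) (hK₁ : IsClosed K₁)
    (hK₂ : IsClosed K₂) (hK₁B : K₁ ⊆ ball c₁ r₁) (hK₂B : K₂ ⊆ ball c₂ r₂) :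
    ∃ C : ℝ, 0 < C ∧ ∀ T T' K A, IsCZOperator c₁ c₂ r₁ r₂ T T' K A →
      IsLocalized T (ball c₁ r₁) K₁ K₂ → ∀ f : testFunctions (ball c₁ r₁),
        ‖T f‖ ≤ C * A * ‖testFunctions.toL2 volume _ f‖ := by
  obtain ⟨a₁, χ₁, hχ₁, hχ₁_one⟩ := exists_isCutoff hr₁ hK₁ hK₁B
  obtain ⟨a₂, χ₂, hχ₂, hχ₂_one⟩ := exists_isCutoff hr₂ hK₂ hK₂B
  have hR : 0 < ‖c₁‖ + r₁ + (‖c₂‖ + r₂) := by positivity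
  have hball {c : Eucl n} {r : ℝ} (hle : r + dist c 0 ≤ ‖c₁‖ + r₁ + (‖c₂‖ + r₂)) :
      ball c r ⊆ closedBall 0 (‖c₁‖ + r₁ + (‖c₂‖ + r₂)) :=
    ball_subset_closedBall.trans (closedBall_subset_closedBall' hle)
  refine ⟨_, mul_pos two_pos (mul_pos (hχ₁.cutoffConst_pos hχ₂ hR) (formTOneConst_pos n)),
    fun T T' K A h hT f => h.norm_apply_le hT hχ₁ hχ₁_one hχ₂ hχ₂_one.self_of_nhdsSet hR
      (hball ?_) (hball ?_) f⟩ <;>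
    linarith [dist_zero_right c₁, dist_zero_right c₂, norm_nonneg c₁, norm_nonneg c₂]

lemma isCZKernelOn_of_forall_single {U V : Set (Eucl n)} {d : ℕ} (hn : 1 ≤ n) (hA : 0 < A)
    (hK : ContDiffOn ℝ 1 (fun p : Eucl n × Eucl n => K p.1 p.2) {p | p.1 ≠ p.2})
    (hsize : ∀ x ∈ U, ∀ y ∈ V, x ≠ y → ‖K x y‖ ≤ A / ‖x - y‖ ^ d)
    (hpartial : ∀ i : Fin n, ∀ x ∈ U, ∀ y ∈ V, x ≠ y →
      ‖fderiv ℝ (fun x' => K x' y) x (EuclideanSpace.single i 1)‖ ≤ A / ‖x - y‖ ^ (d + 1) ∧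
      ‖fderiv ℝ (fun y' => K x y') y (EuclideanSpace.single i 1)‖ ≤ A / ‖x - y‖ ^ (d + 1)) :
    IsCZKernelOn K U V d (n * A) where
  pos := by positivity
  contDiffOn := hK
  norm_le {x y} hx hy hxy := by
    rw [dist_eq_norm]
    refine (hsize x hx y hy hxy).trans ?_
    gcongr
    exact le_mul_of_one_le_left hA.le (by exact_mod_cast hn)
  norm_fderiv_left_le {x y} hx hy hxy := by
    rw [dist_eq_norm, mul_div_assoc]
    exact opNorm_le_of_forall_single_le (by positivity) fun i => (hpartial i x hx y hy hxy).1
  norm_fderiv_right_le {x y} hx hy hxy := by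
    rw [dist_eq_norm, mul_div_assoc]
    exact opNorm_le_of_forall_single_le (by positivity) fun i => (hpartial i x hx y hy hxy).2

end Extension

end LocalTOne

/-- **A localized `T(1)` theorem on balls in `ℝⁿ` (L^∞ bump hypotheses).**
Given open balls `B₁, B₂ ⊆ ℝⁿ` and compacts `K₁ ⊆ B₁`, `K₂ ⊆ B₂`, there is `C₀ > 0`
such that any linear `T : C¹_c(B₁) → L²(B₂)` with formal adjoint, localized to
`K₁, K₂`, satisfying the `L^∞` bump estimates `‖Tω‖_∞, ‖T*ω‖_∞ ≤ A` and represented off supports by a kernel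
with Calderón–Zygmund estimates (constant `A`), extends to a bounded operator
`L²(B₁) → L²(B₂)` of norm at most `C₀ A`. -/
theorem statement_2 (n : ℕ) (hn : 1 ≤ n)
    (c₁ c₂ : EuclideanSpace ℝ (Fin n)) (r₁ r₂ : ℝ) (hr₁ : 0 < r₁) (hr₂ : 0 < r₂)
    (K₁ K₂ : Set (EuclideanSpace ℝ (Fin n)))
    (hK₁ : IsCompact K₁) (hK₂ : IsCompact K₂)
    (hK₁B : K₁ ⊆ ball c₁ r₁) (hK₂B : K₂ ⊆ ball c₂ r₂) :
    ∃ C₀ : ℝ, 0 < C₀ ∧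
    ∀ (T : (EuclideanSpace ℝ (Fin n) → ℂ) →ₗ[ℂ]
        Lp ℂ 2 ((volume : Measure (EuclideanSpace ℝ (Fin n))).restrict (ball c₂ r₂)))
      (Tstar : (EuclideanSpace ℝ (Fin n) → ℂ) →ₗ[ℂ]
        Lp ℂ 2 ((volume : Measure (EuclideanSpace ℝ (Fin n))).restrict (ball c₁ r₁)))
      (A : ℝ), 0 < A →
      -- `T*` is a formal adjoint of `T`
      (∀ f g : EuclideanSpace ℝ (Fin n) → ℂ,
        ContDiff ℝ 1 f → HasCompactSupport f → tsupport f ⊆ ball c₁ r₁ →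
        ContDiff ℝ 1 g → HasCompactSupport g → tsupport g ⊆ ball c₂ r₂ →
        ∫ x in ball c₂ r₂,
            (T f : EuclideanSpace ℝ (Fin n) → ℂ) x * (starRingEnd ℂ) (g x) =
          ∫ x in ball c₁ r₁,
            f x * (starRingEnd ℂ) ((Tstar g : EuclideanSpace ℝ (Fin n) → ℂ) x)) →
      -- (a) localization
      (∀ f : EuclideanSpace ℝ (Fin n) → ℂ,
        ContDiff ℝ 1 f → HasCompactSupport f → tsupport f ⊆ ball c₁ r₁ →
        (∀ᵐ x ∂((volume : Measure (EuclideanSpace ℝ (Fin n))).restrict (ball c₂ r₂)),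
          x ∉ K₂ → (T f : EuclideanSpace ℝ (Fin n) → ℂ) x = 0) ∧
        (Disjoint (tsupport f) K₁ → T f = 0)) →
      -- (i)′ L^∞ bump estimates
      (∀ r : ℝ, 0 < r → r ≤ r₁ → ∀ ω, IsBump n r ω → tsupport ω ⊆ ball c₁ r₁ →
        ∀ᵐ x ∂((volume : Measure (EuclideanSpace ℝ (Fin n))).restrict (ball c₂ r₂)),
          ‖(T ω : EuclideanSpace ℝ (Fin n) → ℂ) x‖ ≤ A) →
      (∀ r : ℝ, 0 < r → r ≤ r₂ → ∀ ω, IsBump n r ω → tsupport ω ⊆ ball c₂ r₂ →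
        ∀ᵐ x ∂((volume : Measure (EuclideanSpace ℝ (Fin n))).restrict (ball c₁ r₁)),
          ‖(Tstar ω : EuclideanSpace ℝ (Fin n) → ℂ) x‖ ≤ A) →
      -- (ii), (iii) kernel representation and Calderón–Zygmund estimates
      (∃ K : EuclideanSpace ℝ (Fin n) → EuclideanSpace ℝ (Fin n) → ℂ,
        ContDiffOn ℝ 1 (fun p : EuclideanSpace ℝ (Fin n) × EuclideanSpace ℝ (Fin n) =>
          K p.1 p.2) {p | p.1 ≠ p.2} ∧
        (∀ F, ContDiff ℝ 1 F → HasCompactSupport F → tsupport F ⊆ ball c₁ r₁ →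
          ∀ᵐ x ∂((volume : Measure (EuclideanSpace ℝ (Fin n))).restrict (ball c₂ r₂)),
            x ∉ tsupport F → (T F : EuclideanSpace ℝ (Fin n) → ℂ) x = ∫ y, K x y * F y) ∧
        (∀ x ∈ ball c₂ r₂, ∀ y ∈ ball c₁ r₁, x ≠ y → ‖K x y‖ ≤ A / ‖x - y‖ ^ n) ∧
        (∀ i : Fin n, ∀ x ∈ ball c₂ r₂, ∀ y ∈ ball c₁ r₁, x ≠ y →
          ‖fderiv ℝ (fun x' => K x' y) x (EuclideanSpace.single i 1)‖ ≤ A / ‖x - y‖ ^ (n + 1) ∧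
          ‖fderiv ℝ (fun y' => K x y') y (EuclideanSpace.single i 1)‖ ≤ A / ‖x - y‖ ^ (n + 1))) →
      ∃ Tbar : Lp ℂ 2 ((volume : Measure (EuclideanSpace ℝ (Fin n))).restrict (ball c₁ r₁)) →L[ℂ]
          Lp ℂ 2 ((volume : Measure (EuclideanSpace ℝ (Fin n))).restrict (ball c₂ r₂)),
        ‖Tbar‖ ≤ C₀ * A ∧
        ∀ f, ContDiff ℝ 1 f → HasCompactSupport f → tsupport f ⊆ ball c₁ r₁ →
          ∀ hm : MemLp f 2 ((volume : Measure (EuclideanSpace ℝ (Fin n))).restrict (ball c₁ r₁)),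
            Tbar (hm.toLp f) = T f := by
  obtain ⟨C, hC, hbound⟩ := LocalTOne.exists_forall_norm_apply_le hr₁ hr₂ hK₁.isClosed
    hK₂.isClosed hK₁B hK₂B
  refine ⟨C * n, by positivity, ?_⟩
  rintro T Tstar A hA hadj hloc hbump hbump' ⟨K, hK, hrep, hsize, hpartial⟩
  have hweak {a : ℝ} (ha : a ≤ A) : a ≤ n * A :=
    ha.trans (le_mul_of_one_le_left hA.le (by exact_mod_cast hn))
  have hT : LocalTOne.IsCZOperator c₁ c₂ r₁ r₂ T Tstar K (n * A) :=
    { kernel := LocalTOne.isCZKernelOn_of_forall_single hn hA hK hsize hpartial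
      adjoint := fun ⟨hf, hfc, hfU⟩ ⟨hg, hgc, hgU⟩ => hadj _ _ hf hfc hfU hg hgc hgU
      bump := fun r hr hr' ω hω hωU => (hbump r hr hr' ω hω hωU).mono fun _ => hweak
      bump_adjoint := fun r hr hr' ω hω hωU => (hbump' r hr hr' ω hω hωU).mono fun _ => hweak
      apply_eq_integral := fun ⟨hf, hfc, hfU⟩ => hrep _ hf hfc hfU }
  have hTloc : LocalTOne.IsLocalized T (ball c₁ r₁) K₁ K₂ :=
    ⟨fun ⟨hf, hfc, hfU⟩ => (hloc _ hf hfc hfU).1, fun ⟨hf, hfc, hfU⟩ => (hloc _ hf hfc hfU).2⟩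
  let ι := LocalTOne.testFunctions.toL2 volume (ball c₁ r₁)
  let S := T.comp (LocalTOne.testFunctions (ball c₁ r₁)).subtype
  have hS : ∀ f, ‖S f‖ ≤ C * n * A * ‖ι f‖ := mul_assoc C n A ▸ hbound T Tstar K _ hT hTloc
  have hdense : DenseRange ι := LocalTOne.testFunctions.denseRange_toL2 isOpen_ball
  exact ⟨S.extendOfNorm ι, LinearMap.opNorm_extendOfNorm_le hdense (by positivity) hS,
    fun f hf hfc hfU _ => LinearMap.extendOfNorm_eq hdense ⟨_, hS⟩ ⟨f, hf, hfc, hfU⟩⟩
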